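/- Let (E,†) be a finite-dimensional semisimple ℚ-algebra with a positive involution, and let q ∈ E satisfy q† = q and be positive with respect to †, i.e. Tr(a†·q·a ; E) > 0 for all a ∈ E \ {0}. Then there exists a matrix u ∈ M₄(E) such that u^†·diag(q,q,q,q)·u = 1, where diag(q,q,q,q) is the diagonal 4×4 matrix with entries q, the involution on M₄(E) is the conjugate transpose (x^†)_{ij} = (x_{ji})†, and 1 is the identity matrix. -/

import Mathlib

/-!
The element `q` generates a commutative subalgebra `ℚ[q]` on which the involution is trivial. Positivity
of the involution forces the minimal polynomial `f` of `q` to be squarefree (`minpoly_squarefree`), and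
left multiplication by `q` is a quotient of two positive definite forms on `E`, so all complex roots of
`f` are positive reals (`roots_pos`). Hence `ℚ[q] ≅ ℚ[X] / f` is a product of totally real number fields
in which `q` is totally positive. By Siegel's theorem (`four_squares`) and the Chinese remainder theorem,
`q = ∑ (Y i)²` in `ℚ[q]` (`four_squares_mod`). The matrix `U` of left multiplication by the quaternion
with coordinates `Y i` satisfies `Uᵀ U = q`, and `u = q⁻¹ U` is as required.

Siegel's theorem says that a totally positive element of a totally real number field `K` is a sum of four
squares in `K`. The proof given here is elementary: it uses no local-global principle.

* Let `α` be a totally positive integer with `α ≡ 1` modulo a suitable rational integer `2 q`, where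
  `q = 4 p`. Then `-1` is a sum of two squares modulo `α`, and a solution of `α ∣ 1 + a² + b²` defines an
  integral quaternary form `Q` of determinant `1` for which `α Q` is a sum of four squares over `𝓞 K`.
  If `Q` and the standard form share a nonzero value `m`, then `m` and `α m` are both sums of four squares,
  and so is `α`. For this it is enough that each of the two forms represents more than half of the totally
  nonnegative integers `m ≡ 1` modulo `2 q`, in a suitable sense.
* This is the second moment estimate `cover`. Integers `m` carry the weight `N(m)²`. For the points `x` of
  a coset `e + q 𝓞⁴`, with `Q(e) ≡ 1` modulo `2 q`, Cauchy–Schwarz applied to representation numbers refined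
  by the residue class of `x` modulo a large number `N` (`second_moment`) reduces the claim to an upper
  bound for the number of pairs `x ≡ x'` modulo `N` with `Q(x) = Q(x')` (`pairs_bound`). With
  `x' = x + N w` these `x` lie on the hyperplane `2 B(x, w) + N Q(w) = 0`. The quaternion structure provides
  an orthogonal frame of `w` defined over `𝓞 K`, so a slice is a union of translates of homothetic copies of
  `𝓞³`, whose points are easily counted (`slice`). Summation over `w` needs the mean value of the norm of
  the content ideal of `w` (`moment_sum`), which is a partial sum of the zeta series of `K` at `3` over
  ideals prime to `q`. When `q` is divisible by all small primes that sum is at most `4 / 3`, and each form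
  represents at least `3 / 5` of the total weight.
* The congruence condition is then weakened. If `α` is coprime to `2`, then `4 α` is congruent to a sum of
  four squares modulo any rational integer, and this yields a sum of four squares `4 α α'` with `α'` totally
  positive and `≡ 1` modulo `2 q` (`core2`). For general `α`, suitable sums of four squares of odd order at a
  given prime above `2` (`dyadic`) make the order of `α` even at all primes above `2`, after which a square
  can be removed (`coprime_to_two`).
-/

/-- The trace of left multiplication by `x` on the finite-dimensional `ℚ`-algebra `A`. -/
noncomputable def algTraceQ (A : Type*) [Ring A] [Algebra ℚ A] (x : A) : ℚ :=
  LinearMap.trace ℚ A (LinearMap.mulLeft ℚ x)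

/-- `dag` is an involution of the `ℚ`-algebra `E`. -/
def IsInvolutionQ (E : Type*) [Ring E] [Algebra ℚ E] (dag : E → E) : Prop :=
  (∀ x y : E, dag (x + y) = dag x + dag y) ∧
  (∀ x y : E, dag (x * y) = dag y * dag x) ∧
  (∀ x : E, dag (dag x) = x) ∧
  (∀ r : ℚ, dag (algebraMap ℚ E r) = algebraMap ℚ E r)

set_option linter.unusedSectionVars false
open MeasureTheory Filter Topology NumberField

/-! ### Riemann sums over lattices of integer vectors -/

namespace Siegel

section RS
variable {ι κ : Type*} [Fintype ι] [Fintype κ]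

/-- Coordinatewise floor. -/
noncomputable def fl (u : ι → κ → ℝ) : ι → κ → ℤ := fun i j => ⌊u i j⌋

/-- The real vector underlying an integer vector. -/
def zr (z : ι → κ → ℤ) : ι → κ → ℝ := fun i j => (z i j : ℝ)

lemma measurable_fl : Measurable (fl : (ι → κ → ℝ) → (ι → κ → ℤ)) := by
  unfold fl
  refine measurable_pi_lambda _ fun i => measurable_pi_lambda _ fun j => ?_
  exact Int.measurable_floor.comp ((measurable_pi_apply j).comp (measurable_pi_apply i))

lemma fl_cell (z : ι → κ → ℤ) :
    fl ⁻¹' {z} = Set.pi Set.univ fun i => Set.pi Set.univ fun j => Set.Ico (z i j : ℝ) (z i j + 1) := by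
  ext u
  simp only [Set.mem_preimage, Set.mem_singleton_iff, Set.mem_pi, Set.mem_univ, true_imp_iff,
    Set.mem_Ico, fl, funext_iff, Int.floor_eq_iff]

lemma volume_fl_cell (z : ι → κ → ℤ) : volume (fl ⁻¹' {z} : Set (ι → κ → ℝ)) = 1 := by
  rw [fl_cell, volume_pi_pi]
  simp [volume_pi_pi, Real.volume_Ico]

lemma integral_fl (G : (ι → κ → ℤ) → ℝ)
    (hG : Integrable (fun u : ι → κ → ℝ => G (fl u))) :
    ∫ u : ι → κ → ℝ, G (fl u) = ∑' z, G z := by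
  have hU : (⋃ z : ι → κ → ℤ, (fl ⁻¹' {z} : Set (ι → κ → ℝ))) = Set.univ := by
    ext u; simp
  have hm : ∀ z : ι → κ → ℤ, MeasurableSet (fl ⁻¹' {z} : Set (ι → κ → ℝ)) := fun z =>
    measurable_fl (measurableSet_singleton z)
  rw [← setIntegral_univ, ← hU, integral_iUnion hm ?_ hG.integrableOn]
  · refine tsum_congr fun z => ?_
    rw [setIntegral_congr_fun (g := fun _ => G z) (hm z)]
    · simp [Measure.real, volume_fl_cell]
    · intro u hu
      simp only [Set.mem_preimage, Set.mem_singleton_iff] at hu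
      simp [hu]
  · intro z z' h
    exact Disjoint.preimage _ (by simpa using h)

lemma norm_sub_fl (u : ι → κ → ℝ) : ‖zr (fl u) - u‖ ≤ 1 := by
  refine (pi_norm_le_iff_of_nonneg zero_le_one).2 fun i =>
    (pi_norm_le_iff_of_nonneg zero_le_one).2 fun j => ?_
  simp only [zr, fl, Pi.sub_apply, Real.norm_eq_abs]
  rw [abs_sub_comm, abs_le]
  constructor <;> linarith [Int.floor_le (u i j), Int.lt_floor_add_one (u i j)]

/-- Riemann sums over a homothetic translate of the standard lattice converge to the integral. -/
theorem riemann_int (F : (ι → κ → ℝ) → ℝ) (C B : ℝ) (hC : ∀ u, |F u| ≤ C)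
    (hB : ∀ u, B < ‖u‖ → F u = 0) (hF : Measurable F) (hc : ∀ᵐ u, ContinuousAt F u)
    (a : ι → κ → ℝ) (M : ℝ) (hM : 0 < M) :
    Tendsto (fun t : ℝ => (∑' z : ι → κ → ℤ, F (t⁻¹ • (a + M • zr z))) /
      t ^ (Fintype.card ι * Fintype.card κ)) atTop
      (𝓝 ((∫ u, F u) / M ^ (Fintype.card ι * Fintype.card κ))) := by
  set d := Fintype.card ι * Fintype.card κ with hd
  have hfin : Module.finrank ℝ (ι → κ → ℝ) = d := by
    simp [Module.finrank_pi_fintype, hd]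
  have hC0 : 0 ≤ C := (abs_nonneg _).trans (hC 0)
  let T : ℝ → (ι → κ → ℝ) → (ι → κ → ℝ) := fun t u => t⁻¹ • (a + M • zr (fl ((t / M) • u)))
  have hTd : ∀ t : ℝ, 0 < t → ∀ u, ‖T t u - u‖ ≤ t⁻¹ * (‖a‖ + M) := by
    intro t ht u
    have h1 : T t u - u = t⁻¹ • (a + M • (zr (fl ((t / M) • u)) - (t / M) • u)) := by
      simp only [T, smul_sub, smul_add, smul_smul]
      have : t⁻¹ * (M * (t / M)) = 1 := by field_simp
      rw [this, one_smul]; abel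
    rw [h1, norm_smul, norm_inv, Real.norm_eq_abs, abs_of_pos ht]
    gcongr
    refine (norm_add_le _ _).trans ?_
    rw [norm_smul, Real.norm_eq_abs, abs_of_pos hM]
    have := norm_sub_fl ((t / M) • u)
    nlinarith
  have hTm : ∀ t, Measurable (T t) := by
    intro t
    have : Measurable (zr : (ι → κ → ℤ) → (ι → κ → ℝ)) := measurable_of_countable _
    have h2 := this.comp (measurable_fl.comp (measurable_const_smul (α := ι → κ → ℝ) (t / M)))
    exact ((h2.const_smul M).const_add a).const_smul t⁻¹
  have hbd : ∀ t : ℝ, 1 ≤ t → ∀ u, ‖F (T t u)‖ ≤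
      (Metric.closedBall (0 : ι → κ → ℝ) (B + (‖a‖ + M))).indicator (fun _ => C) u := by
    intro t ht u
    by_cases hu : u ∈ Metric.closedBall (0 : ι → κ → ℝ) (B + (‖a‖ + M))
    · rw [Set.indicator_of_mem hu]; exact hC _
    · rw [Set.indicator_of_notMem hu, hB, norm_zero]
      rw [mem_closedBall_zero_iff, not_le] at hu
      have h1 := hTd t (by linarith) u
      have h2 : t⁻¹ * (‖a‖ + M) ≤ ‖a‖ + M :=
        mul_le_of_le_one_left (by positivity) (inv_le_one_of_one_le₀ ht)
      have h3 : ‖u‖ ≤ ‖T t u‖ + ‖T t u - u‖ := by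
        rw [norm_sub_rev]; simpa using norm_add_le (T t u) (u - T t u)
      linarith
  have hint : Integrable ((Metric.closedBall (0 : ι → κ → ℝ) (B + (‖a‖ + M))).indicator
      (fun _ => C)) := by
    rw [integrable_indicator_iff measurableSet_closedBall]
    exact integrableOn_const (hs := (isCompact_closedBall _ _).measure_lt_top.ne)
  have key : Tendsto (fun t => ∫ u, F (T t u)) atTop (𝓝 (∫ u, F u)) := by
    refine tendsto_integral_filter_of_dominated_convergence _
      (Eventually.of_forall fun t => (hF.comp (hTm t)).aestronglyMeasurable)
      ((eventually_ge_atTop 1).mono fun t ht => Eventually.of_forall (hbd t ht)) hint ?_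
    filter_upwards [hc] with u hu
    refine hu.tendsto.comp ?_
    rw [tendsto_iff_norm_sub_tendsto_zero]
    have h0 : Tendsto (fun t : ℝ => t⁻¹ * (‖a‖ + M)) atTop (𝓝 0) := by
      simpa using tendsto_inv_atTop_zero.mul_const (‖a‖ + M)
    refine squeeze_zero' (Eventually.of_forall fun _ => norm_nonneg _) ?_ h0
    exact (eventually_gt_atTop 0).mono fun t ht => hTd t ht u
  refine (key.div_const (M ^ d)).congr' ?_
  filter_upwards [eventually_ge_atTop 1] with t ht
  have ht0 : 0 < t := by linarith
  have hi : Integrable (fun u => F (T t u)) :=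
    hint.mono' (hF.comp (hTm t)).aestronglyMeasurable (Eventually.of_forall (hbd t ht))
  have e1 := Measure.integral_comp_smul (volume : Measure (ι → κ → ℝ))
    (fun u => F (t⁻¹ • (a + M • zr (fl u)))) (t / M)
  have hi2 : Integrable (fun u : ι → κ → ℝ => F (t⁻¹ • (a + M • zr (fl u)))) := by
    have := (integrable_comp_smul_iff (volume : Measure (ι → κ → ℝ))
      (fun u => F (t⁻¹ • (a + M • zr (fl u)))) (R := t / M) (by positivity)).1 hi
    exact this
  rw [integral_fl (fun z => F (t⁻¹ • (a + M • zr z))) hi2] at e1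
  have : ∫ u, F (T t u) = ((t / M) ^ d)⁻¹ * ∑' z : ι → κ → ℤ, F (t⁻¹ • (a + M • zr z)) := by
    rw [hfin] at e1
    rw [e1, abs_of_pos (by positivity), smul_eq_mul]
  rw [this, div_pow]
  field_simp
end RS

end Siegel

/-! ### Riemann sums over the ring of integers -/

namespace Siegel

section NF
variable (K : Type*) [Field K] [NumberField K] [IsTotallyReal K]

/-- Real embeddings correspond to complex ones in a totally real field. -/
noncomputable def toC : (K →+* ℝ) ≃ (K →+* ℂ) :=
  Equiv.ofBijective (fun σ => Complex.ofRealHom.comp σ) <| by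
    constructor
    · intro σ τ h
      ext x
      have := congrArg (fun f : K →+* ℂ => f x) h
      simpa using this
    · intro φ
      have hφ := IsTotallyReal.complexEmbedding_isReal φ
      refine ⟨ComplexEmbedding.IsReal.embedding hφ, ?_⟩
      ext x
      simp

@[simp] lemma toC_apply (σ : K →+* ℝ) (x : K) : toC K σ x = ((σ x : ℝ) : ℂ) := rfl

lemma card_emb : Fintype.card (K →+* ℝ) = Module.finrank ℚ K := by
  rw [Fintype.card_congr (toC K), Embeddings.card]

lemma card_emb_pos : 0 < Fintype.card (K →+* ℝ) := by
  rw [card_emb]; exact Module.finrank_pos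

instance : Nonempty (K →+* ℝ) := Fintype.card_pos_iff.1 (card_emb_pos K)

variable {K} in
/-- The norm of a totally real field is the product of the real embeddings. -/
lemma norm_eq_prod (x : K) : ((Algebra.norm ℚ x : ℚ) : ℝ) = ∏ σ : K →+* ℝ, σ x := by
  have h := Algebra.norm_eq_prod_embeddings ℚ ℂ x
  have h2 : ∏ σ : K →ₐ[ℚ] ℂ, σ x = ∏ σ : K →+* ℝ, ((σ x : ℝ) : ℂ) := by
    refine Fintype.prod_equiv ((RingHom.equivRatAlgHom (R := K) (S := ℂ)).symm.trans
      (toC K).symm) _ _ fun φ => ?_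
    rw [← toC_apply]
    have := congrArg (fun f : K →+* ℂ => f x)
      ((toC K).apply_symm_apply ((RingHom.equivRatAlgHom (R := K) (S := ℂ)).symm φ))
    exact this.symm
  rw [h2] at h
  have : (((Algebra.norm ℚ x : ℚ) : ℝ) : ℂ) = ((∏ σ : K →+* ℝ, σ x : ℝ) : ℂ) := by
    push_cast
    simpa using h
  exact_mod_cast this

noncomputable instance : DecidableEq (K →+* ℝ) := Classical.decEq _

/-- A `ℤ`-basis of the ring of integers, indexed by the real embeddings. -/
noncomputable def ω : Module.Basis (K →+* ℝ) ℤ (𝓞 K) :=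
  (RingOfIntegers.basis K).reindex (Fintype.equivOfCardEq (by
    rw [card_emb, ← Module.finrank_eq_card_chooseBasisIndex, RingOfIntegers.rank]))

/-- The matrix of conjugates of the integral basis. -/
noncomputable def S : Matrix (K →+* ℝ) (K →+* ℝ) ℝ := Matrix.of fun v i => v (ω K i)

lemma det_S_ne_zero : (S K).det ≠ 0 := by
  let b : Module.Basis (K →+* ℝ) ℚ K := (integralBasis K).reindex (Fintype.equivOfCardEq (by
    rw [card_emb, ← Module.finrank_eq_card_chooseBasisIndex, RingOfIntegers.rank]))
  have hb : ∀ i, b i = (ω K i : K) := fun i => by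
    simp only [b, ω, Module.Basis.reindex_apply, integralBasis_apply]
  have h1 := Algebra.discr_not_zero_of_basis ℚ b
  have h2 := Algebra.discr_eq_det_embeddingsMatrixReindex_pow_two ℚ ℂ b
    ((toC K).trans (RingHom.equivRatAlgHom (R := K) (S := ℂ)))
  have h3 : (Algebra.embeddingsMatrixReindex ℚ ℂ b ((toC K).trans (RingHom.equivRatAlgHom (R := K) (S := ℂ)))) =
      (Complex.ofRealHom.mapMatrix (S K)).transpose := by
    ext i v
    simp [Algebra.embeddingsMatrixReindex, Algebra.embeddingsMatrix, S, hb]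
  rw [h3, Matrix.det_transpose, ← RingHom.map_det] at h2
  intro h0
  rw [h0] at h2
  simp only [map_zero, ne_eq, OfNat.ofNat_ne_zero, not_false_eq_true, zero_pow] at h2
  exact h1 ((map_eq_zero _).1 h2)

/-- The covolume of the ring of integers in `ℝ^{Hom(K,ℝ)}`. -/
noncomputable def D : ℝ := |(S K).det|

lemma D_pos : 0 < D K := abs_pos.2 (det_S_ne_zero K)

variable {K}
variable {κ : Type*} [Fintype κ]

/-- The coordinatewise canonical embedding of `K^κ`. -/
def emb (y : κ → K) : (K →+* ℝ) → κ → ℝ := fun v j => v (y j)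

/-- The vector of `K^κ` attached to a vector of integers of `K`. -/
def toK (y : κ → 𝓞 K) : κ → K := fun j => (y j : K)

variable (K κ) in
/-- The linear map carrying integral coordinates to the canonical embedding. -/
noncomputable def Λ : ((K →+* ℝ) → κ → ℝ) →ₗ[ℝ] ((K →+* ℝ) → κ → ℝ) where
  toFun u := fun v j => ∑ i, S K v i * u i j
  map_add' x y := by
    ext v j; simp [mul_add, Finset.sum_add_distrib]
  map_smul' c x := by
    ext v j; simp [Finset.mul_sum, mul_left_comm]

lemma det_Λ : LinearMap.det (Λ K κ) = (S K).det ^ Fintype.card κ := by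
  let e : ((K →+* ℝ) → κ → ℝ) ≃ₗ[ℝ] (κ → (K →+* ℝ) → ℝ) :=
    { toFun := fun u j i => u i j
      invFun := fun u i j => u j i
      map_add' := fun _ _ => rfl
      map_smul' := fun _ _ => rfl
      left_inv := fun _ => rfl
      right_inv := fun _ => rfl }
  rw [← LinearMap.det_conj (Λ K κ) e]
  have : e.toLinearMap ∘ₗ Λ K κ ∘ₗ e.symm.toLinearMap =
      LinearMap.pi fun j => (Matrix.toLin' (S K)).comp (LinearMap.proj j) := by
    ext u j v
    simp [e, Λ, Matrix.mulVec, dotProduct]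
  rw [this, LinearMap.det_pi]
  simp

variable (K κ) in
/-- Integral coordinates of vectors of integers. -/
noncomputable def coords : (κ → 𝓞 K) ≃+ ((K →+* ℝ) → κ → ℤ) where
  toFun y := fun i j => (ω K).repr (y j) i
  invFun z := fun j => ∑ i, z i j • ω K i
  left_inv y := by
    funext j; exact (ω K).sum_repr (y j)
  right_inv z := by
    funext i j; exact congrFun ((ω K).repr_sum_self fun i => z i j) i
  map_add' x y := by ext i j; simp

lemma emb_eq (y : κ → 𝓞 K) : emb (toK y) = Λ K κ (zr (coords K κ y)) := by
  ext v j
  have h : y j = ∑ i, (ω K).repr (y j) i • ω K i := ((ω K).sum_repr (y j)).symm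
  simp only [emb, toK, Λ, zr, coords, S, LinearMap.coe_mk, AddHom.coe_mk, AddEquiv.coe_mk,
    Equiv.coe_fn_mk, Matrix.of_apply]
  conv_lhs => rw [h]
  rw [show (((∑ i, (ω K).repr (y j) i • ω K i : 𝓞 K)) : K) =
    ∑ i, ((ω K).repr (y j) i : K) * (ω K i : K) by simp, map_sum]
  refine Finset.sum_congr rfl fun i _ => ?_
  simp [mul_comm]

/-- Riemann sums over a coset of the homothetic lattice `M • O^κ`, in arbitrary linear
coordinates `Ψ` of the canonical embedding. -/
theorem riemann_O (Ψ : ((K →+* ℝ) → κ → ℝ) →ₗ[ℝ] ((K →+* ℝ) → κ → ℝ))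
    (hΨ : |LinearMap.det Ψ| = 1)
    (F : ((K →+* ℝ) → κ → ℝ) → ℝ) (C B : ℝ) (hC : ∀ u, |F u| ≤ C)
    (hB : ∀ u, B < ‖u‖ → F u = 0) (hF : Measurable F) (hc : ∀ᵐ u, ContinuousAt F u)
    (a : κ → 𝓞 K) (M : ℕ) (hM : 0 < M) :
    Tendsto (fun t : ℝ => (∑' y : κ → 𝓞 K, F (t⁻¹ • Ψ (emb (toK (a + M • y))))) /
      t ^ (Fintype.card (K →+* ℝ) * Fintype.card κ)) atTop
      (𝓝 ((∫ u, F u) / (D K ^ Fintype.card κ *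
        (M : ℝ) ^ (Fintype.card (K →+* ℝ) * Fintype.card κ)))) := by
  let A := Ψ ∘ₗ Λ K κ
  have hdet : |LinearMap.det A| = D K ^ Fintype.card κ := by
    rw [LinearMap.det_comp, abs_mul, hΨ, one_mul, det_Λ, abs_pow, D]
  have hDp : 0 < D K ^ Fintype.card κ := pow_pos (D_pos K) _
  have hA0 : LinearMap.det A ≠ 0 := by
    intro h; rw [h, abs_zero] at hdet; exact hDp.ne hdet
  have hAc : Continuous A := A.continuous_of_finiteDimensional
  let Ae := LinearEquiv.ofIsUnitDet (f := A) (v := Module.finBasis ℝ _)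
    (v' := Module.finBasis ℝ _) (by rw [LinearMap.det_toMatrix]; exact hA0.isUnit)
  have hAe : ∀ u, Ae u = A u := fun u => rfl
  have hmap := Measure.map_linearMap_addHaar_eq_smul_addHaar
    (volume : Measure ((K →+* ℝ) → κ → ℝ)) hA0
  obtain ⟨c, hc0, hcb⟩ : ∃ c : ℝ, 0 < c ∧ ∀ u, ‖u‖ ≤ c * ‖A u‖ := by
    let L := LinearMap.toContinuousLinearMap Ae.symm.toLinearMap
    refine ⟨‖L‖ + 1, by positivity, fun u => ?_⟩
    have h1 : L (A u) = u := by
      change Ae.symm (A u) = u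
      rw [← hAe, Ae.symm_apply_apply]
    calc ‖u‖ = ‖L (A u)‖ := by rw [h1]
      _ ≤ ‖L‖ * ‖A u‖ := L.le_opNorm _
      _ ≤ _ := by gcongr; linarith
  have hint : ∫ u, F (A u) = (∫ u, F u) / D K ^ Fintype.card κ := by
    have h1 : ∫ u, F u ∂(Measure.map A volume) = ∫ u, F (A u) :=
      integral_map hAc.aemeasurable hF.aestronglyMeasurable
    rw [← h1, hmap, integral_smul_measure, abs_inv, hdet,
      ENNReal.toReal_ofReal (by positivity), smul_eq_mul]
    field_simp
  have h := riemann_int (fun u => F (A u)) C (c * B) (fun u => hC _)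
    (fun u hu => hB _ (by
      have := hcb u
      have h2 : c * B < c * ‖A u‖ := by linarith
      exact lt_of_mul_lt_mul_left h2 hc0.le)) (hF.comp hAc.measurable)
    (by
      have h1 : ∀ᵐ u ∂(Measure.map A volume), ContinuousAt F u := by
        rw [hmap]
        exact Measure.ae_smul_measure hc _
      have h2 := ae_of_ae_map hAc.aemeasurable h1
      filter_upwards [h2] with u hu
      exact ContinuousAt.comp (f := A) hu hAc.continuousAt)
    (zr (coords K κ a)) M (by exact_mod_cast hM)
  rw [hint, div_div] at h
  refine h.congr fun t => ?_
  congr 1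
  rw [← (coords K κ).toEquiv.tsum_eq]
  refine tsum_congr fun y => ?_
  congr 1
  rw [map_smul]
  congr 1
  change Ψ (Λ K κ _) = _
  congr 1
  rw [emb_eq]
  congr 1
  ext i j
  have h3 : (ω K).repr (M • y j) = M • (ω K).repr (y j) := map_nsmul _ _ _
  have h4 : (ω K).repr ((a + M • y) j) = (ω K).repr (a j) + M • (ω K).repr (y j) := by
    rw [Pi.add_apply, Pi.smul_apply, map_add, h3]
  change _ + (M : ℝ) * (((ω K).repr (y j) i : ℤ) : ℝ) = (((ω K).repr ((a + M • y) j) i : ℤ) : ℝ)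
  rw [h4]
  simp [zr, coords]

end NF
end Siegel

namespace Siegel

/-- The Euclidean norm on `ℝᵏ`. -/
noncomputable def en {k : ℕ} (y : Fin k → ℝ) : ℝ := √(∑ i, y i ^ 2)

lemma en_eq {k : ℕ} (y : Fin k → ℝ) : en y = ‖WithLp.toLp 2 y‖ := by
  rw [en, EuclideanSpace.norm_eq]; simp

lemma continuous_en {k : ℕ} : Continuous (en : (Fin k → ℝ) → ℝ) := by
  unfold en; fun_prop

lemma en_nonneg {k : ℕ} (y : Fin k → ℝ) : 0 ≤ en y := Real.sqrt_nonneg _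

lemma norm_le_en {k : ℕ} (y : Fin k → ℝ) : ‖y‖ ≤ en y := by
  refine (pi_norm_le_iff_of_nonneg (en_nonneg y)).2 fun i => ?_
  rw [Real.norm_eq_abs]
  refine Real.abs_le_sqrt ?_
  exact Finset.single_le_sum (f := fun i => y i ^ 2) (fun i _ => sq_nonneg _) (Finset.mem_univ i)

/-- Polar coordinates in `ℝ⁴`, whose unit sphere has volume `2π²`. -/
lemma integral_radial (g : ℝ → ℝ) :
    ∫ y : Fin 4 → ℝ, g (en y) = 2 * Real.pi ^ 2 * ∫ r in Set.Ioi (0 : ℝ), r ^ 3 * g r := by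
  have h1 := (EuclideanSpace.volume_preserving_symm_measurableEquiv_toLp (Fin 4)).symm.integral_comp'
    (fun x : EuclideanSpace ℝ (Fin 4) => g ‖x‖)
  have h2 : ∫ y : Fin 4 → ℝ, g (en y) = ∫ x : EuclideanSpace ℝ (Fin 4), g ‖x‖ := by
    rw [← h1]
    refine integral_congr_ae (Eventually.of_forall fun y => ?_)
    simp [en_eq]
  rw [h2, integral_fun_norm_addHaar volume g]
  have hv : (volume : Measure (EuclideanSpace ℝ (Fin 4))).real (Metric.ball 0 1) =
      Real.pi ^ 2 / 2 := by
    rw [Measure.real, EuclideanSpace.volume_ball]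
    have : Real.Gamma (3 : ℝ) = 2 := by
      rw [show (3 : ℝ) = ((2 : ℕ) : ℝ) + 1 by norm_num, Real.Gamma_nat_eq_factorial 2]
      norm_num
    norm_num [this, ENNReal.toReal_ofReal, Real.pi_nonneg]
    rw [show √Real.pi ^ 4 = (√Real.pi ^ 2) ^ 2 by ring, Real.sq_sqrt Real.pi_nonneg]
    rw [ENNReal.toReal_ofReal (by positivity)]
  simp only [finrank_euclideanSpace, Fintype.card_fin, hv, nsmul_eq_mul, smul_eq_mul]
  norm_num
  ring

lemma volume_en_eq (c : ℝ) (hc : c ≠ 0) : volume {y : Fin 4 → ℝ | en y = c} = 0 := by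
  have h1 := PiLp.volume_preserving_toLp (Fin 4)
  have : {y : Fin 4 → ℝ | en y = c} = (WithLp.toLp 2) ⁻¹' Metric.sphere 0 c := by
    ext y; simp [en_eq]
  rw [this]
  refine (h1.measure_preimage ?_).trans (Measure.addHaar_sphere_of_ne_zero _ _ hc)
  exact Metric.isClosed_sphere.measurableSet.nullMeasurableSet

section
variable {K : Type*} [Field K] [NumberField K] [IsTotallyReal K]
variable {κ : Type*} [Fintype κ]

/-- Riemann sums for functions that are products over the real places. -/
theorem riemann_prod (ψ : (K →+* ℝ) → (κ → ℝ) →ₗ[ℝ] (κ → ℝ))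
    (hψ : ∀ v, |LinearMap.det (ψ v)| = 1)
    (G : (κ → ℝ) → ℝ) (C B : ℝ) (hB0 : 0 ≤ B) (hC : ∀ u, |G u| ≤ C)
    (hB : ∀ u, B < ‖u‖ → G u = 0) (hG : Measurable G) (hc : ∀ᵐ u, ContinuousAt G u)
    (a : κ → 𝓞 K) (M : ℕ) (hM : 0 < M) :
    Tendsto (fun t : ℝ => (∑' y : κ → 𝓞 K,
        ∏ v : K →+* ℝ, G (t⁻¹ • ψ v (fun j => v ((a + M • y) j)))) /
      t ^ (Fintype.card (K →+* ℝ) * Fintype.card κ)) atTop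
      (𝓝 ((∫ u, G u) ^ Fintype.card (K →+* ℝ) / (D K ^ Fintype.card κ *
        (M : ℝ) ^ (Fintype.card (K →+* ℝ) * Fintype.card κ)))) := by
  have hi := integral_fintype_prod_eq_pow (μ := (volume : Measure (κ → ℝ))) (ι := K →+* ℝ) G
  have h := riemann_O (K := K) (κ := κ) (LinearMap.pi fun v => (ψ v).comp (LinearMap.proj v))
    (by rw [LinearMap.det_pi, Finset.abs_prod]; simp [hψ])
    (fun u => ∏ v, G (u v)) (C ^ Fintype.card (K →+* ℝ)) B
    (fun u => by
      rw [Finset.abs_prod]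
      calc ∏ v, |G (u v)| ≤ ∏ v : K →+* ℝ, C :=
            Finset.prod_le_prod (fun _ _ => abs_nonneg _) fun _ _ => hC _
        _ = _ := by simp)
    (fun u hu => by
      by_contra hne
      rw [← ne_eq, Finset.prod_ne_zero_iff] at hne
      refine hu.not_ge ((pi_norm_le_iff_of_nonneg hB0).2 fun v => ?_)
      by_contra hv
      exact hne v (Finset.mem_univ _) (hB _ (not_le.1 hv)))
    (Finset.measurable_prod _ fun v _ => hG.comp (measurable_pi_apply v))
    (by
      have : ∀ v : K →+* ℝ, ∀ᵐ u : (K →+* ℝ) → κ → ℝ, ContinuousAt G (u v) := fun v =>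
        (Measure.quasiMeasurePreserving_eval (fun _ : K →+* ℝ => (volume : Measure (κ → ℝ))) v).ae hc
      filter_upwards [ae_all_iff.2 this] with u hu
      refine tendsto_finsetProd _ fun v _ => ?_
      exact ContinuousAt.comp (f := fun u : (K →+* ℝ) → κ → ℝ => u v) (hu v)
        (continuous_apply v).continuousAt)
    a M hM
  have e : ∫ u : (K →+* ℝ) → κ → ℝ, ∏ v, G (u v) = (∫ u, G u) ^ Fintype.card (K →+* ℝ) := hi
  rw [e] at h
  exact h
end
end Siegel

/-! ### Points of discrete groups in boxes -/

namespace Siegel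

section Dyadic
variable {ι : Type*} [Fintype ι] [Nonempty ι] {E : Type*} [AddCommGroup E]
  (P : E →+ (ι → Fin 4 → ℝ))

lemma abs_le_en {k : ℕ} (y : Fin k → ℝ) (i : Fin k) : |y i| ≤ en y := by
  simpa using (norm_le_pi_norm y i).trans (norm_le_en y)

lemma en_lt_of_abs_lt (y : Fin 4 → ℝ) (c : ℝ) (h : ∀ i, |y i| < c) : en y < 2 * c := by
  have hc : 0 < c := (abs_nonneg _).trans_lt (h 0)
  rw [en, Real.sqrt_lt' (by positivity)]
  have : ∀ i, y i ^ 2 < c ^ 2 := fun i => by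
    rw [← sq_abs]; exact pow_lt_pow_left₀ (h i) (abs_nonneg _) two_ne_zero
  simp only [Fin.sum_univ_four]
  nlinarith [this 0, this 1, this 2, this 3]

/-- Pigeonhole bound for the number of points of a discrete group in a product of balls, when
the product of the norms of a nonzero element is bounded below. -/
lemma box_count (W : AddSubgroup E) (M : ℝ) (hM0 : 0 < M)
    (hM : ∀ w ∈ W, w ≠ 0 → M ≤ ∏ v, en (P w v)) (r : ι → ℝ) (s : Finset E)
    (hs : ∀ w ∈ s, w ∈ W ∧ w ≠ 0 ∧ ∀ v, en (P w v) ≤ r v) :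
    (s.card : ℝ) ≤ 6 ^ (4 * Fintype.card ι) * ((∏ v, r v) / M) ^ 4 := by
  classical
  rcases s.eq_empty_or_nonempty with rfl | ⟨w0, hw0⟩
  · have : (0:ℝ) ≤ 6 ^ (4 * Fintype.card ι) * ((∏ v, r v) / M) ^ 4 := by positivity
    simpa using this
  set n := Fintype.card ι with hn
  have hn0 : n ≠ 0 := Fintype.card_ne_zero
  obtain ⟨h1, h2, h3⟩ := hs w0 hw0
  have hMr : M ≤ ∏ v, r v :=
    (hM w0 h1 h2).trans (Finset.prod_le_prod (fun _ _ => en_nonneg _) fun v _ => h3 v)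
  have hr : ∀ v, 0 < r v := by
    have hne : (∏ v, en (P w0 v)) ≠ 0 := (hM0.trans_le (hM w0 h1 h2)).ne'
    rw [Finset.prod_ne_zero_iff] at hne
    exact fun v => ((en_nonneg _).lt_of_ne' (hne v (Finset.mem_univ _))).trans_le (h3 v)
  set X := (∏ v, r v) / M with hX
  have hX1 : 1 ≤ X := (one_le_div hM0).2 hMr
  set x := X ^ ((1 : ℝ) / n) with hx
  have hxn : x ^ n = X := by
    rw [hx, ← Real.rpow_natCast, ← Real.rpow_mul (by linarith)]
    rw [one_div, inv_mul_cancel₀ (by exact_mod_cast hn0), Real.rpow_one]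
  have hx1 : 1 ≤ x := Real.one_le_rpow hX1 (by positivity)
  set k := ⌈4 * x⌉₊ with hk
  have hk4 : 4 * x ≤ k := Nat.le_ceil _
  have hk0 : (0 : ℝ) < k := by linarith
  -- pigeonhole: each side of the box is cut into `k ≥ 4 x` pieces, where `x ^ n = ∏ r / M`; the difference
  -- of two points in one cell would have product of sizes less than `M`
  let cell : E → (ι → Fin 4 → Fin (k + 1)) := fun w v i =>
    Fin.ofNat (k + 1) ⌊(P w v i + r v) / (2 * r v) * k⌋₊
  have hinj : Set.InjOn cell s := by
    intro w hw w' hw' he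
    by_contra hne
    obtain ⟨a1, a2, a3⟩ := hs w hw
    obtain ⟨b1, b2, b3⟩ := hs w' hw'
    have hlow := hM (w - w') (W.sub_mem a1 b1) (sub_ne_zero.2 hne)
    have hsmall : ∀ v, en (P (w - w') v) < 4 * r v / k := by
      intro v
      have : 4 * r v / k = 2 * (2 * r v / k) := by ring
      rw [this]
      refine en_lt_of_abs_lt _ _ fun i => ?_
      have e := congrArg Fin.val (congrFun (congrFun he v) i)
      simp only [cell, Fin.ofNat, Fin.val_mk] at e
      have bound : ∀ u : E, en (P u v) ≤ r v →
          0 ≤ (P u v i + r v) / (2 * r v) * k ∧ (P u v i + r v) / (2 * r v) * k ≤ k := by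
        intro u hu
        have := abs_le.1 ((abs_le_en (P u v) i).trans hu)
        have hr2 : 0 < 2 * r v := by linarith [hr v]
        constructor
        · exact mul_nonneg (div_nonneg (by linarith) hr2.le) hk0.le
        · refine mul_le_of_le_one_left hk0.le ((div_le_one hr2).2 (by linarith))
      obtain ⟨c1, c2⟩ := bound w (a3 v)
      obtain ⟨d1, d2⟩ := bound w' (b3 v)
      have c3 : ⌊(P w v i + r v) / (2 * r v) * k⌋₊ < k + 1 :=
        Nat.lt_succ_of_le (Nat.floor_le_of_le c2)
      have d3 : ⌊(P w' v i + r v) / (2 * r v) * k⌋₊ < k + 1 :=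
        Nat.lt_succ_of_le (Nat.floor_le_of_le d2)
      rw [Nat.mod_eq_of_lt c3, Nat.mod_eq_of_lt d3] at e
      have c4 := Nat.floor_le c1
      have c5 := Nat.lt_floor_add_one ((P w v i + r v) / (2 * r v) * k)
      have d4 := Nat.floor_le d1
      have d5 := Nat.lt_floor_add_one ((P w' v i + r v) / (2 * r v) * k)
      rw [e] at c4 c5
      have habs : |(P w v i + r v) / (2 * r v) * k - (P w' v i + r v) / (2 * r v) * k| < 1 := by
        rw [abs_lt]; constructor <;> linarith
      have hr0 := hr v
      have heq : (P w v i + r v) / (2 * r v) * k - (P w' v i + r v) / (2 * r v) * k =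
          (P (w - w') v i) * (k / (2 * r v)) := by
        rw [map_sub]; simp only [Pi.sub_apply]; field_simp; ring
      rw [heq, abs_mul, abs_of_pos (by positivity : 0 < k / (2 * r v))] at habs
      rw [lt_div_iff₀ hk0]
      have := mul_lt_mul_of_pos_right habs (by positivity : 0 < 2 * r v)
      field_simp at this
      linarith
    have h5 : ∏ v, en (P (w - w') v) < ∏ v, 4 * r v / k := by
      have hpos : ∀ v ∈ Finset.univ, 0 < en (P (w - w') v) := by
        have hne : (∏ v, en (P (w - w') v)) ≠ 0 := (hM0.trans_le hlow).ne'
        rw [Finset.prod_ne_zero_iff] at hne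
        exact fun v hv => (en_nonneg _).lt_of_ne' (hne v hv)
      exact Finset.prod_lt_prod_of_nonempty hpos (fun v _ => hsmall v) Finset.univ_nonempty
    have h6 : ∏ v, 4 * r v / k ≤ M := by
      have : ∏ v, 4 * r v / k = (4 / k) ^ n * ∏ v, r v := by
        rw [hn, ← Finset.card_univ, ← Finset.prod_const, ← Finset.prod_mul_distrib]
        exact Finset.prod_congr rfl fun v _ => by ring
      rw [this]
      have h7 : (4 / (k : ℝ)) ≤ 1 / x := by
        rw [div_le_div_iff₀ hk0 (by linarith)]; linarith
      calc (4 / (k : ℝ)) ^ n * ∏ v, r v ≤ (1 / x) ^ n * ∏ v, r v := by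
            gcongr
            exact Finset.prod_nonneg fun v _ => (hr v).le
        _ = M := by
            rw [div_pow, one_pow, hxn, hX]
            have : 0 < ∏ v, r v := Finset.prod_pos fun v _ => hr v
            field_simp
    linarith
  have hcard : s.card ≤ Fintype.card (ι → Fin 4 → Fin (k + 1)) := by
    rw [← Finset.card_univ]
    exact Finset.card_le_card_of_injOn cell (fun _ _ => Finset.mem_coe.2 (Finset.mem_univ _)) hinj
  have hcard2 : (s.card : ℝ) ≤ ((k : ℝ) + 1) ^ (4 * n) := by
    have : Fintype.card (ι → Fin 4 → Fin (k + 1)) = (k + 1) ^ (4 * n) := by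
      simp [pow_mul, hn]
    rw [this] at hcard
    exact_mod_cast hcard
  refine hcard2.trans ?_
  have hk6 : (k : ℝ) + 1 ≤ 6 * x := by
    have := Nat.ceil_lt_add_one (by linarith : 0 ≤ 4 * x)
    linarith
  calc ((k : ℝ) + 1) ^ (4 * n) ≤ (6 * x) ^ (4 * n) := by gcongr
    _ = _ := by rw [mul_pow, mul_comm 4 n, pow_mul x, hxn]

/-- Dyadic summation of `∏ 1 / |w|_v` over a discrete group. -/
lemma dyadic_sum (W : AddSubgroup E) (M : ℝ) (hM0 : 0 < M)
    (hM : ∀ w ∈ W, w ≠ 0 → M ≤ ∏ v, en (P w v)) (B : ι → ℝ) (hB : ∀ v, 0 < B v)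
    (s : Finset E) (hs : ∀ w ∈ s, w ∈ W ∧ w ≠ 0 ∧ ∀ v, en (P w v) ≤ B v) :
    ∑ w ∈ s, ∏ v, (en (P w v))⁻¹ ≤
      6 ^ (4 * Fintype.card ι) * 4 ^ Fintype.card ι * (∏ v, B v) ^ 3 / M ^ 4 := by
  classical
  set n := Fintype.card ι with hn
  have hpos : ∀ w ∈ s, ∀ v, 0 < en (P w v) := by
    intro w hw
    obtain ⟨h1, h2, h3⟩ := hs w hw
    have hne : (∏ v, en (P w v)) ≠ 0 := (hM0.trans_le (hM w h1 h2)).ne'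
    rw [Finset.prod_ne_zero_iff] at hne
    exact fun v => (en_nonneg _).lt_of_ne' (hne v (Finset.mem_univ _))
  have hex : ∀ w v, ∃ j : ℕ, w ∈ s → en (P w v) ≤ B v / 2 ^ j ∧ (en (P w v))⁻¹ ≤ 2 * 2 ^ j / B v := by
    intro w v
    by_cases hw : w ∈ s
    · have hp := hpos w hw v
      have h1 : 1 ≤ B v / en (P w v) := (one_le_div hp).2 ((hs w hw).2.2 v)
      obtain ⟨j, hj1, hj2⟩ := exists_nat_pow_near h1 (one_lt_two)
      refine ⟨j, fun _ => ⟨?_, ?_⟩⟩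
      · rw [le_div_iff₀ (by positivity)]
        rw [le_div_iff₀ hp] at hj1
        linarith
      · rw [pow_succ, div_lt_iff₀ hp] at hj2
        rw [inv_eq_one_div, div_le_div_iff₀ hp (hB v)]
        linarith
    · exact ⟨0, fun h => absurd h hw⟩
  choose j hj using hex
  let J := ∑ w ∈ s, ∑ v, j w v
  have himg : s.image j ⊆ Fintype.piFinset fun _ : ι => Finset.range (J + 1) := by
    intro f hf
    obtain ⟨w, hw, rfl⟩ := Finset.mem_image.1 hf
    refine Fintype.mem_piFinset.2 fun v => Finset.mem_range.2 (Nat.lt_succ_of_le ?_)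
    exact (Finset.single_le_sum (f := fun v => j w v) (fun _ _ => Nat.zero_le _)
      (Finset.mem_univ v)).trans
      (Finset.single_le_sum (f := fun w => ∑ v, j w v) (fun _ _ => Nat.zero_le _) hw)
  have hBp : 0 < ∏ v, B v := Finset.prod_pos fun v _ => hB v
  set c : ℝ := 6 ^ (4 * n) * (∏ v, B v) ^ 3 / M ^ 4 with hc
  have hc0 : 0 ≤ c := by positivity
  have hfib : ∀ f ∈ s.image j, ∑ w ∈ s with j w = f, ∏ v, (en (P w v))⁻¹ ≤
      c * ∏ v, (2 * (1 / 8 : ℝ) ^ f v) := by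
    intro f _
    have h1 : ∀ w ∈ s.filter (fun w => j w = f), ∏ v, (en (P w v))⁻¹ ≤ ∏ v, (2 * 2 ^ f v / B v) := by
      intro w hw
      obtain ⟨hw', rfl⟩ := Finset.mem_filter.1 hw
      exact Finset.prod_le_prod (fun v _ => inv_nonneg.2 (en_nonneg _)) fun v _ => (hj w v hw').2
    have h2 := box_count P W M hM0 hM (fun v => B v / 2 ^ f v) (s.filter (fun w => j w = f)) (by
      intro w hw
      obtain ⟨hw', rfl⟩ := Finset.mem_filter.1 hw
      exact ⟨(hs w hw').1, (hs w hw').2.1, fun v => (hj w v hw').1⟩)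
    refine (Finset.sum_le_card_nsmul _ _ _ h1).trans ?_
    rw [nsmul_eq_mul]
    have h0 : 0 ≤ ∏ v, (2 * 2 ^ f v / B v) :=
      Finset.prod_nonneg fun v _ => by have := hB v; positivity
    refine (mul_le_mul_of_nonneg_right h2 h0).trans (le_of_eq ?_)
    have e1 : ∏ v, (2 * (1 / 8 : ℝ) ^ f v) =
        (∏ v, (1 / 2 ^ f v)) ^ 4 * ∏ v, (2 * 2 ^ f v) := by
      rw [← Finset.prod_pow, ← Finset.prod_mul_distrib]
      refine Finset.prod_congr rfl fun v _ => ?_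
      rw [div_pow, one_pow, show (8 : ℝ) = 2 ^ 3 by norm_num, ← pow_mul]
      field_simp
      ring
    rw [e1, hc, Finset.prod_div_distrib, Finset.prod_div_distrib, Finset.prod_div_distrib]
    have h2p : 0 < ∏ v, (2 : ℝ) ^ f v := Finset.prod_pos fun v _ => by positivity
    simp only [Finset.prod_const_one]
    rw [hn]
    field_simp
  calc ∑ w ∈ s, ∏ v, (en (P w v))⁻¹
      = ∑ f ∈ s.image j, ∑ w ∈ s with j w = f, ∏ v, (en (P w v))⁻¹ :=
        (Finset.sum_fiberwise_of_maps_to (fun w hw => Finset.mem_image_of_mem _ hw) _).symm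
    _ ≤ ∑ f ∈ s.image j, c * ∏ v, (2 * (1 / 8 : ℝ) ^ f v) := Finset.sum_le_sum hfib
    _ ≤ ∑ f ∈ Fintype.piFinset fun _ : ι => Finset.range (J + 1), c * ∏ v, (2 * (1 / 8 : ℝ) ^ f v) :=
        Finset.sum_le_sum_of_subset_of_nonneg himg fun f _ _ =>
          mul_nonneg hc0 (Finset.prod_nonneg fun _ _ => by positivity)
    _ = c * (∑ i ∈ Finset.range (J + 1), 2 * (1 / 8 : ℝ) ^ i) ^ n := by
        rw [← Finset.mul_sum, Finset.sum_prod_piFinset (Finset.range (J + 1)) (fun _ i => 2 * (1 / 8 : ℝ) ^ i),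
          Finset.prod_const, hn, Finset.card_univ]
    _ ≤ c * 4 ^ n := by
        gcongr
        have := (summable_geometric_of_lt_one (by norm_num : (0:ℝ) ≤ 1/8) (by norm_num)).sum_le_tsum
          (Finset.range (J + 1)) (fun _ _ => by positivity)
        rw [tsum_geometric_of_lt_one (by norm_num) (by norm_num)] at this
        rw [← Finset.mul_sum]
        norm_num at this ⊢
        linarith
    _ = _ := by rw [hc]; ring

end Dyadic
end Siegel

/-! ### Quaternary forms with quaternion structure -/

namespace Siegel

/-- Parameters of a quaternary quadratic form of determinant one which becomes a sum of four squares
after multiplication by `al`. It comes from a solution of `a² + b² + 1 = al * h`. -/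
@[ext] structure Form (R : Type*) [CommRing R] where
  a : R
  b : R
  h : R
  al : R
  rel : al * h = 1 + a ^ 2 + b ^ 2

namespace Form
variable {R : Type*} [CommRing R] (f : Form R)

/-- The linear change of variables with `al * Q y = ∑ (X y i)²`. -/
def X (y : Fin 4 → R) : Fin 4 → R :=
  ![y 0, y 1, f.a * y 0 - f.b * y 1 + f.al * y 2, f.b * y 0 + f.a * y 1 + f.al * y 3]

/-- The quadratic form. -/
def Q (y : Fin 4 → R) : R :=
  f.h * (y 0 ^ 2 + y 1 ^ 2) + 2 * ((f.a * y 0 - f.b * y 1) * y 2 + (f.b * y 0 + f.a * y 1) * y 3)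
    + f.al * (y 2 ^ 2 + y 3 ^ 2)

/-- The bilinear form, normalised by `B y y = Q y`. -/
def B (x y : Fin 4 → R) : R :=
  f.h * (x 0 * y 0 + x 1 * y 1) + (f.a * x 0 - f.b * x 1) * y 2 + (f.a * y 0 - f.b * y 1) * x 2
    + (f.b * x 0 + f.a * x 1) * y 3 + (f.b * y 0 + f.a * y 1) * x 3
    + f.al * (x 2 * y 2 + x 3 * y 3)

/-- Multiplication by a first quaternion unit. -/
def J1 (y : Fin 4 → R) : Fin 4 → R := ![-y 1, y 0, -y 3, y 2]

/-- Multiplication by a second quaternion unit. -/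
def J2 (y : Fin 4 → R) : Fin 4 → R :=
  ![-(f.a * y 0 - f.b * y 1 + f.al * y 2), f.b * y 0 + f.a * y 1 + f.al * y 3,
    f.h * y 0 + f.a * y 2 + f.b * y 3, -f.h * y 1 + f.b * y 2 - f.a * y 3]

/-- The three vectors which together with `y` form an orthogonal frame. -/
def J (k : Fin 3) (y : Fin 4 → R) : Fin 4 → R := ![J1 y, f.J2 y, J1 (f.J2 y)] k

lemma X_J1 (y) : f.X (J1 y) = ![-f.X y 1, f.X y 0, -f.X y 3, f.X y 2] := by
  ext i; fin_cases i <;> simp [X, J1] <;> ring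

lemma X_J2 (y) : f.X (f.J2 y) = ![-f.X y 2, f.X y 3, f.X y 0, -f.X y 1] := by
  ext i; fin_cases i <;> simp [X, J2]
  · linear_combination y 0 * f.rel
  · linear_combination -y 1 * f.rel

lemma al_Q (y) : f.al * f.Q y = ∑ i, f.X y i ^ 2 := by
  simp [Fin.sum_univ_four, X, Q]
  linear_combination (y 0 ^ 2 + y 1 ^ 2) * f.rel

lemma al_B (x y) : f.al * f.B x y = ∑ i, f.X x i * f.X y i := by
  simp [Fin.sum_univ_four, X, B]
  linear_combination (x 0 * y 0 + x 1 * y 1) * f.rel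

lemma B_self (y) : f.B y y = f.Q y := by simp only [B, Q]; ring
lemma B_comm (x y) : f.B x y = f.B y x := by simp only [B]; ring
lemma B_add (x x' y) : f.B (x + x') y = f.B x y + f.B x' y := by
  simp only [B, Pi.add_apply]; ring
lemma B_sub (x x' y) : f.B (x - x') y = f.B x y - f.B x' y := by
  simp only [B, Pi.sub_apply]; ring
lemma B_smul (c : R) (x y) : f.B (c • x) y = c * f.B x y := by
  simp only [B, Pi.smul_apply, smul_eq_mul]; ring
lemma Q_add (x y) : f.Q (x + y) = f.Q x + 2 * f.B x y + f.Q y := by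
  simp only [B, Q, Pi.add_apply]; ring
lemma Q_smul (c : R) (x) : f.Q (c • x) = c ^ 2 * f.Q x := by
  simp only [Q, Pi.smul_apply, smul_eq_mul]; ring

section cancel
variable [IsDomain R] (hal : f.al ≠ 0)
include hal

lemma B_J (k : Fin 3) (w) : f.B (f.J k w) w = 0 := by
  refine mul_left_cancel₀ hal ?_
  rw [al_B]
  fin_cases k <;> simp [J, Fin.sum_univ_four, X_J1, X_J2] <;> ring

lemma B_J_J (k l : Fin 3) (w) : f.B (f.J k w) (f.J l w) = if k = l then f.Q w else 0 := by
  refine mul_left_cancel₀ hal ?_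
  rw [al_B, mul_ite, al_Q]
  fin_cases k <;> fin_cases l <;> simp [J, Fin.sum_univ_four, X_J1, X_J2] <;> ring

/-- Euler's four-square identity in invariant form. -/
lemma euler (x w) : f.Q w * f.Q x = f.B x w ^ 2 + ∑ k, f.B x (f.J k w) ^ 2 := by
  refine mul_left_cancel₀ (pow_ne_zero 2 hal) ?_
  have e : f.al ^ 2 * (f.B x w ^ 2 + ∑ k, f.B x (f.J k w) ^ 2) =
      (f.al * f.B x w) ^ 2 + ∑ k, (f.al * f.B x (f.J k w)) ^ 2 := by
    rw [mul_add, Finset.mul_sum]; simp only [mul_pow]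
  rw [e, show f.al ^ 2 * (f.Q w * f.Q x) = (f.al * f.Q w) * (f.al * f.Q x) by ring]
  simp only [al_B, al_Q]
  simp [J, Fin.sum_univ_four, Fin.sum_univ_three, X_J1, X_J2]
  ring

/-- The matrix with columns `w, J w`. -/
def frame (f : Form R) (w : Fin 4 → R) : Matrix (Fin 4) (Fin 4) R :=
  Matrix.of fun i j => (![w, f.J 0 w, f.J 1 w, f.J 2 w] : Fin 4 → Fin 4 → R) j i

/-- The Gram matrix of the frame is `Q w • 1` and the form has determinant one, so the determinant of the
frame is `± (Q w)²`; the sign is `+`. -/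
lemma det_frame (w) : (f.frame w).det = f.Q w ^ 2 := by
  let XM : Matrix (Fin 4) (Fin 4) R :=
    !![1, 0, 0, 0; 0, 1, 0, 0; f.a, -f.b, f.al, 0; f.b, f.a, 0, f.al]
  have hX : XM.det = f.al ^ 2 := by
    simp [XM, Matrix.det_succ_row_zero, Fin.sum_univ_succ, Fin.succAbove]
    ring
  have h1 : XM * f.frame w = Matrix.of fun i j =>
      f.X ((![w, f.J 0 w, f.J 1 w, f.J 2 w] : Fin 4 → Fin 4 → R) j) i := by
    ext i j
    fin_cases i <;> simp [XM, Matrix.mul_apply, Fin.sum_univ_four, X, frame] <;> ring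
  have h2 : (XM * f.frame w).det = (f.al * f.Q w) ^ 2 := by
    rw [h1, al_Q]
    simp [Matrix.det_succ_row_zero, Fin.sum_univ_succ, Fin.succAbove, J, X_J1, X_J2]
    ring
  refine mul_left_cancel₀ (pow_ne_zero 2 hal) ?_
  rw [← mul_pow, ← h2, Matrix.det_mul, hX]
end cancel

/-- Base change of a form. -/
def map {S : Type*} [CommRing S] (φ : R →+* S) : Form S where
  a := φ f.a
  b := φ f.b
  h := φ f.h
  al := φ f.al
  rel := by rw [← map_mul, f.rel]; simp

lemma map_Q {S : Type*} [CommRing S] (φ : R →+* S) (y) :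
    (f.map φ).Q (fun j => φ (y j)) = φ (f.Q y) := by simp [Q, map, map_ofNat]

lemma map_B {S : Type*} [CommRing S] (φ : R →+* S) (x y) :
    (f.map φ).B (fun j => φ (x j)) (fun j => φ (y j)) = φ (f.B x y) := by simp [B, map]

end Form

namespace Form
variable (f : Form ℝ)

/-- Euclidean coordinates for a positive form over `ℝ`. -/
noncomputable def ψ : (Fin 4 → ℝ) →ₗ[ℝ] (Fin 4 → ℝ) where
  toFun y := (√f.al)⁻¹ • f.X y
  map_add' x y := by
    rw [← smul_add]; congr 1
    ext i; fin_cases i <;> simp [X] <;> ring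
  map_smul' c x := by
    rw [RingHom.id_apply, smul_comm]; congr 1
    ext i; fin_cases i <;> simp [X] <;> ring

lemma en_ψ (hal : 0 < f.al) (y) : en (f.ψ y) = √(f.Q y) := by
  rw [en]; congr 1
  have h1 := f.al_Q y
  simp only [ψ, LinearMap.coe_mk, AddHom.coe_mk, Pi.smul_apply, smul_eq_mul, mul_pow, inv_pow,
    Real.sq_sqrt hal.le]
  rw [← Finset.mul_sum, ← h1]
  field_simp

lemma Q_nonneg (hal : 0 < f.al) (y) : 0 ≤ f.Q y := by
  have h1 := f.al_Q y
  have h2 : 0 ≤ ∑ i, f.X y i ^ 2 := Finset.sum_nonneg fun _ _ => sq_nonneg _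
  rw [← h1] at h2
  exact nonneg_of_mul_nonneg_right h2 hal

lemma Q_eq_zero (hal : 0 < f.al) {y} (h : f.Q y = 0) : y = 0 := by
  have h1 := f.al_Q y
  rw [h, mul_zero, eq_comm, Finset.sum_eq_zero_iff_of_nonneg (fun _ _ => sq_nonneg _)] at h1
  have h2 : ∀ i, f.X y i = 0 := fun i => by simpa using h1 i (Finset.mem_univ i)
  have e0 := h2 0
  have e1 := h2 1
  have e2 := h2 2
  have e3 := h2 3
  simp [X] at e0 e1 e2 e3
  simp [e0, e1, hal.ne'] at e2 e3
  ext i; fin_cases i <;> simp [e0, e1, e2, e3]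

lemma det_ψ (hal : 0 < f.al) : LinearMap.det f.ψ = 1 := by
  have : f.ψ = Matrix.toLin' ((√f.al)⁻¹ • (!![1, 0, 0, 0; 0, 1, 0, 0; f.a, -f.b, f.al, 0;
      f.b, f.a, 0, f.al] : Matrix (Fin 4) (Fin 4) ℝ)) := by
    refine LinearMap.ext fun y => ?_
    rw [Matrix.toLin'_apply, Matrix.smul_mulVec]
    change (√f.al)⁻¹ • f.X y = _
    congr 1
    ext i; fin_cases i <;> simp [X, Matrix.mulVec, dotProduct, Fin.sum_univ_four] <;> ring
  rw [this, LinearMap.det_toLin', Matrix.det_smul]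
  have h2 : (√f.al)⁻¹ ^ 4 = (f.al ^ 2)⁻¹ := by
    rw [inv_pow, show √f.al ^ 4 = (√f.al ^ 2) ^ 2 by ring, Real.sq_sqrt hal.le]
  simp [Matrix.det_succ_row_zero, Fin.sum_univ_succ, Fin.succAbove, ← inv_pow, h2]
  field_simp
end Form

end Siegel

/-! ### Lattice points on hyperplane sections -/

namespace Siegel

lemma en_add_le {k : ℕ} (x y : Fin k → ℝ) : en (x + y) ≤ en x + en y := by
  simpa [en_eq] using norm_add_le (WithLp.toLp 2 x) (WithLp.toLp 2 y)

lemma en_smul {k : ℕ} (c : ℝ) (x : Fin k → ℝ) : en (c • x) = |c| * en x := by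
  simpa [en_eq] using norm_smul c (WithLp.toLp 2 x)

lemma volume_en_le (r : ℝ) (hr : 0 ≤ r) :
    volume {y : Fin 3 → ℝ | en y ≤ r} = ENNReal.ofReal (4 * Real.pi / 3 * r ^ 3) := by
  have h1 := PiLp.volume_preserving_toLp (Fin 3)
  have : {y : Fin 3 → ℝ | en y ≤ r} = (WithLp.toLp 2) ⁻¹' Metric.closedBall 0 r := by
    ext y; simp [en_eq]
  rw [this]
  refine (h1.measure_preimage Metric.isClosed_closedBall.measurableSet.nullMeasurableSet).trans ?_
  rw [EuclideanSpace.volume_closedBall_fin_three, ← ENNReal.ofReal_pow hr,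
    ← ENNReal.ofReal_mul (by positivity)]
  congr 1
  ring

section
variable (K : Type*) [Field K] [NumberField K] [IsTotallyReal K]

/-- Number of points of a homothetic translate of `O³` in a product of balls: compare with the
volume of the union of the fundamental cells around these points. -/
lemma ball_count (q : ℕ) (hq : 0 < q) : ∃ C : ℝ, 0 < C ∧
    ∀ (c : (K →+* ℝ) → Fin 3 → ℝ) (R : (K →+* ℝ) → ℝ), (∀ v, 0 ≤ R v) →
    ∀ s : Finset (Fin 3 → 𝓞 K),
    (∀ β ∈ s, ∀ v, en (c v + (q : ℝ) • emb (toK β) v) ≤ R v) →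
    (s.card : ℝ) * ((q : ℝ) ^ (3 * Fintype.card (K →+* ℝ)) * D K ^ 3) ≤
      ∏ v, (4 * Real.pi / 3 * (R v + C) ^ 3) := by
  classical
  have hq' : (0 : ℝ) < q := by exact_mod_cast hq
  let A : ((K →+* ℝ) → Fin 3 → ℝ) →ₗ[ℝ] ((K →+* ℝ) → Fin 3 → ℝ) := (q : ℝ) • Λ K (Fin 3)
  have hdet : |LinearMap.det A| = (q : ℝ) ^ (3 * Fintype.card (K →+* ℝ)) * D K ^ 3 := by
    rw [LinearMap.det_smul, abs_mul, det_Λ, abs_pow, abs_pow, D, abs_of_pos hq']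
    congr 2
    · simp [Module.finrank_pi_fintype, mul_comm]
  have hDp : 0 < (q : ℝ) ^ (3 * Fintype.card (K →+* ℝ)) * D K ^ 3 := by
    have := D_pos K; positivity
  have hA0 : LinearMap.det A ≠ 0 := by
    intro h; rw [h, abs_zero] at hdet; exact hDp.ne hdet
  let L := LinearMap.toContinuousLinearMap A
  have hL : ∀ u, ‖u‖ ≤ 1 → ∀ v, en (A u v) ≤ 2 * (‖L‖ + 1) := by
    intro u hu v
    have h1 : ‖A u v‖ ≤ ‖L‖ := (norm_le_pi_norm _ v).trans
      ((L.le_opNorm u).trans (by nlinarith [norm_nonneg L]))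
    have h2 : ∀ i, (A u v i) ^ 2 ≤ ‖L‖ ^ 2 := fun i => by
      rw [← sq_abs]
      exact pow_le_pow_left₀ (abs_nonneg _) ((norm_le_pi_norm (A u v) i).trans h1) 2
    rw [en]
    refine Real.sqrt_le_iff.2 ⟨by positivity, ?_⟩
    simp only [Fin.sum_univ_three]
    nlinarith [h2 0, h2 1, h2 2, norm_nonneg L]
  refine ⟨2 * (‖L‖ + 1), by positivity, fun c R hR s hs => ?_⟩
  set C := 2 * (‖L‖ + 1) with hC
  have hC0 : 0 < C := by positivity
  let P : Set ((K →+* ℝ) → Fin 3 → ℝ) := Set.pi Set.univ fun v => {y | en y ≤ R v + C}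
  let U : Set ((K →+* ℝ) → Fin 3 → ℝ) := ⋃ β ∈ s, fl ⁻¹' {coords K (Fin 3) β}
  have hU : volume U = s.card := by
    rw [measure_biUnion_finset]
    · simp [volume_fl_cell]
    · intro β _ β' _ h
      exact Disjoint.preimage _ (by simpa using (coords K (Fin 3)).injective.ne h)
    · exact fun β _ => measurable_fl (measurableSet_singleton _)
  have hsub : U ⊆ A ⁻¹' ((fun y => c + y) ⁻¹' P) := by
    intro u hu
    simp only [U, Set.mem_iUnion, Set.mem_preimage, Set.mem_singleton_iff, exists_prop] at hu
    obtain ⟨β, hβ, hu⟩ := hu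
    intro v _
    have e1 : A (zr (fl u)) = (q : ℝ) • emb (toK β) := by
      rw [hu, emb_eq]; rfl
    have e2 : c v + A u v = (c v + (q : ℝ) • emb (toK β) v) + A (u - zr (fl u)) v := by
      rw [map_sub, e1]; simp [add_assoc]
    change en (c v + A u v) ≤ _
    rw [e2]
    refine (en_add_le _ _).trans (add_le_add (hs β hβ v) (hL _ ?_ v))
    rw [norm_sub_rev]; exact norm_sub_fl u
  have hP : volume P = ENNReal.ofReal (∏ v, (4 * Real.pi / 3 * (R v + C) ^ 3)) := by
    rw [volume_pi_pi, ENNReal.ofReal_prod_of_nonneg]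
    · exact Finset.prod_congr rfl fun v _ => volume_en_le _ (by linarith [hR v])
    · intro v _
      have := hR v
      positivity
  have h1 := measure_mono (μ := volume) hsub
  rw [Measure.addHaar_preimage_linearMap _ hA0, measure_preimage_add, hU, hP, abs_inv, hdet,
    ← ENNReal.ofReal_mul (by positivity), ← ENNReal.ofReal_natCast,
    ENNReal.ofReal_le_ofReal_iff] at h1
  · rwa [inv_mul_eq_div, le_div_iff₀ hDp] at h1
  · refine mul_nonneg (by positivity) (Finset.prod_nonneg fun v _ => ?_)
    have := hR v
    positivity
end
end Siegel

namespace Siegel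
section
variable {K : Type*} [Field K] [NumberField K]

/-- The content ideal of a vector. -/
noncomputable def cont {k : ℕ} (w : Fin k → 𝓞 K) : Ideal (𝓞 K) := Ideal.span (Set.range w)

/-- The index of the image of an injective endomorphism of `𝓞 K⁴` is the norm of its determinant. -/
lemma card_quot_range (T : (Fin 4 → 𝓞 K) →ₗ[𝓞 K] (Fin 4 → 𝓞 K)) (h : LinearMap.det T ≠ 0) :
    Nat.card ((Fin 4 → 𝓞 K) ⧸ LinearMap.range T) =
      Ideal.absNorm (Ideal.span {LinearMap.det T}) := by
  have hinj : Function.Injective T := by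
    rw [← LinearMap.ker_eq_bot, LinearMap.ker_eq_bot']
    intro x hx
    have h1 : (LinearMap.toMatrix' T).mulVec x = 0 := by
      rw [← Matrix.toLin'_apply, Matrix.toLin'_toMatrix', hx]
    by_contra h0
    exact h (by rw [← LinearMap.det_toMatrix', ← Matrix.exists_mulVec_eq_zero_iff]
                exact ⟨x, h0, h1⟩)
  let e : (Fin 4 → 𝓞 K) ≃ₗ[ℤ] (LinearMap.range T).restrictScalars ℤ :=
    (LinearEquiv.ofInjective T hinj).restrictScalars ℤ
  have h1 := Submodule.natAbs_det_equiv ((LinearMap.range T).restrictScalars ℤ) e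
  have h2 : ((LinearMap.range T).restrictScalars ℤ).subtype ∘ₗ AddMonoidHom.toIntLinearMap
      (e : (Fin 4 → 𝓞 K) →+ (LinearMap.range T).restrictScalars ℤ) = T.restrictScalars ℤ := by
    ext; rfl
  rw [h2, LinearMap.det_restrictScalars] at h1
  rw [Ideal.absNorm_span_singleton, h1]
  rfl

namespace Form
variable (f : Form (𝓞 K))

/-- Pairing with a fixed vector. -/
def Blin (w : Fin 4 → 𝓞 K) : (Fin 4 → 𝓞 K) →ₗ[𝓞 K] 𝓞 K where
  toFun z := f.B z w
  map_add' x y := f.B_add x y w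
  map_smul' c x := f.B_smul c x w

/-- The form is unimodular, so the values of the pairing with `w` fill the content ideal. -/
lemma range_Blin (w) : LinearMap.range (f.Blin w) = cont w := by
  refine le_antisymm ?_ ?_
  · rintro _ ⟨z, rfl⟩
    have hm : ∀ i, w i ∈ cont w := fun i => Ideal.subset_span ⟨i, rfl⟩
    have : f.B z w = (f.h * z 0 + f.a * z 2 + f.b * z 3) * w 0
      + (f.h * z 1 - f.b * z 2 + f.a * z 3) * w 1 + (f.a * z 0 - f.b * z 1 + f.al * z 2) * w 2
      + (f.b * z 0 + f.a * z 1 + f.al * z 3) * w 3 := by simp only [B]; ring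
    change f.B z w ∈ _
    rw [this]
    exact add_mem (add_mem (add_mem (Ideal.mul_mem_left _ _ (hm 0)) (Ideal.mul_mem_left _ _ (hm 1)))
      (Ideal.mul_mem_left _ _ (hm 2))) (Ideal.mul_mem_left _ _ (hm 3))
  · refine Ideal.span_le.2 ?_
    rintro _ ⟨i, rfl⟩
    have key : ∀ z, f.B z w = w i → w i ∈ LinearMap.range (f.Blin w) := fun z hz => ⟨z, hz⟩
    have r := f.rel
    fin_cases i
    · refine key ![f.al, 0, -f.a, -f.b] ?_
      simp [B]; linear_combination w 0 * r
    · refine key ![0, f.al, f.b, -f.a] ?_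
      simp [B]; linear_combination w 1 * r
    · refine key ![-f.a, f.b, f.h, 0] ?_
      simp [B]; linear_combination w 2 * r
    · refine key ![-f.b, -f.a, 0, f.h] ?_
      simp [B]; linear_combination w 3 * r

/-- The sublattice spanned by the orthogonal frame of `w`. -/
noncomputable def Fr (w : Fin 4 → 𝓞 K) : (Fin 4 → 𝓞 K) →ₗ[𝓞 K] (Fin 4 → 𝓞 K) :=
  Matrix.toLin' (f.frame w)

lemma Fr_apply (w y) : f.Fr w y = y 0 • w + ∑ k : Fin 3, y k.succ • f.J k w := by
  ext i
  simp [Fr, Matrix.mulVec, dotProduct, Fin.sum_univ_four, Fin.sum_univ_three, frame]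
  ring

/-- Vectors whose pairing with `w` is divisible by `Q w`. -/
noncomputable def Lw (w : Fin 4 → 𝓞 K) : Submodule (𝓞 K) (Fin 4 → 𝓞 K) :=
  Submodule.comap (f.Blin w) (Ideal.span {f.Q w})

/-- The index in `Lw w` of the lattice spanned by the orthogonal frame of `w`: the frame has index
`N(Q w)²` in `𝓞 K⁴`, and `𝓞 K⁴ ⧸ Lw w` is isomorphic to `cont w ⧸ (Q w)`. -/
lemma card_Lw (hal : f.al ≠ 0) (w) (hw : f.Q w ≠ 0) :
    Nat.card ((f.Lw w).map (LinearMap.range (f.Fr w)).mkQ) =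
      Ideal.absNorm (Ideal.span {f.Q w}) * Ideal.absNorm (cont w) := by
  have hdet : LinearMap.det (f.Fr w) = f.Q w ^ 2 := by
    rw [Fr, LinearMap.det_toLin', f.det_frame hal]
  have hc0 : cont w ≠ ⊥ := by
    intro h
    have : w = 0 := by
      ext i
      have : w i ∈ cont w := Ideal.subset_span ⟨i, rfl⟩
      rw [h] at this; simpa using this
    exact hw (by simp [this, Q])
  have hle : LinearMap.range (f.Fr w) ≤ f.Lw w := by
    rintro _ ⟨y, rfl⟩
    change f.Blin w _ ∈ Ideal.span {f.Q w}
    rw [Fr_apply, map_add, map_smul, map_sum]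
    have : ∀ k, f.Blin w (y (Fin.succ k) • f.J k w) = 0 := fun k => by
      rw [map_smul]; change _ • f.B _ _ = _; rw [f.B_J hal, smul_zero]
    simp only [this, Finset.sum_const_zero, add_zero]
    change y 0 • f.B w w ∈ Ideal.span {f.Q w}
    rw [B_self]
    exact Submodule.smul_mem _ _ (Ideal.mem_span_singleton_self _)
  have h1 := Submodule.card_quotient_mul_card_quotient (f.Lw w) _ hle
  rw [card_quot_range _ (by rw [hdet]; exact pow_ne_zero 2 hw), hdet,
    ← Ideal.span_singleton_pow, map_pow] at h1
  have hQc : Ideal.span {f.Q w} ≤ cont w := by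
    rw [Ideal.span_singleton_le_iff_mem, ← f.range_Blin w]
    exact ⟨w, f.B_self w⟩
  have h2 := Submodule.card_quotient_mul_card_quotient (cont w) _ hQc
  have h3 : Nat.card ((Fin 4 → 𝓞 K) ⧸ f.Lw w) =
      Nat.card (Submodule.map (Submodule.mkQ (Ideal.span {f.Q w})) (cont w)) := by
    have e1 : f.Lw w = LinearMap.ker ((Submodule.mkQ (Ideal.span {f.Q w})).comp (f.Blin w)) := by
      rw [LinearMap.ker_comp, Submodule.ker_mkQ]; rfl
    have e2 : Submodule.map (Submodule.mkQ (Ideal.span {f.Q w})) (cont w) =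
      LinearMap.range ((Submodule.mkQ (Ideal.span {f.Q w})).comp (f.Blin w)) := by
      rw [LinearMap.range_comp, f.range_Blin w]
    rw [e1, e2]
    exact Nat.card_congr (LinearMap.quotKerEquivRange _).toEquiv
  rw [h3] at h1
  have h4 : Nat.card (Submodule.map (Submodule.mkQ (Ideal.span {f.Q w})) (cont w)) * Ideal.absNorm (cont w) =
      Ideal.absNorm (Ideal.span {f.Q w}) := h2
  have hN : Ideal.absNorm (Ideal.span {f.Q w}) ≠ 0 := by
    rw [Ne, Ideal.absNorm_eq_zero_iff, Ideal.span_singleton_eq_bot]; exact hw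
  have hm : Nat.card (Submodule.map (Submodule.mkQ (Ideal.span {f.Q w})) (cont w)) ≠ 0 := by
    intro h; rw [h, zero_mul] at h4; exact hN h4.symm
  refine Nat.eq_of_mul_eq_mul_right (Nat.pos_of_ne_zero hm) ?_
  rw [h1, pow_two, mul_assoc, mul_comm (Ideal.absNorm (cont w)), h4]
end Form
end
end Siegel

namespace Siegel
section
variable {K : Type*} [Field K] [NumberField K] [IsTotallyReal K]

/-- A real embedding restricted to the ring of integers. -/
noncomputable abbrev σO (v : K →+* ℝ) : 𝓞 K →+* ℝ := v.comp (algebraMap (𝓞 K) K)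

lemma σO_injective (v : K →+* ℝ) : Function.Injective (σO v) :=
  v.injective.comp RingOfIntegers.coe_injective

lemma absNorm_span (x : 𝓞 K) :
    (Ideal.absNorm (Ideal.span {x}) : ℝ) = ∏ v : K →+* ℝ, |σO v x| := by
  rw [Ideal.absNorm_span_singleton, Nat.cast_natAbs, Int.cast_abs, ← Finset.abs_prod]
  have h := norm_eq_prod (x : K)
  have h2 : ∏ v : K →+* ℝ, σO v x = ∏ v : K →+* ℝ, v (x : K) := rfl
  rw [h2, ← h, ← Algebra.coe_norm_int]
  simp

namespace Form
variable (f : Form (𝓞 K))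

/-- The real form at a place. -/
noncomputable abbrev at_ (v : K →+* ℝ) : Form ℝ := f.map (σO v)

lemma σ_Q_pos (hal : ∀ v : K →+* ℝ, 0 < σO v f.al) (v : K →+* ℝ) {w : Fin 4 → 𝓞 K} (hw : w ≠ 0) :
    0 < σO v (f.Q w) := by
  have h1 := (f.at_ v).Q_nonneg (hal v) (fun j => σO v (w j))
  rw [map_Q] at h1
  refine lt_of_le_of_ne h1 fun h => hw ?_
  have := (f.at_ v).Q_eq_zero (hal v) (y := fun j => σO v (w j)) (by rw [map_Q]; exact h.symm)
  ext j
  have hj := congrFun this j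
  have : w j = 0 := σO_injective v (by simpa using hj)
  rw [this]; rfl

variable (K) in
/-- Points of a coset of `q O⁴` of bounded norm in the hyperplane `2 B x w + N Q w = 0`. -/
lemma slice (q : ℕ) (hq : 0 < q) : ∃ C : ℝ, 0 < C ∧ ∀ (f : Form (𝓞 K)),
    (∀ v : K →+* ℝ, 0 < σO v f.al) → ∀ (w x0 : Fin 4 → 𝓞 K), w ≠ 0 → ∀ (N : ℕ) (V : ℝ)
    (s : Finset (Fin 4 → 𝓞 K)),
    (∀ z ∈ s, 2 * f.B (x0 + (q : 𝓞 K) • z) w + (N : 𝓞 K) * f.Q w = 0 ∧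
      ∀ v : K →+* ℝ, σO v (f.Q (x0 + (q : 𝓞 K) • z)) ≤ V ^ 2) →
    (s.card : ℝ) * ((q : ℝ) ^ (3 * Fintype.card (K →+* ℝ)) * D K ^ 3) ≤
      (Ideal.absNorm (Ideal.span {f.Q w}) * Ideal.absNorm (cont w)) *
      ∏ v : K →+* ℝ, (4 * Real.pi / 3 * (√(V ^ 2 / σO v (f.Q w) - (N : ℝ) ^ 2 / 4) + C) ^ 3) := by
  classical
  obtain ⟨C, hC0, hC⟩ := ball_count K q hq
  refine ⟨C, hC0, fun f hal w x0 hw N V s hs => ?_⟩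
  have hal0 : f.al ≠ 0 := by
    intro h
    have := hal (Classical.arbitrary _)
    simp [h] at this
  have hQ0 : f.Q w ≠ 0 := by
    intro h
    have := f.σ_Q_pos hal (Classical.arbitrary _) hw
    simp [h] at this
  set P := ∏ v : K →+* ℝ,
    (4 * Real.pi / 3 * (√(V ^ 2 / σO v (f.Q w) - (N : ℝ) ^ 2 / 4) + C) ^ 3) with hP
  have hP0 : 0 ≤ P := Finset.prod_nonneg fun v _ => by positivity
  have hDp : 0 < (q : ℝ) ^ (3 * Fintype.card (K →+* ℝ)) * D K ^ 3 := by
    have := D_pos K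
    have : (0 : ℝ) < q := by exact_mod_cast hq
    positivity
  rcases s.eq_empty_or_nonempty with rfl | ⟨z1, hz1⟩
  · simp only [Finset.card_empty, Nat.cast_zero, zero_mul]; positivity
  -- sort the points by their class modulo the lattice spanned by the frame of `w`; within a class they
  -- differ by integral combinations of the `J k w`, which form a copy of `𝓞 K ^ 3`
  let g : (Fin 4 → 𝓞 K) → (Fin 4 → 𝓞 K) ⧸ LinearMap.range (f.Fr w) := fun z =>
    (LinearMap.range (f.Fr w)).mkQ (z - z1)
  have hBd : ∀ z ∈ s, ∀ z' ∈ s, f.B (z - z') w = 0 := by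
    intro z hz z' hz'
    have h1 := (hs z hz).1
    have h2 := (hs z' hz').1
    rw [f.B_add, f.B_smul] at h1 h2
    have h3 : (2 * (q : 𝓞 K)) * (f.B (z - z') w) = 0 := by
      rw [f.B_sub]; linear_combination h1 - h2
    refine (mul_eq_zero.1 h3).resolve_left ?_
    have : (q : 𝓞 K) ≠ 0 := by exact_mod_cast hq.ne'
    simp [this]
  have himg : (s.image g).card ≤
      Ideal.absNorm (Ideal.span {f.Q w}) * Ideal.absNorm (cont w) := by
    rw [← f.card_Lw hal0 w hQ0]
    have hsub : ((s.image g : Finset _) : Set ((Fin 4 → 𝓞 K) ⧸ LinearMap.range (f.Fr w))) ⊆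
        SetLike.coe ((f.Lw w).map (LinearMap.range (f.Fr w)).mkQ) := by
      intro y hy
      simp only [Finset.coe_image, Set.mem_image, Finset.mem_coe] at hy
      obtain ⟨z, hz, rfl⟩ := hy
      refine ⟨z - z1, ?_, rfl⟩
      change f.B (z - z1) w ∈ Ideal.span {f.Q w}
      rw [hBd z hz z1 hz1]; exact zero_mem _
    have hfin : Finite ((f.Lw w).map (LinearMap.range (f.Fr w)).mkQ) := by
      refine Nat.finite_of_card_ne_zero ?_
      rw [f.card_Lw hal0 w hQ0]
      refine mul_ne_zero ?_ ?_
      · rw [Ne, Ideal.absNorm_eq_zero_iff, Ideal.span_singleton_eq_bot]; exact hQ0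
      · rw [Ne, Ideal.absNorm_eq_zero_iff]
        intro h
        refine hw (funext fun i => ?_)
        have : w i ∈ cont w := Ideal.subset_span ⟨i, rfl⟩
        rw [h] at this; simpa using this
    calc (s.image g).card = Set.ncard ((s.image g : Finset _) : Set _) := (Set.ncard_coe_finset _).symm
      _ ≤ Set.ncard (SetLike.coe ((f.Lw w).map (LinearMap.range (f.Fr w)).mkQ)) :=
          Set.ncard_le_ncard hsub (Set.toFinite _)
      _ = _ := (Nat.card_coe_set_eq _).symm
  have hfib : ∀ y ∈ s.image g, ((s.filter (fun z => g z = y)).card : ℝ) *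
      ((q : ℝ) ^ (3 * Fintype.card (K →+* ℝ)) * D K ^ 3) ≤ P := by
    intro y hy
    obtain ⟨z2, hz2, rfl⟩ := Finset.mem_image.1 hy
    have hex : ∀ z ∈ s.filter (fun z => g z = g z2), ∃ β : Fin 3 → 𝓞 K,
        z = z2 + ∑ k, β k • f.J k w := by
      intro z hz
      obtain ⟨hz, hzg⟩ := Finset.mem_filter.1 hz
      have h1 : z - z2 ∈ LinearMap.range (f.Fr w) := by
        have h2 : (LinearMap.range (f.Fr w)).mkQ ((z - z1) - (z2 - z1)) = 0 := by
          rw [map_sub]; exact sub_eq_zero.2 hzg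
        rw [← Submodule.ker_mkQ (LinearMap.range (f.Fr w)), LinearMap.mem_ker]
        simpa using h2
      obtain ⟨β, hβ⟩ := h1
      rw [Fr_apply] at hβ
      have h3 : f.Blin w (z - z2) = β 0 * f.Q w := by
        rw [← hβ, map_add, map_smul, map_sum]
        have : ∀ k, f.Blin w (β (Fin.succ k) • f.J k w) = 0 := fun k => by
          rw [map_smul]; change _ • f.B _ _ = _; rw [f.B_J hal0, smul_zero]
        simp only [this, Finset.sum_const_zero, add_zero]
        change β 0 * f.B w w = _
        rw [f.B_self]
      have h4 : β 0 = 0 := by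
        have h5 : f.B (z - z2) w = β 0 * f.Q w := h3
        rw [hBd z hz z2 hz2] at h5
        exact (mul_eq_zero.1 h5.symm).resolve_right hQ0
      refine ⟨fun k => β k.succ, ?_⟩
      rw [h4, zero_smul, zero_add] at hβ
      rw [hβ]; abel
    choose! β hβ using hex
    have hinj : Set.InjOn β (s.filter (fun z => g z = g z2) : Finset _) := by
      intro z hz z' hz' h
      rw [hβ z hz, hβ z' hz', h]
    rw [← Finset.card_image_of_injOn hinj]
    refine hC (fun v k => σO v (f.B (x0 + (q : 𝓞 K) • z2) (f.J k w)) / σO v (f.Q w))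
      (fun v => √(V ^ 2 / σO v (f.Q w) - (N : ℝ) ^ 2 / 4)) (fun v => Real.sqrt_nonneg _) _ ?_
    intro b hb v
    obtain ⟨z, hz, rfl⟩ := Finset.mem_image.1 hb
    have hzs := (Finset.mem_filter.1 hz).1
    have hQp := f.σ_Q_pos hal v hw
    have hcoord : ∀ k, (σO v (f.B (x0 + (q : 𝓞 K) • z2) (f.J k w)) / σO v (f.Q w)) +
        (q : ℝ) * σO v (β z k) =
        σO v (f.B (x0 + (q : 𝓞 K) • z) (f.J k w)) / σO v (f.Q w) := by
      intro k
      have h1 : f.B (x0 + (q : 𝓞 K) • z) (f.J k w) =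
          f.B (x0 + (q : 𝓞 K) • z2) (f.J k w) + q * β z k * f.Q w := by
        have h2 : f.Blin (f.J k w) z = f.Blin (f.J k w) z2 + β z k * f.Q w := by
          conv_lhs => rw [hβ z hz]
          rw [map_add, map_sum]
          congr 1
          have : ∀ l, f.Blin (f.J k w) (β z l • f.J l w) = if l = k then β z k * f.Q w else 0 := by
            intro l
            rw [map_smul]; change β z l * f.B _ _ = _
            rw [f.B_J_J hal0]
            split_ifs with h
            · rw [h]
            · rw [mul_zero]
          simp [this]
        change f.B z _ = f.B z2 _ + _ at h2
        rw [f.B_add, f.B_add, f.B_smul, f.B_smul, h2]; ring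
      rw [h1, map_add, map_mul, map_mul, map_natCast]
      field_simp
    have hen : en ((fun k => σO v (f.B (x0 + (q : 𝓞 K) • z2) (f.J k w)) / σO v (f.Q w)) +
        (q : ℝ) • emb (toK (β z)) v) =
        en (fun k => σO v (f.B (x0 + (q : 𝓞 K) • z) (f.J k w)) / σO v (f.Q w)) := by
      congr 1
      ext k
      exact hcoord k
    rw [hen, en]
    refine Real.sqrt_le_sqrt ?_
    -- on the hyperplane the component along `w` is fixed, and Euler's identity gives the radius of the slice
    have he := congrArg (σO v) (f.euler hal0 (x0 + (q : 𝓞 K) • z) w)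
    have hB : 2 * σO v (f.B (x0 + (q : 𝓞 K) • z) w) + N * σO v (f.Q w) = 0 := by
      have := congrArg (σO v) (hs z hzs).1
      rw [map_add, map_mul, map_mul, map_ofNat, map_natCast, map_zero] at this
      exact this
    have hV := (hs z hzs).2 v
    simp only [map_add, map_mul, map_sum, map_pow] at he
    simp only [div_pow, ← Finset.sum_div]
    set Qw := σO v (f.Q w)
    set Bx := σO v (f.B (x0 + (q : 𝓞 K) • z) w)
    have hBx : Bx = -(N * Qw) / 2 := by linarith
    have hsum : ∑ k, σO v (f.B (x0 + (q : 𝓞 K) • z) (f.J k w)) ^ 2 =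
        Qw * σO v (f.Q (x0 + (q : 𝓞 K) • z)) - (N * Qw) ^ 2 / 4 := by
      rw [hBx] at he; linarith
    rw [hsum, div_le_iff₀ (by positivity)]
    have : (V ^ 2 / Qw - (N : ℝ) ^ 2 / 4) * Qw ^ 2 = Qw * V ^ 2 - (N * Qw) ^ 2 / 4 := by
      field_simp
    rw [this]
    nlinarith
  have h1 : (s.card : ℝ) = ∑ y ∈ s.image g, ((s.filter (fun z => g z = y)).card : ℝ) := by
    rw [← Nat.cast_sum]; congr 1
    exact Finset.card_eq_sum_card_image g s
  rw [h1, Finset.sum_mul]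
  calc _ ≤ ∑ y ∈ s.image g, P := Finset.sum_le_sum hfib
    _ = (s.image g).card * P := by simp
    _ ≤ _ := by
      gcongr
      exact_mod_cast himg
end Form
end
end Siegel

/-! ### Equidistribution in sublattices -/

namespace Siegel
section
variable {K : Type*} [Field K] [NumberField K] [IsTotallyReal K]

lemma absNorm_natCast (M : ℕ) : Ideal.absNorm (Ideal.span {(M : 𝓞 K)}) =
    M ^ Fintype.card (K →+* ℝ) := by
  have h := absNorm_span (M : 𝓞 K)
  simp only [map_natCast, Nat.abs_cast, Finset.prod_const, Finset.card_univ] at h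
  exact_mod_cast h

lemma cont_ne_bot {k : ℕ} {w : Fin k → 𝓞 K} (hw : w ≠ 0) : cont w ≠ ⊥ := by
  intro h
  refine hw (funext fun i => ?_)
  have : w i ∈ cont w := Ideal.subset_span ⟨i, rfl⟩
  rw [h] at this; simpa using this

/-- The sublattice `M O⁴`. -/
noncomputable def dil (K : Type*) [Field K] (M : ℕ) : Submodule (𝓞 K) (Fin 4 → 𝓞 K) :=
  LinearMap.range ((M : 𝓞 K) • (LinearMap.id : (Fin 4 → 𝓞 K) →ₗ[𝓞 K] (Fin 4 → 𝓞 K)))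

lemma mem_dil {M : ℕ} {x : Fin 4 → 𝓞 K} : x ∈ dil K M ↔ ∃ y : Fin 4 → 𝓞 K, (M : 𝓞 K) • y = x :=
  Iff.rfl

lemma card_dil (M : ℕ) (hM : 0 < M) : Nat.card ((Fin 4 → 𝓞 K) ⧸ dil K M) =
    M ^ (4 * Fintype.card (K →+* ℝ)) := by
  have hdet : LinearMap.det ((M : 𝓞 K) • (LinearMap.id : (Fin 4 → 𝓞 K) →ₗ[𝓞 K] (Fin 4 → 𝓞 K))) =
      (M : 𝓞 K) ^ 4 := by
    rw [LinearMap.det_smul, LinearMap.det_id]; simp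
  rw [dil, card_quot_range _ (by rw [hdet]; exact pow_ne_zero _ (by exact_mod_cast hM.ne')), hdet,
    ← Ideal.span_singleton_pow, map_pow, absNorm_natCast, ← pow_mul, mul_comm]

lemma finite_dil (M : ℕ) (hM : 0 < M) : Finite ((Fin 4 → 𝓞 K) ⧸ dil K M) :=
  Nat.finite_of_card_ne_zero (by rw [card_dil M hM]; positivity)

namespace Form
variable (f : Form (𝓞 K))

/-- Euclidean coordinates of an integral vector at all real places. -/
noncomputable def P : (Fin 4 → 𝓞 K) →+ ((K →+* ℝ) → Fin 4 → ℝ) where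
  toFun w v := (f.at_ v).ψ (fun j => σO v (w j))
  map_zero' := by
    funext v
    have : (fun j : Fin 4 => σO v ((0 : Fin 4 → 𝓞 K) j)) = 0 := by ext; simp
    rw [this, map_zero]; rfl
  map_add' x y := by
    funext v
    have : (fun j : Fin 4 => σO v ((x + y) j)) =
      (fun j => σO v (x j)) + (fun j => σO v (y j)) := by ext; simp
    rw [this, map_add]; rfl

/-- The size of `w` at the place `v`. -/
noncomputable def nv (v : K →+* ℝ) (w : Fin 4 → 𝓞 K) : ℝ := en (f.P w v)

variable (hal : ∀ v : K →+* ℝ, 0 < σO v f.al)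
include hal

lemma nv_eq (v : K →+* ℝ) (w) : f.nv v w = √(σO v (f.Q w)) := by
  rw [nv]; change en ((f.at_ v).ψ _) = _
  rw [en_ψ _ (hal v), map_Q]

lemma nv_pos (v : K →+* ℝ) {w : Fin 4 → 𝓞 K} (hw : w ≠ 0) : 0 < f.nv v w := by
  rw [f.nv_eq hal]; exact Real.sqrt_pos.2 (f.σ_Q_pos hal v hw)

lemma nv_sq (v : K →+* ℝ) (w) : f.nv v w ^ 2 = σO v (f.Q w) := by
  rw [f.nv_eq hal, Real.sq_sqrt]
  have h := (f.at_ v).Q_nonneg (hal v) (fun j => σO v (w j))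
  rwa [map_Q] at h

lemma absNorm_Q (w) : (Ideal.absNorm (Ideal.span {f.Q w}) : ℝ) = (∏ v : K →+* ℝ, f.nv v w) ^ 2 := by
  rw [absNorm_span, ← Finset.prod_pow]
  refine Finset.prod_congr rfl fun v _ => ?_
  rw [← f.nv_sq hal, abs_of_nonneg (sq_nonneg _)]

/-- The product of the sizes is at least the norm of any ideal containing the coordinates. -/
lemma absNorm_le_prod (I : Ideal (𝓞 K)) {w : Fin 4 → 𝓞 K} (hw : w ≠ 0) (hI : ∀ i, w i ∈ I) :
    (Ideal.absNorm I : ℝ) ≤ ∏ v : K →+* ℝ, f.nv v w := by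
  have h0 : 0 ≤ ∏ v : K →+* ℝ, f.nv v w :=
    Finset.prod_nonneg fun v _ => (f.nv_pos hal v hw).le
  refine le_of_sq_le_sq ?_ h0
  rw [← f.absNorm_Q hal]
  have hmem : f.Q w ∈ I ^ 2 := by
    have hm : ∀ i j, w i * w j ∈ I ^ 2 := fun i j => by
      rw [pow_two]; exact Ideal.mul_mem_mul (hI i) (hI j)
    have : f.Q w = f.h * (w 0 * w 0) + f.h * (w 1 * w 1) + 2 * f.a * (w 0 * w 2)
      - 2 * f.b * (w 1 * w 2) + 2 * f.b * (w 0 * w 3) + 2 * f.a * (w 1 * w 3)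
      + f.al * (w 2 * w 2) + f.al * (w 3 * w 3) := by simp only [Q]; ring
    rw [this]
    refine add_mem (add_mem (add_mem (add_mem (sub_mem (add_mem (add_mem ?_ ?_) ?_) ?_) ?_) ?_) ?_) ?_
      <;> exact Ideal.mul_mem_left _ _ (hm _ _)
  have hd : Ideal.absNorm (I ^ 2) ∣ Ideal.absNorm (Ideal.span {f.Q w}) :=
    Ideal.absNorm_dvd_absNorm_of_le ((Ideal.span_singleton_le_iff_mem _).2 hmem)
  rw [map_pow] at hd
  have hQ : Ideal.absNorm (Ideal.span {f.Q w}) ≠ 0 := by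
    rw [Ne, Ideal.absNorm_eq_zero_iff, Ideal.span_singleton_eq_bot]
    intro h
    have := f.σ_Q_pos hal (Classical.arbitrary _) hw
    simp [h] at this
  exact_mod_cast Nat.le_of_dvd (Nat.pos_of_ne_zero hQ) hd

lemma one_le_prod {w : Fin 4 → 𝓞 K} (hw : w ≠ 0) : 1 ≤ ∏ v : K →+* ℝ, f.nv v w := by
  have := f.absNorm_le_prod hal ⊤ hw (by simp)
  simpa using this

lemma finite_ball (r : ℝ) : {w : Fin 4 → 𝓞 K | ∀ v : K →+* ℝ, f.nv v w ≤ r}.Finite := by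
  by_contra h
  have h1 : ({w : Fin 4 → 𝓞 K | ∀ v : K →+* ℝ, f.nv v w ≤ r} \ {0}).Infinite :=
    Set.Infinite.sdiff h (Set.finite_singleton _)
  obtain ⟨m, hm⟩ := exists_nat_gt
    ((6 : ℝ) ^ (4 * Fintype.card (K →+* ℝ)) * ((∏ v : K →+* ℝ, r) / 1) ^ 4)
  obtain ⟨s, hs, hc⟩ := h1.exists_subset_card_eq m
  have h2 := box_count f.P ⊤ 1 one_pos (fun w _ hw => f.one_le_prod hal hw) (fun _ => r) s
    (fun w hw => ⟨trivial, (hs hw).2, (hs hw).1⟩)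
  rw [hc] at h2
  linarith

/-- Equidistribution of the points of a sublattice, as an upper bound. -/
lemma riemann_W (G : (Fin 4 → ℝ) → ℝ) (C : ℝ) (h0 : ∀ u, 0 ≤ G u) (hC : ∀ u, |G u| ≤ C)
    (hB : ∀ u, 1 < en u → G u = 0) (hG : Measurable G) (hc : ∀ᵐ u, ContinuousAt G u)
    (W : Submodule (𝓞 K) (Fin 4 → 𝓞 K)) (M : ℕ) (hM : 0 < M) (hW : dil K M ≤ W)
    (δ : ℝ) (hδ : 0 < δ) :
    ∀ᶠ t : ℝ in atTop, ∀ s : Finset (Fin 4 → 𝓞 K), (∀ w ∈ s, w ∈ W) →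
      ∑ w ∈ s, ∏ v : K →+* ℝ, G (t⁻¹ • f.P w v) ≤
      ((∫ u, G u) ^ Fintype.card (K →+* ℝ) / (D K ^ 4 * Nat.card ((Fin 4 → 𝓞 K) ⧸ W)) + δ) *
        t ^ (Fintype.card (K →+* ℝ) * 4) := by
  classical
  have := finite_dil (K := K) M hM
  have : Fintype (W.map (dil K M).mkQ) := Fintype.ofFinite _
  have hD := D_pos K
  set n := Fintype.card (K →+* ℝ) with hn
  let F : ℝ → (Fin 4 → 𝓞 K) → ℝ := fun t w => ∏ v : K →+* ℝ, G (t⁻¹ • f.P w v)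
  have hF0 : ∀ t w, 0 ≤ F t w := fun t w => Finset.prod_nonneg fun v _ => h0 _
  let rep : (Fin 4 → 𝓞 K) ⧸ dil K M → (Fin 4 → 𝓞 K) := fun z => Quotient.out z
  have hrep : ∀ z, (dil K M).mkQ (rep z) = z := fun z => Quotient.out_eq z
  have hlim : Tendsto (fun t : ℝ => ∑ z : W.map (dil K M).mkQ,
      (∑' y, F t (rep z + M • y)) / t ^ (n * 4)) atTop
      (𝓝 (∑ z : W.map (dil K M).mkQ, (∫ u, G u) ^ n / (D K ^ 4 * (M : ℝ) ^ (n * 4)))) := by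
    refine tendsto_finsetSum _ fun z _ => ?_
    have h := riemann_prod (K := K) (κ := Fin 4) (fun v => (f.at_ v).ψ)
      (fun v => by rw [det_ψ _ (hal v), abs_one]) G C 2 (by norm_num) hC
      (fun u hu => ?_) hG hc (rep z) M hM
    · rw [Fintype.card_fin] at h
      exact h
    · by_contra hne
      have h2 : en u ≤ 1 := not_lt.1 fun h => hne (hB u h)
      have := norm_le_en u
      linarith
  have hval : ∑ z : W.map (dil K M).mkQ, (∫ u, G u) ^ n / (D K ^ 4 * (M : ℝ) ^ (n * 4)) =
      (∫ u, G u) ^ n / (D K ^ 4 * Nat.card ((Fin 4 → 𝓞 K) ⧸ W)) := by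
    have h1 := Submodule.card_quotient_mul_card_quotient W _ hW
    rw [card_dil M hM, Nat.card_eq_fintype_card (α := W.map (dil K M).mkQ)] at h1
    have hM' : (M : ℝ) ^ (n * 4) ≠ 0 := by positivity
    have h2 : ((Fintype.card (W.map (dil K M).mkQ) : ℕ) : ℝ) * Nat.card ((Fin 4 → 𝓞 K) ⧸ W) =
        (M : ℝ) ^ (n * 4) := by
      rw [mul_comm n 4]; exact_mod_cast h1
    have h3 : (Nat.card ((Fin 4 → 𝓞 K) ⧸ W) : ℝ) ≠ 0 := by
      intro h; rw [h, mul_zero] at h2; exact hM' h2.symm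
    rw [Finset.sum_const, Finset.card_univ, nsmul_eq_mul]
    rw [mul_div_assoc', div_eq_div_iff (by positivity) (by positivity), ← h2]
    ring
  rw [hval] at hlim
  filter_upwards [hlim.eventually (gt_mem_nhds (lt_add_of_pos_right _ hδ)), eventually_gt_atTop 0]
    with t ht ht0 s hs
  have hfin : {w : Fin 4 → 𝓞 K | F t w ≠ 0}.Finite := by
    refine (f.finite_ball hal t).subset fun w hw v => ?_
    by_contra hv
    refine (Finset.prod_ne_zero_iff.1 hw) v (Finset.mem_univ _) (hB _ ?_)
    rw [en_smul, abs_of_pos (by positivity), inv_mul_eq_div, one_lt_div ht0]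
    exact not_le.1 hv
  have hinj : ∀ z, Function.Injective fun y : Fin 4 → 𝓞 K => rep z + M • y := fun z y y' h => by
    have := add_left_cancel h
    ext i
    have hi := congrFun this i
    simp only [Pi.smul_apply, nsmul_eq_mul] at hi
    rw [mul_left_cancel₀ (by exact_mod_cast hM.ne') hi]
  have hsum : ∀ z, Summable fun y => F t (rep z + M • y) := fun z =>
    summable_of_hasFiniteSupport (hfin.preimage (hinj z).injOn)
  rw [← Finset.sum_div, div_lt_iff₀ (by positivity)] at ht
  refine le_trans ?_ ht.le
  have hmaps : ∀ w ∈ s, (dil K M).mkQ w ∈ W.map (dil K M).mkQ := fun w hw => ⟨w, hs w hw, rfl⟩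
  have h1 : ∑ w ∈ s, F t w =
      ∑ z : W.map (dil K M).mkQ, ∑ w ∈ s.filter (fun w => (dil K M).mkQ w = z), F t w := by
    rw [← Finset.sum_fiberwise_of_maps_to (s := s)
      (t := Finset.univ.image (Subtype.val : W.map (dil K M).mkQ → _))
      (g := (dil K M).mkQ) (fun w hw => by simpa using hmaps w hw),
      Finset.sum_image (fun a _ b _ h => Subtype.ext h)]
  change ∑ w ∈ s, F t w ≤ _
  rw [h1]
  refine Finset.sum_le_sum fun z _ => ?_
  have hex : ∀ w ∈ s.filter (fun w => (dil K M).mkQ w = z), ∃ y : Fin 4 → 𝓞 K,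
      rep z + M • y = w := by
    intro w hw
    have hz := (Finset.mem_filter.1 hw).2
    have : w - rep z ∈ dil K M := by
      have h2 : (dil K M).mkQ (w - rep z) = 0 := by rw [map_sub, hz, hrep, sub_self]
      exact (Submodule.Quotient.mk_eq_zero _).1 h2
    obtain ⟨y, hy⟩ := mem_dil.1 this
    refine ⟨y, ?_⟩
    rw [← Nat.cast_smul_eq_nsmul (𝓞 K), hy]; abel
  choose! Y hY using hex
  calc ∑ w ∈ s.filter (fun w => (dil K M).mkQ w = z), F t w
      = ∑ w ∈ s.filter (fun w => (dil K M).mkQ w = z), F t (rep z + M • Y w) :=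
        Finset.sum_congr rfl fun w hw => by rw [hY w hw]
    _ = ∑ y ∈ (s.filter (fun w => (dil K M).mkQ w = z)).image Y, F t (rep z + M • y) := by
        rw [Finset.sum_image]
        intro w hw w' hw' h
        rw [← hY w hw, h, hY w' hw']
    _ ≤ _ := (hsum z).sum_le_tsum _ fun y _ => hF0 _ _
end Form
end
end Siegel

/-! ### Zeta sums and content ideals -/

namespace Siegel
section
variable {K : Type*} [Field K] [NumberField K]

variable (K) in
/-- Convergence of the Dedekind zeta series at `3`, from the linear growth of the number of ideals of
bounded norm. -/
lemma summable_ideals : Summable fun I : Ideal (𝓞 K) => ((Ideal.absNorm I : ℝ) ^ 3)⁻¹ := by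
  classical
  set a : ℕ → ℝ := fun n => (Nat.card {I : Ideal (𝓞 K) // Ideal.absNorm I = n} : ℝ) with ha
  have hlim := (Ideal.tendsto_norm_le_div_atTop K).comp (tendsto_natCast_atTop_atTop (R := ℝ))
  have hO : (fun n : ℕ => ∑ k ∈ Finset.Icc 1 n, a k) =O[atTop] fun n => (n : ℝ) ^ (1 : ℝ) := by
    have h1 := hlim.isBigO_one ℝ
    have h2 : (fun n : ℕ => ∑ k ∈ Finset.Icc 1 n, a k) =O[atTop]
        fun n : ℕ => (Nat.card {I : Ideal (𝓞 K) // Ideal.absNorm I ≤ (n : ℝ)} : ℝ) := by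
      refine Asymptotics.IsBigO.of_bound 1 (Eventually.of_forall fun n => ?_)
      have e : ∑ k ∈ Finset.Icc 1 n, Nat.card {I : Ideal (𝓞 K) // Ideal.absNorm I = k} ≤
          Nat.card {I : Ideal (𝓞 K) // Ideal.absNorm I ≤ (n : ℝ)} := by
        have h3 := Finset.card_preimage_eq_sum_card_image_eq (f := fun I : Ideal (𝓞 K) =>
          Ideal.absNorm I) (s := Finset.Icc 1 n) (fun k _ => Ideal.finite_setOfPred_absNorm_eq k)
        rw [← h3]
        have h4 : {I : Ideal (𝓞 K) | Ideal.absNorm I ≤ (n : ℝ)}.Finite := by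
          simpa using Ideal.finite_setOfPred_absNorm_le (S := 𝓞 K) n
        have := h4.to_subtype
        refine Nat.card_mono h4 ?_
        intro I hI
        have : Ideal.absNorm I ∈ Finset.Icc 1 n := by simpa using hI
        have := (Finset.mem_Icc.1 this).2
        change (Ideal.absNorm I : ℝ) ≤ n
        exact_mod_cast this
      rw [Real.norm_of_nonneg (Finset.sum_nonneg fun _ _ => Nat.cast_nonneg _),
        Real.norm_of_nonneg (Nat.cast_nonneg _), one_mul]
      exact_mod_cast e
    refine h2.trans ?_
    have h5 : (fun n : ℕ => (Nat.card {I : Ideal (𝓞 K) // Ideal.absNorm I ≤ (n : ℝ)} : ℝ) / n *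
        n) =O[atTop] fun n : ℕ => (1 : ℝ) * (n : ℝ) := h1.mul (Asymptotics.isBigO_refl _ _)
    refine (h5.congr' ?_ ?_)
    · filter_upwards [eventually_gt_atTop 0] with n hn
      have : (n : ℝ) ≠ 0 := by exact_mod_cast hn.ne'
      field_simp
    · exact Eventually.of_forall fun n => by simp
  have hS := LSeriesSummable_of_sum_norm_bigO_and_nonneg (s := 3) hO (fun n => Nat.cast_nonneg _)
    zero_le_one (by norm_num)
  have hS2 : Summable fun n : ℕ => a n * ((n : ℝ) ^ 3)⁻¹ := by
    refine (summable_norm_iff.2 hS).congr_cofinite ?_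
    rw [EventuallyEq, Nat.cofinite_eq_atTop]
    filter_upwards [eventually_gt_atTop 0] with n hn
    rw [LSeries.term_of_ne_zero hn.ne']
    have : ((n : ℂ) ^ (3 : ℂ)) = (n : ℂ) ^ 3 := by
      rw [show (3 : ℂ) = ((3 : ℕ) : ℂ) by norm_num, Complex.cpow_natCast]
    rw [this, norm_div, norm_pow, Complex.norm_natCast, Complex.norm_real,
      Real.norm_of_nonneg (Nat.cast_nonneg _), div_eq_mul_inv]
  refine summable_of_sum_le (c := ∑' n, a n * ((n : ℝ) ^ 3)⁻¹) (fun I => by positivity) fun u => ?_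
  rw [← Finset.sum_fiberwise_of_maps_to (s := u) (t := u.image fun I => Ideal.absNorm I)
    (g := fun I => Ideal.absNorm I) (fun I hI => Finset.mem_image_of_mem _ hI)]
  refine le_trans (Finset.sum_le_sum (g := fun n => a n * ((n : ℝ) ^ 3)⁻¹) fun n _ => ?_)
    (hS2.sum_le_tsum _ fun n _ => by positivity)
  rw [Finset.sum_congr rfl (g := fun _ => ((n : ℝ) ^ 3)⁻¹) (fun I hI => by
    rw [(Finset.mem_filter.1 hI).2]), Finset.sum_const, nsmul_eq_mul]
  gcongr
  rw [ha]
  have hf : {I : Ideal (𝓞 K) | Ideal.absNorm I = n}.Finite :=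
    Ideal.finite_setOfPred_absNorm_eq n
  have h6 : ((u.filter fun I => Ideal.absNorm I = n : Finset _) : Set (Ideal (𝓞 K))) ⊆
      {I : Ideal (𝓞 K) | Ideal.absNorm I = n} := fun I hI => by
    simpa using (Finset.mem_filter.1 hI).2
  have h7 := Set.ncard_le_ncard h6 hf
  rw [Set.ncard_coe_finset] at h7
  exact Nat.cast_le.2 h7

variable (K) in
/-- The ideals of large norm contribute arbitrarily little to the zeta series at `3`. -/
lemma ideal_tail (η : ℝ) (hη : 0 < η) : ∃ Y : ℕ, ∀ s : Finset (Ideal (𝓞 K)),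
    (∀ I ∈ s, Y < Ideal.absNorm I) → ∑ I ∈ s, ((Ideal.absNorm I : ℝ) ^ 3)⁻¹ < η := by
  classical
  obtain ⟨s0, hs0⟩ := summable_iff_vanishing_norm.1 (summable_ideals K) η hη
  refine ⟨s0.sup fun I => Ideal.absNorm I, fun s hs => ?_⟩
  have := hs0 s (Finset.disjoint_left.2 fun I hI hI0 =>
    (hs I hI).not_ge (Finset.le_sup (f := fun I => Ideal.absNorm I) hI0))
  exact (le_abs_self _).trans_lt this

variable (K) in
/-- The partial sums of the zeta series at `3` over the ideals of norm coprime to `q` are at most `4 / 3`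
once `q` is divisible by all small primes. -/
lemma zeta_coprime : ∃ P : ℕ, ∀ q : ℕ, P.factorial ∣ q → ∀ s : Finset (Ideal (𝓞 K)),
    (∀ I ∈ s, (Ideal.absNorm I).Coprime q) → ∑ I ∈ s, ((Ideal.absNorm I : ℝ) ^ 3)⁻¹ ≤ 4 / 3 := by
  classical
  obtain ⟨P, hP⟩ := ideal_tail K (1 / 3) (by norm_num)
  refine ⟨P, fun q hq s hs => ?_⟩
  rw [← Finset.sum_filter_add_sum_filter_not s (fun I => P < Ideal.absNorm I)]
  have h1 := hP (s.filter fun I => P < Ideal.absNorm I) fun I hI => (Finset.mem_filter.1 hI).2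
  have h2 : ∑ I ∈ s.filter (fun I => ¬ P < Ideal.absNorm I), ((Ideal.absNorm I : ℝ) ^ 3)⁻¹ ≤
      ∑ I ∈ s.filter (fun I => ¬ P < Ideal.absNorm I), if I = ⊤ then (1 : ℝ) else 0 := by
    refine Finset.sum_le_sum fun I hI => ?_
    obtain ⟨hI, hIP⟩ := Finset.mem_filter.1 hI
    split_ifs with h
    · rw [h]; simp
    · rcases Nat.eq_zero_or_pos (Ideal.absNorm I) with h0 | h0
      · rw [h0]; simp
      · exfalso
        have h3 : Ideal.absNorm I ∣ q := (Nat.dvd_factorial h0 (not_lt.1 hIP)).trans hq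
        have h4 := Nat.Coprime.eq_one_of_dvd (hs I hI) h3
        exact h (Ideal.absNorm_eq_one_iff.1 h4)
  have h3 : ∑ I ∈ s.filter (fun I => ¬ P < Ideal.absNorm I), (if I = ⊤ then (1 : ℝ) else 0) ≤ 1 := by
    rw [Finset.sum_ite_eq']
    split_ifs <;> norm_num
  linarith

/-- A number `m ≤ k` is the product of a divisor of `q ^ k` and a number coprime to `q`. -/
lemma split_nat (q : ℕ) : ∀ k m : ℕ, 0 < m → m ≤ k →
    ∃ m1 m2, m = m1 * m2 ∧ m1 ∣ q ^ k ∧ m2.Coprime q := by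
  intro k
  induction k with
  | zero => intro m h1 h2; omega
  | succ k ih =>
    intro m h1 h2
    by_cases hc : m.Coprime q
    · exact ⟨1, m, by simp, one_dvd _, hc⟩
    · have hg : 1 < Nat.gcd m q := by
        have : Nat.gcd m q ≠ 0 := (Nat.gcd_pos_of_pos_left _ h1).ne'
        have : Nat.gcd m q ≠ 1 := hc
        omega
      obtain ⟨m', hm'⟩ := Nat.gcd_dvd_left m q
      have h3 : 0 < m' := Nat.pos_of_ne_zero fun h => by rw [h] at hm'; omega
      have h4 : m' ≤ k := by
        have : m' < m := by
          conv_rhs => rw [hm']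
          exact lt_mul_of_one_lt_left h3 hg
        omega
      obtain ⟨m1, m2, e, d, c⟩ := ih m' h3 h4
      refine ⟨Nat.gcd m q * m1, m2, ?_, ?_, c⟩
      · rw [mul_assoc, ← e]; exact hm'
      · rw [pow_succ, mul_comm]; exact mul_dvd_mul d (Nat.gcd_dvd_right m q)

end
section
variable {K : Type*} [Field K] [NumberField K] [IsTotallyReal K]
/-- Separation of the part of an ideal of norm at most `k` composed of primes dividing `q`. -/
lemma split_ideal (q k : ℕ) (c : Ideal (𝓞 K)) (hc : c ≠ ⊥) (hk : Ideal.absNorm c ≤ k) :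
    ∃ b : Ideal (𝓞 K), (Ideal.absNorm b).Coprime q ∧ c ≤ b ∧
      Ideal.absNorm c = Ideal.absNorm b * Ideal.absNorm (c ⊔ Ideal.span {((q ^ k : ℕ) : 𝓞 K)}) := by
  have hpos : 0 < Ideal.absNorm c := Nat.pos_of_ne_zero fun h => hc (Ideal.absNorm_eq_zero_iff.1 h)
  obtain ⟨m1, m2, e, d, cop⟩ := split_nat q k _ hpos hk
  have hm : ((m1 * m2 : ℕ) : 𝓞 K) ∈ c := by rw [← e]; exact Ideal.absNorm_mem c
  have hcop : m2.Coprime (q ^ k) := cop.pow_right k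
  obtain ⟨x, y, hxy⟩ : ∃ x y : 𝓞 K, x * m2 + y * (q ^ k : ℕ) = 1 := by
    have h1 : IsCoprime (m2 : ℤ) ((q ^ k : ℕ) : ℤ) := Nat.isCoprime_iff_coprime.2 hcop
    obtain ⟨x, y, h⟩ := h1
    refine ⟨x, y, ?_⟩
    have := congrArg (Int.cast : ℤ → 𝓞 K) h
    push_cast at this ⊢
    exact this
  refine ⟨c ⊔ Ideal.span {(m2 : 𝓞 K)}, ?_, le_sup_left, ?_⟩
  · have h1 : Ideal.absNorm (c ⊔ Ideal.span {(m2 : 𝓞 K)}) ∣ Ideal.absNorm (Ideal.span {(m2 : 𝓞 K)}) :=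
      Ideal.absNorm_dvd_absNorm_of_le le_sup_right
    rw [absNorm_natCast] at h1
    exact Nat.Coprime.of_dvd_left h1 (cop.pow_left _)
  · rw [← map_mul]
    congr 1
    refine le_antisymm ?_ ?_
    · intro z hz
      have : z = z * (x * m2 + y * (q ^ k : ℕ)) := by rw [hxy, mul_one]
      rw [this, mul_add]
      refine add_mem ?_ ?_
      · have h1 : z * (x * m2) = (x * m2) * z := by ring
        rw [h1]
        exact Ideal.mul_mem_mul (Ideal.mul_mem_left _ _ (Ideal.mem_sup_right
          (Ideal.mem_span_singleton_self _))) (Ideal.mem_sup_left hz)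
      · exact Ideal.mul_mem_mul (Ideal.mem_sup_left hz) (Ideal.mul_mem_left _ _ (Ideal.mem_sup_right
          (Ideal.mem_span_singleton_self _)))
    · rw [Ideal.sup_mul]
      refine sup_le Ideal.mul_le_left ?_
      rw [Ideal.mul_sup]
      refine sup_le Ideal.mul_le_right ?_
      rw [Ideal.span_singleton_mul_span_singleton, Ideal.span_singleton_le_iff_mem]
      obtain ⟨r, hr⟩ := d
      have : (m2 : 𝓞 K) * ((q ^ k : ℕ) : 𝓞 K) = r * ((m1 * m2 : ℕ) : 𝓞 K) := by
        rw [hr]; push_cast; ring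
      rw [this]
      exact Ideal.mul_mem_left _ _ hm

namespace Form
variable (f : Form (𝓞 K))

open Classical in
/-- The norm of the part of the content dividing `R`, as a number of solutions of a congruence. -/
lemma count_content (w : Fin 4 → 𝓞 K) (b0 : 𝓞 K) (hb : b0 ∈ cont w) (R : ℕ) (hR : 0 < R)
    [Fintype ((Fin 4 → 𝓞 K) ⧸ dil K R)] :
    Ideal.absNorm (cont w ⊔ Ideal.span {(R : 𝓞 K)}) * R ^ (3 * Fintype.card (K →+* ℝ)) =
      (Finset.univ.filter fun y : (Fin 4 → 𝓞 K) ⧸ dil K R =>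
        b0 + f.B (Quotient.out y) w ∈ Ideal.span {(R : 𝓞 K)}).card := by
  classical
  have := finite_dil (K := K) R hR
  set I : Ideal (𝓞 K) := Ideal.span {(R : 𝓞 K)} with hI
  let g : (Fin 4 → 𝓞 K) →ₗ[𝓞 K] (𝓞 K ⧸ I) := (Submodule.mkQ I).comp (f.Blin w)
  have hg : dil K R ≤ LinearMap.ker g := by
    rintro _ ⟨y, rfl⟩
    change g ((R : 𝓞 K) • y) = 0
    rw [map_smul, ← map_smul]
    change Submodule.Quotient.mk (f.B ((R : 𝓞 K) • y) w) = (0 : 𝓞 K ⧸ I)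
    rw [Submodule.Quotient.mk_eq_zero, f.B_smul]
    exact Ideal.mul_mem_right _ _ (Ideal.mem_span_singleton_self _)
  let θ : ((Fin 4 → 𝓞 K) ⧸ dil K R) →ₗ[𝓞 K] (𝓞 K ⧸ I) := (dil K R).liftQ g hg
  have hθ : ∀ y, θ y = Submodule.Quotient.mk (f.B (Quotient.out y) w) := by
    intro y
    conv_lhs => rw [← Quotient.out_eq y]
    rfl
  have hrange : LinearMap.range θ = Submodule.map (Submodule.mkQ I) (cont w ⊔ I) := by
    have h1 : LinearMap.range θ = LinearMap.range g := Submodule.range_liftQ _ _ _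
    have h2 : Submodule.map (Submodule.mkQ I) I = ⊥ := by
      rw [eq_bot_iff]
      rintro _ ⟨x, hx, rfl⟩
      exact (Submodule.Quotient.mk_eq_zero _).2 hx
    have h3 : LinearMap.range g = Submodule.map (Submodule.mkQ I) (LinearMap.range (f.Blin w)) :=
      LinearMap.range_comp _ _
    rw [h1, h3, f.range_Blin]
    change _ = Submodule.map (Submodule.mkQ I) ((cont w : Submodule (𝓞 K) (𝓞 K)) ⊔ I)
    rw [Submodule.map_sup, h2, sup_bot_eq]
  have hcr := Submodule.card_quotient_mul_card_quotient (cont w ⊔ I) I le_sup_right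
  rw [← hrange] at hcr
  have hcr' : Nat.card (LinearMap.range θ) * Ideal.absNorm (cont w ⊔ I) =
      R ^ Fintype.card (K →+* ℝ) := by
    rw [← absNorm_natCast]; exact hcr
  obtain ⟨x0, hx0⟩ : ∃ x0, θ x0 = Submodule.Quotient.mk (-b0) := by
    have : Submodule.Quotient.mk (-b0) ∈ LinearMap.range θ := by
      rw [hrange]
      exact ⟨-b0, neg_mem (Submodule.mem_sup_left hb), rfl⟩
    exact this
  have hmem : ∀ y, b0 + f.B (Quotient.out y) w ∈ I ↔ θ y = θ x0 := by
    intro y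
    rw [hx0, hθ, ← sub_eq_zero, ← Submodule.Quotient.mk_sub, Submodule.Quotient.mk_eq_zero]
    rw [sub_neg_eq_add, add_comm]
  have hfib : (Finset.univ.filter fun y : (Fin 4 → 𝓞 K) ⧸ dil K R =>
        b0 + f.B (Quotient.out y) w ∈ I).card = Nat.card (LinearMap.ker θ) := by
    rw [Nat.card_eq_fintype_card, ← Fintype.card_coe]
    refine Fintype.card_congr ⟨fun y => ⟨y.1 - x0, ?_⟩, fun y => ⟨y.1 + x0, ?_⟩, fun y => ?_, fun y => ?_⟩
    · have h1 := (hmem y.1).1 (Finset.mem_filter.1 y.2).2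
      rw [LinearMap.mem_ker, map_sub, h1, sub_self]
    · refine Finset.mem_filter.2 ⟨Finset.mem_univ _, (hmem _).2 ?_⟩
      rw [map_add, LinearMap.mem_ker.1 y.2, zero_add]
    · simp
    · simp
  refine Eq.trans ?_ (Eq.trans hfib.symm ?_)
  swap
  · rfl
  have h1 := Submodule.card_eq_card_quotient_mul_card (LinearMap.ker θ)
  rw [card_dil R hR, Nat.card_congr (LinearMap.quotKerEquivRange θ).toEquiv] at h1
  have h0 : Nat.card (LinearMap.range θ) ≠ 0 := by
    intro h; rw [h, zero_mul] at hcr'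
    exact (pow_pos hR _).ne hcr'
  refine Nat.eq_of_mul_eq_mul_left (Nat.pos_of_ne_zero h0) ?_
  rw [← mul_assoc, hcr', ← pow_add, show Fintype.card (K →+* ℝ) + 3 * Fintype.card (K →+* ℝ) =
    4 * Fintype.card (K →+* ℝ) by ring, h1]
  ring
end Form
end
end Siegel

/-! ### Mean values of contents -/

namespace Siegel
section
variable {K : Type*} [Field K] [NumberField K] [IsTotallyReal K]

/-- An integer `≡ 1` modulo `q` is invertible modulo every power of `q`. -/
lemma exists_inv_mod (q k : ℕ) (a : 𝓞 K) :
    ∃ c m : 𝓞 K, c * (1 + (q : 𝓞 K) * a) = 1 + ((q ^ k : ℕ) : 𝓞 K) * m := by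
  have h := sub_dvd_pow_sub_pow (1 : 𝓞 K) (-((q : 𝓞 K) * a)) k
  rw [one_pow, sub_neg_eq_add] at h
  obtain ⟨c, hc⟩ := h
  refine ⟨c, -(-a) ^ k, ?_⟩
  rw [mul_comm c, ← hc, ← mul_neg, mul_pow]
  push_cast
  ring

namespace Form
variable (f : Form (𝓞 K))

/-- The vectors with coordinates in `b` that are orthogonal to `x` modulo `M`. -/
def Wsub (b : Ideal (𝓞 K)) (x : Fin 4 → 𝓞 K) (M : ℕ) : Submodule (𝓞 K) (Fin 4 → 𝓞 K) :=
  Submodule.pi Set.univ (fun _ => b) ⊓ Submodule.comap (f.Blin x) (Ideal.span {(M : 𝓞 K)})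

lemma mem_Wsub {b : Ideal (𝓞 K)} {x : Fin 4 → 𝓞 K} {M : ℕ} {w} :
    w ∈ f.Wsub b x M ↔ (∀ i, w i ∈ b) ∧ f.B w x ∈ Ideal.span {(M : 𝓞 K)} := by
  simp [Wsub, Submodule.mem_pi, Blin]

lemma dil_le_Wsub (b : Ideal (𝓞 K)) (x : Fin 4 → 𝓞 K) (M : ℕ) :
    dil K (M * Ideal.absNorm b) ≤ f.Wsub b x M := by
  intro w hw
  obtain ⟨y, rfl⟩ := mem_dil.1 hw
  rw [mem_Wsub]
  push_cast
  constructor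
  · intro i
    change (M : 𝓞 K) * (Ideal.absNorm b : 𝓞 K) * y i ∈ b
    exact Ideal.mul_mem_right _ _ (Ideal.mul_mem_left _ _ (Ideal.absNorm_mem b))
  · rw [f.B_smul, mul_assoc]
    exact Ideal.mul_mem_right _ _ (Ideal.mem_span_singleton_self _)

/-- The two conditions defining `Wsub` have coprime moduli. The first has index `N(b)⁴`; the second has
index `N(q ^ k)` because `B e x` is a unit modulo `q ^ k`, so that pairing with `x` is onto. -/
lemma card_Wsub (b : Ideal (𝓞 K)) (q k : ℕ) (hq : 0 < q) (hb : (Ideal.absNorm b).Coprime q)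
    (hb0 : Ideal.absNorm b ≠ 0) (x e : Fin 4 → 𝓞 K) (a : 𝓞 K) (ha : f.B e x = 1 + q * a) :
    Ideal.absNorm b ^ 4 * (q ^ k) ^ Fintype.card (K →+* ℝ) ≤
      Nat.card ((Fin 4 → 𝓞 K) ⧸ f.Wsub b x (q ^ k)) := by
  have hfin : Finite ((Fin 4 → 𝓞 K) ⧸ f.Wsub b x (q ^ k)) := by
    have := finite_dil (K := K) (q ^ k * Ideal.absNorm b)
      (Nat.mul_pos (pow_pos hq _) (Nat.pos_of_ne_zero hb0))
    exact Finite.of_surjective (Submodule.factor (f.dil_le_Wsub b x (q ^ k)))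
      (Submodule.factor_surjective _)
  refine Nat.le_of_dvd Nat.card_pos (Nat.Coprime.mul_dvd_of_dvd_of_dvd ?_ ?_ ?_)
  · exact Nat.Coprime.pow_left _ (Nat.Coprime.pow_right _ (Nat.Coprime.pow_right _ hb))
  · have h := Submodule.card_quotient_mul_card_quotient (Submodule.pi Set.univ (fun _ : Fin 4 => b))
      (f.Wsub b x (q ^ k)) inf_le_left
    have h2 : Nat.card ((Fin 4 → 𝓞 K) ⧸ Submodule.pi Set.univ (fun _ : Fin 4 => b)) =
        Ideal.absNorm b ^ 4 := by
      rw [Nat.card_congr (Submodule.quotientPi (fun _ : Fin 4 => b)).toEquiv, Nat.card_pi]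
      simp only [Finset.prod_const, Finset.card_univ, Fintype.card_fin]
      rfl
    rw [← h2]
    exact ⟨_, by rw [← h, mul_comm]⟩
  · set J : Ideal (𝓞 K) := Ideal.span {((q ^ k : ℕ) : 𝓞 K)} with hJ
    have h := Submodule.card_quotient_mul_card_quotient (Submodule.comap (f.Blin x) J)
      (f.Wsub b x (q ^ k)) inf_le_right
    have h2 : Nat.card ((Fin 4 → 𝓞 K) ⧸ Submodule.comap (f.Blin x) J) =
        (q ^ k) ^ Fintype.card (K →+* ℝ) := by
      let θ : (Fin 4 → 𝓞 K) →ₗ[𝓞 K] (𝓞 K ⧸ J) := (Submodule.mkQ J).comp (f.Blin x)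
      have hker : LinearMap.ker θ = Submodule.comap (f.Blin x) J := by
        rw [LinearMap.ker_comp, Submodule.ker_mkQ]
      have hsurj : Function.Surjective θ := by
        intro z
        obtain ⟨z, rfl⟩ := Submodule.mkQ_surjective J z
        obtain ⟨c, m, hcm⟩ := exists_inv_mod q k a
        refine ⟨(z * c) • e, ?_⟩
        change Submodule.mkQ J (f.B ((z * c) • e) x) = _
        rw [f.B_smul, ha, mul_assoc, hcm, ← sub_eq_zero, ← map_sub]
        refine (Submodule.Quotient.mk_eq_zero _).2 ?_
        have : z * (1 + ((q ^ k : ℕ) : 𝓞 K) * m) - z = ((q ^ k : ℕ) : 𝓞 K) * (z * m) := by ring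
        rw [this]
        exact Ideal.mul_mem_right _ _ (Ideal.mem_span_singleton_self _)
      rw [← hker, Nat.card_congr (LinearMap.quotKerEquivOfSurjective θ hsurj).toEquiv,
        ← absNorm_natCast]
      rfl
    rw [← h2]
    exact ⟨_, by rw [← h, mul_comm]⟩

variable (hal : ∀ v, 0 < σO v f.al)
include hal

/-- Vectors of large content contribute little. -/
lemma tail_content (A : ℝ) (hA : 0 ≤ A) (η : ℝ) (hη : 0 < η) :
    ∃ Y : ℕ, ∀ t : ℝ, 0 < t → ∀ s : Finset (Fin 4 → 𝓞 K),
      (∀ w ∈ s, w ≠ 0 ∧ (∀ v, f.nv v w ≤ t) ∧ Y < Ideal.absNorm (cont w)) →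
      ∑ w ∈ s, (Ideal.absNorm (cont w) : ℝ) * ∏ v, (A * t * (f.nv v w)⁻¹) ≤
        η * t ^ (Fintype.card (K →+* ℝ) * 4) := by
  classical
  set n := Fintype.card (K →+* ℝ) with hn
  set C : ℝ := 6 ^ (4 * n) * 4 ^ n with hC
  have hC0 : 0 < C := by positivity
  obtain ⟨Y, hY⟩ := ideal_tail K (η / (A ^ n * C + 1)) (by positivity)
  refine ⟨Y, fun t ht s hs => ?_⟩
  rw [← Finset.sum_fiberwise_of_maps_to (s := s) (t := s.image cont) (g := cont)
    (fun w hw => Finset.mem_image_of_mem _ hw)]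
  have h1 : ∀ I ∈ s.image cont, ∑ w ∈ s.filter (fun w => cont w = I),
      (Ideal.absNorm (cont w) : ℝ) * ∏ v, (A * t * (f.nv v w)⁻¹) ≤
      (A ^ n * C * t ^ (n * 4)) * ((Ideal.absNorm I : ℝ) ^ 3)⁻¹ := by
    intro I hI
    obtain ⟨w0, hw0, rfl⟩ := Finset.mem_image.1 hI
    have hN : (0 : ℝ) < Ideal.absNorm (cont w0) := by
      exact_mod_cast lt_of_le_of_lt (Nat.zero_le _) (hs w0 hw0).2.2
    have h2 := dyadic_sum f.P (Submodule.pi Set.univ fun _ : Fin 4 => cont w0).toAddSubgroup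
      (Ideal.absNorm (cont w0)) hN (fun w hw hw' => f.absNorm_le_prod hal _ hw'
        (fun i => by simpa using (Submodule.mem_pi.1 hw) i (Set.mem_univ i))) (fun _ => t) (fun _ => ht)
        (s.filter fun w => cont w = cont w0) (fun w hw => by
          obtain ⟨hw, hwc⟩ := Finset.mem_filter.1 hw
          refine ⟨?_, (hs w hw).1, (hs w hw).2.1⟩
          refine Submodule.mem_pi.2 fun i _ => ?_
          rw [← hwc]
          exact Ideal.subset_span ⟨i, rfl⟩)
    rw [Finset.prod_const, Finset.card_univ, ← hn, ← hC] at h2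
    calc _ = (Ideal.absNorm (cont w0) : ℝ) * (A * t) ^ n *
          ∑ w ∈ s.filter (fun w => cont w = cont w0), ∏ v, (en (f.P w v))⁻¹ := by
          rw [Finset.mul_sum]
          refine Finset.sum_congr rfl fun w hw => ?_
          rw [(Finset.mem_filter.1 hw).2, Finset.prod_mul_distrib, Finset.prod_const,
            Finset.card_univ, mul_assoc]
          rfl
      _ ≤ (Ideal.absNorm (cont w0) : ℝ) * (A * t) ^ n *
          (C * (t ^ n) ^ 3 / (Ideal.absNorm (cont w0) : ℝ) ^ 4) := by gcongr
      _ = _ := by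
          rw [mul_pow, ← pow_mul]
          field_simp
          ring
  refine (Finset.sum_le_sum h1).trans ?_
  rw [← Finset.mul_sum]
  have h3 := hY (s.image cont) (fun I hI => by
    obtain ⟨w, hw, rfl⟩ := Finset.mem_image.1 hI
    exact (hs w hw).2.2)
  calc _ ≤ (A ^ n * C * t ^ (n * 4)) * (η / (A ^ n * C + 1)) := by gcongr
    _ = (A ^ n * C / (A ^ n * C + 1)) * (η * t ^ (n * 4)) := by ring
    _ ≤ 1 * (η * t ^ (n * 4)) := by
        gcongr
        rw [div_le_one (by positivity)]
        linarith
    _ = _ := one_mul _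

/-- Vectors that are very short at some place contribute little. -/
lemma small_place (A : ℝ) (hA : 0 ≤ A) (Y : ℕ) (η : ℝ) (hη : 0 < η) :
    ∃ κ : ℝ, 0 < κ ∧ κ ≤ 1 ∧ ∀ t : ℝ, 0 < t → ∀ s : Finset (Fin 4 → 𝓞 K),
      (∀ w ∈ s, w ≠ 0 ∧ (∀ v, f.nv v w ≤ t) ∧ Ideal.absNorm (cont w) ≤ Y ∧
        ∃ v, f.nv v w ≤ κ * t) →
      ∑ w ∈ s, (Ideal.absNorm (cont w) : ℝ) * ∏ v, (A * t * (f.nv v w)⁻¹) ≤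
        η * t ^ (Fintype.card (K →+* ℝ) * 4) := by
  classical
  set n := Fintype.card (K →+* ℝ) with hn
  set C : ℝ := 6 ^ (4 * n) * 4 ^ n with hC
  have hC0 : 0 < C := by positivity
  set T : ℝ := Y * A ^ n * C * n with hT
  have hT0 : 0 ≤ T := by positivity
  have hκ : 0 < min 1 (η / (T + 1)) := by positivity
  refine ⟨min 1 (η / (T + 1)), hκ, min_le_left _ _, fun t ht s hs => ?_⟩
  set κ := min 1 (η / (T + 1))
  have h1 : ∑ w ∈ s, (Ideal.absNorm (cont w) : ℝ) * ∏ v, (A * t * (f.nv v w)⁻¹) ≤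
      ∑ v0 : K →+* ℝ, ∑ w ∈ s.filter (fun w => f.nv v0 w ≤ κ * t),
        (Y * (A * t) ^ n * ∏ v, (f.nv v w)⁻¹) := by
    simp_rw [Finset.sum_filter]
    rw [Finset.sum_comm]
    refine Finset.sum_le_sum fun w hw => ?_
    obtain ⟨h0, h1, h2, v0, h3⟩ := hs w hw
    have hp : 0 ≤ ∏ v, (f.nv v w)⁻¹ :=
      Finset.prod_nonneg fun v _ => inv_nonneg.2 (f.nv_pos hal v h0).le
    have h4 : (Ideal.absNorm (cont w) : ℝ) * ∏ v, (A * t * (f.nv v w)⁻¹) ≤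
        Y * (A * t) ^ n * ∏ v, (f.nv v w)⁻¹ := by
      rw [Finset.prod_mul_distrib, Finset.prod_const, Finset.card_univ, ← mul_assoc]
      have : (Ideal.absNorm (cont w) : ℝ) ≤ Y := by exact_mod_cast h2
      gcongr
    refine h4.trans ?_
    refine (le_of_eq ?_).trans (Finset.single_le_sum (f := fun v => if f.nv v w ≤ κ * t then
      Y * (A * t) ^ n * ∏ v, (f.nv v w)⁻¹ else 0) (fun v _ => ?_) (Finset.mem_univ v0))
    · simp only [if_pos h3]
    · split_ifs
      · positivity
      · exact le_rfl
  refine h1.trans ?_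
  have h2 : ∀ v0 : K →+* ℝ, ∑ w ∈ s.filter (fun w => f.nv v0 w ≤ κ * t),
        (Y * (A * t) ^ n * ∏ v, (f.nv v w)⁻¹) ≤ Y * A ^ n * C * κ * t ^ (n * 4) := by
    intro v0
    have h2 := dyadic_sum f.P ⊤ 1 one_pos (fun w _ hw => f.one_le_prod hal hw)
      (fun v => if v = v0 then κ * t else t) (fun v => by
        split_ifs <;> positivity)
      (s.filter fun w => f.nv v0 w ≤ κ * t) (fun w hw => by
        obtain ⟨hw, hwv⟩ := Finset.mem_filter.1 hw
        refine ⟨AddSubgroup.mem_top _, (hs w hw).1, fun v => ?_⟩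
        split_ifs with h
        · rw [h]; exact hwv
        · exact (hs w hw).2.1 v)
    have h3 : ∏ v, (if v = v0 then κ * t else t) = κ * t ^ n := by
      have : ∀ v, (if v = v0 then κ * t else t) = (if v = v0 then κ else 1) * t := fun v => by
        split_ifs <;> ring
      simp_rw [this]
      rw [Finset.prod_mul_distrib, Finset.prod_const, Finset.card_univ, Finset.prod_ite_eq']
      simp [hn]
    rw [h3, ← hn, ← hC, one_pow, div_one] at h2
    rw [← Finset.mul_sum]
    have hκ1 : κ ^ 3 ≤ κ := pow_le_of_le_one hκ.le (min_le_left _ _) (by norm_num)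
    calc _ ≤ Y * (A * t) ^ n * (C * (κ * t ^ n) ^ 3) := by
          gcongr
          exact h2
      _ = Y * A ^ n * C * κ ^ 3 * t ^ (n * 4) := by rw [mul_pow, mul_pow, ← pow_mul]; ring
      _ ≤ _ := by gcongr
  refine (Finset.sum_le_sum fun v _ => h2 v).trans ?_
  rw [Finset.sum_const, Finset.card_univ, ← hn, nsmul_eq_mul]
  have hκ2 : κ ≤ η / (T + 1) := min_le_right _ _
  calc _ = T * κ * t ^ (n * 4) := by rw [hT]; ring
    _ ≤ T * (η / (T + 1)) * t ^ (n * 4) := by gcongr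
    _ = (T / (T + 1)) * (η * t ^ (n * 4)) := by ring
    _ ≤ 1 * (η * t ^ (n * 4)) := by
        gcongr
        rw [div_le_one (by positivity)]
        linarith
    _ = _ := one_mul _

/-- The main term: vectors of bounded content. -/
lemma main_part (q k : ℕ) (hq : 2 ≤ q) (e : Fin 4 → 𝓞 K) (u : 𝓞 K) (he : f.Q e = 1 + q * u)
    (Z : ℝ) (hZ : ∀ s : Finset (Ideal (𝓞 K)), (∀ I ∈ s, (Ideal.absNorm I).Coprime q) →
      ∑ I ∈ s, ((Ideal.absNorm I : ℝ) ^ 3)⁻¹ ≤ Z)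
    (G : (Fin 4 → ℝ) → ℝ) (C : ℝ) (h0 : ∀ u, 0 ≤ G u) (hC : ∀ u, |G u| ≤ C)
    (hB : ∀ u, 1 < en u → G u = 0) (hG : Measurable G) (hc : ∀ᵐ u, ContinuousAt G u)
    (δ : ℝ) (hδ : 0 < δ) :
    ∀ᶠ t : ℝ in atTop, ∀ s : Finset (Fin 4 → 𝓞 K),
      (∀ w ∈ s, w ≠ 0 ∧ Ideal.absNorm (cont w) ≤ k ∧ ∃ b0 ∈ cont w, f.B e w = q * b0) →
      ∑ w ∈ s, (Ideal.absNorm (cont w) : ℝ) * ∏ v, G (t⁻¹ • f.P w v) ≤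
        (Z / (q ^ Fintype.card (K →+* ℝ) * D K ^ 4) * (∫ u, G u) ^ Fintype.card (K →+* ℝ) + δ) *
          t ^ (Fintype.card (K →+* ℝ) * 4) := by
  classical
  set n := Fintype.card (K →+* ℝ) with hn
  have hq0 : 0 < q := by omega
  -- every content `c` of norm at most `k` is `gcd(c, R) * b` with `b` of norm coprime to `q`
  set R := q ^ k with hR
  have hR0 : 0 < R := pow_pos hq0 _
  have hRr : (0 : ℝ) < R := by exact_mod_cast hR0
  have hqr : (0 : ℝ) < q := by exact_mod_cast hq0
  have := finite_dil (K := K) R hR0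
  have := Fintype.ofFinite ((Fin 4 → 𝓞 K) ⧸ dil K R)
  have hfinI : {I : Ideal (𝓞 K) | Ideal.absNorm I ≤ k}.Finite := Ideal.finite_setOfPred_absNorm_le k
  set Bs : Finset (Ideal (𝓞 K)) := hfinI.toFinset.filter fun I =>
    (Ideal.absNorm I).Coprime q with hBs
  have hBs1 : ∀ I ∈ Bs, (Ideal.absNorm I).Coprime q := fun I hI => (Finset.mem_filter.1 hI).2
  have hBs0 : ∀ I ∈ Bs, Ideal.absNorm I ≠ 0 := fun I hI h => by
    have := hBs1 I hI
    rw [h, Nat.coprime_zero_left] at this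
    omega
  let Wy : Ideal (𝓞 K) → ((Fin 4 → 𝓞 K) ⧸ dil K R) → Submodule (𝓞 K) (Fin 4 → 𝓞 K) :=
    fun b y => f.Wsub b (e + (q : 𝓞 K) • Quotient.out y) (q ^ (k + 1))
  set L : ℝ := ∑ b ∈ Bs, ∑ _y : (Fin 4 → 𝓞 K) ⧸ dil K R, (Ideal.absNorm b : ℝ) with hL
  have hL0 : 0 ≤ L := Finset.sum_nonneg fun _ _ => Finset.sum_nonneg fun _ _ => Nat.cast_nonneg _
  set δ' : ℝ := δ / (L / (R : ℝ) ^ (3 * n) + 1) with hδ'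
  have hδ'0 : 0 < δ' := by positivity
  have hev : ∀ᶠ t : ℝ in atTop, ∀ b ∈ Bs, ∀ y : (Fin 4 → 𝓞 K) ⧸ dil K R,
      ∀ s : Finset (Fin 4 → 𝓞 K), (∀ w ∈ s, w ∈ Wy b y) →
        ∑ w ∈ s, ∏ v, G (t⁻¹ • f.P w v) ≤
          ((∫ u, G u) ^ n / (D K ^ 4 * Nat.card ((Fin 4 → 𝓞 K) ⧸ Wy b y)) + δ') * t ^ (n * 4) := by
    rw [Filter.eventually_all_finset]
    intro b hb
    rw [Filter.eventually_all]
    intro y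
    exact f.riemann_W hal G C h0 hC hB hG hc (Wy b y) (q ^ (k + 1) * Ideal.absNorm b)
      (Nat.mul_pos (pow_pos hq0 _) (Nat.pos_of_ne_zero (hBs0 b hb))) (f.dil_le_Wsub b _ _) δ' hδ'0
  filter_upwards [hev, eventually_gt_atTop 0] with t ht ht0 s hs
  have hI0 : 0 ≤ ∫ u, G u := integral_nonneg h0
  have hD := D_pos K
  -- pointwise bound of the norm of the content
  have key : ∀ w ∈ s, (Ideal.absNorm (cont w) : ℝ) ≤ ((R : ℝ) ^ (3 * n))⁻¹ *
      ∑ b ∈ Bs, ∑ y : (Fin 4 → 𝓞 K) ⧸ dil K R, if w ∈ Wy b y then (Ideal.absNorm b : ℝ) else 0 := by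
    intro w hw
    obtain ⟨hw0, hwk, b0, hb0, hBe⟩ := hs w hw
    obtain ⟨b, hbq, hcb, hbN⟩ := split_ideal q k (cont w) (cont_ne_bot hw0) hwk
    have hcw : 0 < Ideal.absNorm (cont w) :=
      Nat.pos_of_ne_zero fun h => cont_ne_bot hw0 (Ideal.absNorm_eq_zero_iff.1 h)
    have hbB : b ∈ Bs := by
      rw [hBs, Finset.mem_filter]
      refine ⟨?_, hbq⟩
      rw [Set.Finite.mem_toFinset]
      exact (Nat.le_of_dvd hcw (Ideal.absNorm_dvd_absNorm_of_le hcb)).trans hwk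
    have hcount := f.count_content w b0 hb0 R hR0
    rw [← hn] at hcount
    have h1 : ((Finset.univ.filter fun y : (Fin 4 → 𝓞 K) ⧸ dil K R =>
        b0 + f.B (Quotient.out y) w ∈ Ideal.span {(R : 𝓞 K)}).card : ℝ) * Ideal.absNorm b ≤
        ∑ y : (Fin 4 → 𝓞 K) ⧸ dil K R, if w ∈ Wy b y then (Ideal.absNorm b : ℝ) else 0 := by
      rw [← nsmul_eq_mul, ← Finset.sum_const, Finset.sum_filter]
      refine Finset.sum_le_sum fun y _ => ?_
      split_ifs with h1 h2 h2
      · exact le_rfl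
      · exfalso
        apply h2
        refine f.mem_Wsub.2 ⟨fun i => hcb (Ideal.subset_span ⟨i, rfl⟩), ?_⟩
        rw [f.B_comm, f.B_add, f.B_smul, hBe, ← mul_add]
        obtain ⟨r, hr⟩ := Ideal.mem_span_singleton'.1 h1
        rw [← hr]
        refine Ideal.mem_span_singleton'.2 ⟨r, ?_⟩
        rw [hR]
        push_cast
        ring
      · exact Nat.cast_nonneg _
      · exact le_rfl
    have h2 : (∑ y : (Fin 4 → 𝓞 K) ⧸ dil K R, if w ∈ Wy b y then (Ideal.absNorm b : ℝ) else 0) ≤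
        ∑ b ∈ Bs, ∑ y : (Fin 4 → 𝓞 K) ⧸ dil K R, if w ∈ Wy b y then (Ideal.absNorm b : ℝ) else 0 :=
      Finset.single_le_sum (f := fun b => ∑ y : (Fin 4 → 𝓞 K) ⧸ dil K R,
        if w ∈ Wy b y then (Ideal.absNorm b : ℝ) else 0) (fun b _ => Finset.sum_nonneg fun y _ => by
          split_ifs
          · exact Nat.cast_nonneg _
          · exact le_rfl) hbB
    rw [inv_mul_eq_div, le_div_iff₀ (by positivity)]
    refine le_trans (le_of_eq ?_) (h1.trans h2)
    rw [← hR] at hbN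
    generalize Ideal.absNorm (cont w ⊔ Ideal.span {(R : 𝓞 K)}) = m at hbN hcount
    rw [← hcount, hbN]
    push_cast
    ring
  have hprod : ∀ w : Fin 4 → 𝓞 K, 0 ≤ ∏ v, G (t⁻¹ • f.P w v) := fun w => Finset.prod_nonneg fun v _ => h0 _
  calc _ ≤ ∑ w ∈ s, (((R : ℝ) ^ (3 * n))⁻¹ * ∑ b ∈ Bs, ∑ y : (Fin 4 → 𝓞 K) ⧸ dil K R,
          if w ∈ Wy b y then (Ideal.absNorm b : ℝ) else 0) * ∏ v, G (t⁻¹ • f.P w v) :=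
        Finset.sum_le_sum fun w hw => mul_le_mul_of_nonneg_right (key w hw) (hprod w)
    _ = ((R : ℝ) ^ (3 * n))⁻¹ * ∑ b ∈ Bs, ∑ y : (Fin 4 → 𝓞 K) ⧸ dil K R, (Ideal.absNorm b : ℝ) *
          ∑ w ∈ s.filter (fun w => w ∈ Wy b y), ∏ v, G (t⁻¹ • f.P w v) := by
        simp_rw [mul_assoc]
        rw [← Finset.mul_sum]
        congr 1
        simp_rw [Finset.sum_mul]
        rw [Finset.sum_comm]
        refine Finset.sum_congr rfl fun b _ => ?_
        rw [Finset.sum_comm]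
        refine Finset.sum_congr rfl fun y _ => ?_
        rw [Finset.mul_sum, Finset.sum_filter]
        refine Finset.sum_congr rfl fun w _ => ?_
        split_ifs <;> simp
    _ ≤ ((R : ℝ) ^ (3 * n))⁻¹ * ∑ b ∈ Bs, ∑ y : (Fin 4 → 𝓞 K) ⧸ dil K R, (Ideal.absNorm b : ℝ) *
          (((∫ u, G u) ^ n / (D K ^ 4 * ((Ideal.absNorm b : ℝ) ^ 4 * (q * R) ^ n)) + δ') *
            t ^ (n * 4)) := by
        refine mul_le_mul_of_nonneg_left (Finset.sum_le_sum fun b hb => Finset.sum_le_sum fun y _ =>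
          mul_le_mul_of_nonneg_left ((ht b hb y _ fun w hw => (Finset.mem_filter.1 hw).2).trans ?_)
          (Nat.cast_nonneg _)) (by positivity)
        have hb0 : (0 : ℝ) < Ideal.absNorm b := by
          exact_mod_cast Nat.pos_of_ne_zero (hBs0 b hb)
        have hcard := f.card_Wsub b q (k + 1) hq0 (hBs1 b hb) (hBs0 b hb)
          (e + (q : 𝓞 K) • Quotient.out y) e (u + f.B (Quotient.out y) e) (by
            rw [f.B_comm, f.B_add, f.B_smul, f.B_self, he]; ring)
        have hcard' : (Ideal.absNorm b : ℝ) ^ 4 * (q * R) ^ n ≤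
            Nat.card ((Fin 4 → 𝓞 K) ⧸ Wy b y) := by
          refine le_trans (le_of_eq ?_) (Nat.cast_le.2 hcard)
          push_cast
          rw [hR]
          push_cast
          rw [← hn]
          ring
        gcongr
    _ = (((∫ u, G u) ^ n / (q ^ n * D K ^ 4)) * (∑ b ∈ Bs, ((Ideal.absNorm b : ℝ) ^ 3)⁻¹) +
          L / (R : ℝ) ^ (3 * n) * δ') * t ^ (n * 4) := by
        have hcardy : (Fintype.card ((Fin 4 → 𝓞 K) ⧸ dil K R) : ℝ) = (R : ℝ) ^ (4 * n) := by
          rw [← Nat.card_eq_fintype_card, card_dil R hR0]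
          push_cast
          rw [hn]
        rw [hL]
        simp_rw [Finset.sum_const, Finset.card_univ, nsmul_eq_mul, hcardy]
        rw [add_mul, Finset.mul_sum, Finset.mul_sum, Finset.sum_mul, Finset.sum_div, Finset.sum_mul,
          Finset.sum_mul, ← Finset.sum_add_distrib]
        refine Finset.sum_congr rfl fun b hb => ?_
        have hb0 : (Ideal.absNorm b : ℝ) ≠ 0 := by exact_mod_cast hBs0 b hb
        have e1 : (R : ℝ) ^ (4 * n) = (R : ℝ) ^ (3 * n) * (R : ℝ) ^ n := by rw [← pow_add]; congr 1; ring
        rw [e1, mul_pow]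
        have := (pow_pos hRr n).ne'
        have := (pow_pos hRr (3 * n)).ne'
        have := (pow_pos hqr n).ne'
        field_simp
    _ ≤ _ := by
        have h1 := hZ Bs hBs1
        have h2 : L / (R : ℝ) ^ (3 * n) * δ' ≤ δ := by
          rw [hδ', mul_div_assoc', div_le_iff₀ (by positivity)]
          nlinarith
        have h3 : (∫ u, G u) ^ n / (q ^ n * D K ^ 4) * (∑ b ∈ Bs, ((Ideal.absNorm b : ℝ) ^ 3)⁻¹) ≤
            (∫ u, G u) ^ n / (q ^ n * D K ^ 4) * Z := by gcongr
        have h4 : (∫ u, G u) ^ n / (q ^ n * D K ^ 4) * Z = Z / (q ^ n * D K ^ 4) * (∫ u, G u) ^ n := by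
          ring
        rw [h4] at h3
        gcongr

end Form
end
end Siegel

namespace Siegel
/-- Truncation of a radial function to a shell. -/
noncomputable def shell (φ : ℝ → ℝ) (κ : ℝ) (u : Fin 4 → ℝ) : ℝ :=
  if κ ≤ en u ∧ en u ≤ 1 then φ (en u) else 0

lemma measurable_shell (φ : ℝ → ℝ) (hφ : ContinuousOn φ (Set.Ioi 0)) (κ : ℝ) (hκ : 0 < κ) :
    Measurable (shell φ κ) := by
  classical
  have hs : MeasurableSet {u : Fin 4 → ℝ | κ ≤ en u ∧ en u ≤ 1} :=
    ((isClosed_le continuous_const continuous_en).inter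
      (isClosed_le continuous_en continuous_const)).measurableSet
  have h : ContinuousOn (fun u => φ (en u)) {u : Fin 4 → ℝ | κ ≤ en u ∧ en u ≤ 1} :=
    hφ.comp continuous_en.continuousOn fun u hu => lt_of_lt_of_le hκ hu.1
  exact h.measurable_piecewise (g := fun _ => (0 : ℝ)) continuousOn_const hs

lemma shell_ae (φ : ℝ → ℝ) (hφ : ContinuousOn φ (Set.Ioi 0)) (κ : ℝ) (hκ : 0 < κ) :
    ∀ᵐ u, ContinuousAt (shell φ κ) u := by
  have h1 : ∀ᵐ u : Fin 4 → ℝ, en u ≠ κ := by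
    rw [ae_iff]; simpa using volume_en_eq κ hκ.ne'
  have h2 : ∀ᵐ u : Fin 4 → ℝ, en u ≠ 1 := by
    rw [ae_iff]; simpa using volume_en_eq 1 one_ne_zero
  filter_upwards [h1, h2] with u hu1 hu2
  rcases lt_or_gt_of_ne hu1 with h | h
  · refine (continuousAt_const (y := (0 : ℝ))).congr ?_
    filter_upwards [(isOpen_lt continuous_en continuous_const).mem_nhds h] with x hx
    rw [shell, if_neg]
    exact fun h' => h'.1.not_gt hx
  · rcases lt_or_gt_of_ne hu2 with h' | h'
    · have hc : ContinuousAt (fun u => φ (en u)) u :=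
        (hφ.continuousAt (Ioi_mem_nhds (hκ.trans h))).comp continuous_en.continuousAt
      refine hc.congr ?_
      filter_upwards [(isOpen_lt continuous_const continuous_en).mem_nhds h,
        (isOpen_lt continuous_en continuous_const).mem_nhds h'] with x hx hx'
      rw [shell, if_pos]
      exact ⟨le_of_lt hx, le_of_lt hx'⟩
    · refine (continuousAt_const (y := (0 : ℝ))).congr ?_
      filter_upwards [(isOpen_lt continuous_const continuous_en).mem_nhds h'] with x hx
      rw [shell, if_neg]
      exact fun h' => h'.2.not_gt hx

section
variable {K : Type*} [Field K] [NumberField K] [IsTotallyReal K]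
namespace Form
variable (f : Form (𝓞 K)) (hal : ∀ v, 0 < σO v f.al)
include hal

/-- The weighted count of vectors `w` in a large ball satisfying the congruence condition. -/
lemma moment_sum (q : ℕ) (hq : 2 ≤ q) (e : Fin 4 → 𝓞 K) (u : 𝓞 K) (he : f.Q e = 1 + q * u)
    (Z : ℝ) (hZ : ∀ s : Finset (Ideal (𝓞 K)), (∀ I ∈ s, (Ideal.absNorm I).Coprime q) →
      ∑ I ∈ s, ((Ideal.absNorm I : ℝ) ^ 3)⁻¹ ≤ Z)
    (φ : ℝ → ℝ) (hφ0 : ∀ s, 0 < s → 0 ≤ φ s) (hφ : ContinuousOn φ (Set.Ioi 0)) (A : ℝ) (hA : 0 ≤ A)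
    (hφA : ∀ s, 0 < s → s ≤ 1 → φ s ≤ A / s)
    (I : ℝ) (hI : ∀ κ, 0 < κ → κ ≤ 1 → ∫ u, shell φ κ u ≤ I)
    (δ : ℝ) (hδ : 0 < δ) :
    ∀ᶠ t : ℝ in atTop, ∀ s : Finset (Fin 4 → 𝓞 K),
      (∀ w ∈ s, w ≠ 0 ∧ (∀ v, f.nv v w ≤ t) ∧ ∃ b0 ∈ cont w, f.B e w = q * b0) →
      ∑ w ∈ s, (Ideal.absNorm (cont w) : ℝ) * ∏ v, φ (f.nv v w / t) ≤
        (Z / (q ^ Fintype.card (K →+* ℝ) * D K ^ 4) * I ^ Fintype.card (K →+* ℝ) + δ) *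
          t ^ (Fintype.card (K →+* ℝ) * 4) := by
  classical
  have hZ0 : 0 ≤ Z := by simpa using hZ ∅ (by simp)
  obtain ⟨Y, hY⟩ := f.tail_content hal A hA (δ / 3) (by positivity)
  obtain ⟨κ, hκ, hκ1, hsm⟩ := f.small_place hal A hA Y (δ / 3) (by positivity)
  have h0 : ∀ u, 0 ≤ shell φ κ u := fun u => by
    rw [shell]
    split_ifs with h
    · exact hφ0 _ (hκ.trans_le h.1)
    · exact le_rfl
  have hmain := f.main_part hal q Y hq e u he Z hZ (shell φ κ) (A / κ) h0 (fun u => by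
      rw [abs_of_nonneg (h0 u), shell]
      split_ifs with h
      · exact (hφA _ (hκ.trans_le h.1) h.2).trans (by
          have := h.1
          gcongr)
      · positivity)
    (fun u hu => by rw [shell, if_neg]; exact fun h => h.2.not_gt hu)
    (measurable_shell φ hφ κ hκ) (shell_ae φ hφ κ hκ) (δ / 3) (by positivity)
  filter_upwards [hmain, eventually_gt_atTop 0] with t ht ht0 s hs
  set n := Fintype.card (K →+* ℝ) with hn
  have hbd : ∀ w ∈ s, (Ideal.absNorm (cont w) : ℝ) * ∏ v, φ (f.nv v w / t) ≤
      (Ideal.absNorm (cont w) : ℝ) * ∏ v, (A * t * (f.nv v w)⁻¹) := fun w hw => by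
    refine mul_le_mul_of_nonneg_left (Finset.prod_le_prod (fun v _ => ?_) fun v _ => ?_)
      (Nat.cast_nonneg _)
    · exact hφ0 _ (div_pos (f.nv_pos hal v (hs w hw).1) ht0)
    · have hp := f.nv_pos hal v (hs w hw).1
      refine (hφA _ (div_pos hp ht0) ?_).trans (le_of_eq ?_)
      · rw [div_le_one ht0]; exact (hs w hw).2.1 v
      · field_simp
  rw [← Finset.sum_filter_add_sum_filter_not s (fun w => Y < Ideal.absNorm (cont w)),
    ← Finset.sum_filter_add_sum_filter_not (s.filter fun w => ¬ Y < Ideal.absNorm (cont w))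
      (fun w => ∃ v, f.nv v w ≤ κ * t)]
  have e1 := (Finset.sum_le_sum fun w hw => hbd w (Finset.mem_filter.1 hw).1).trans
    (hY t ht0 (s.filter fun w => Y < Ideal.absNorm (cont w)) fun w hw => by
      obtain ⟨hw, hw'⟩ := Finset.mem_filter.1 hw
      exact ⟨(hs w hw).1, (hs w hw).2.1, hw'⟩)
  have e2 := (Finset.sum_le_sum fun w hw => hbd w (Finset.mem_filter.1 (Finset.mem_filter.1 hw).1).1).trans
    (hsm t ht0 ((s.filter fun w => ¬ Y < Ideal.absNorm (cont w)).filter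
      fun w => ∃ v, f.nv v w ≤ κ * t) fun w hw => by
      obtain ⟨hw, hw'⟩ := Finset.mem_filter.1 hw
      obtain ⟨hw, hwY⟩ := Finset.mem_filter.1 hw
      exact ⟨(hs w hw).1, (hs w hw).2.1, not_lt.1 hwY, hw'⟩)
  have e3 := ht ((s.filter fun w => ¬ Y < Ideal.absNorm (cont w)).filter
      fun w => ¬ ∃ v, f.nv v w ≤ κ * t) fun w hw => by
    obtain ⟨hw, hw'⟩ := Finset.mem_filter.1 hw
    obtain ⟨hw, hwY⟩ := Finset.mem_filter.1 hw
    exact ⟨(hs w hw).1, not_lt.1 hwY, (hs w hw).2.2⟩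
  have e4 : ∑ w ∈ (s.filter fun w => ¬ Y < Ideal.absNorm (cont w)).filter
      (fun w => ¬ ∃ v, f.nv v w ≤ κ * t), (Ideal.absNorm (cont w) : ℝ) * ∏ v, φ (f.nv v w / t) =
      ∑ w ∈ (s.filter fun w => ¬ Y < Ideal.absNorm (cont w)).filter
      (fun w => ¬ ∃ v, f.nv v w ≤ κ * t),
        (Ideal.absNorm (cont w) : ℝ) * ∏ v, shell φ κ (t⁻¹ • f.P w v) := by
    refine Finset.sum_congr rfl fun w hw => ?_
    obtain ⟨hw, hw'⟩ := Finset.mem_filter.1 hw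
    obtain ⟨hw, hwY⟩ := Finset.mem_filter.1 hw
    congr 1
    refine Finset.prod_congr rfl fun v _ => ?_
    have e5 : en (t⁻¹ • f.P w v) = f.nv v w / t := by
      rw [en_smul, abs_of_pos (inv_pos.2 ht0), inv_mul_eq_div]
      rfl
    rw [shell, e5, if_pos]
    refine ⟨?_, ?_⟩
    · rw [le_div_iff₀ ht0]
      exact (not_le.1 fun h => hw' ⟨v, h⟩).le
    · rw [div_le_one ht0]; exact (hs w hw).2.1 v
  rw [← e4] at e3
  have hD := D_pos K
  have e6 : Z / (q ^ n * D K ^ 4) * (∫ u, shell φ κ u) ^ n ≤ Z / (q ^ n * D K ^ 4) * I ^ n := by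
    have := hI κ hκ hκ1
    have : 0 ≤ ∫ u, shell φ κ u := integral_nonneg h0
    gcongr
  have e7 : (Z / (q ^ n * D K ^ 4) * (∫ u, shell φ κ u) ^ n + δ / 3) * t ^ (n * 4) ≤
      (Z / (q ^ n * D K ^ 4) * I ^ n + δ / 3) * t ^ (n * 4) := by gcongr
  calc _ ≤ δ / 3 * t ^ (n * 4) + (δ / 3 * t ^ (n * 4) +
        (Z / (q ^ n * D K ^ 4) * I ^ n + δ / 3) * t ^ (n * 4)) :=
        add_le_add e1 (add_le_add e2 (e3.trans e7))
    _ = _ := by ring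
end Form
end
end Siegel

/-! ### The radial integral -/

namespace Siegel

/-- With `r = sin θ` this is `∫ sin²θ cos⁴θ`, a Wallis integral. -/
lemma integral_wallis : ∫ r in (0 : ℝ)..1, r ^ 2 * √(1 - r ^ 2) ^ 3 = Real.pi / 32 := by
  have h := intervalIntegral.integral_eq_sub_of_hasDerivAt_of_le (a := 0) (b := 1)
    (f := fun r => Real.arcsin r / 16 + √(1 - r ^ 2) * (-r / 16 + 7 * r ^ 3 / 24 - r ^ 5 / 6))
    (f' := fun r => r ^ 2 * √(1 - r ^ 2) ^ 3) zero_le_one ?_ ?_ ?_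
  · rw [h]; norm_num; ring
  · have := Real.continuous_arcsin
    fun_prop
  · intro r hr
    have hp : 0 < 1 - r ^ 2 := by nlinarith [hr.1, hr.2]
    have hs := Real.sqrt_pos.2 hp
    have hsq := Real.sq_sqrt hp.le
    have h1 := Real.hasDerivAt_arcsin (x := r) (by linarith [hr.1]) (by linarith [hr.2])
    have h2 : HasDerivAt (fun r : ℝ => 1 - r ^ 2) (-(2 * r)) r := by
      simpa using (hasDerivAt_pow 2 r).const_sub 1
    have h3 := h2.sqrt hp.ne'
    have h4 : HasDerivAt (fun r : ℝ => -r / 16 + 7 * r ^ 3 / 24 - r ^ 5 / 6)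
        (-1 / 16 + 7 * (3 * r ^ 2) / 24 - 5 * r ^ 4 / 6) r := by
      have a := (hasDerivAt_id r).neg.div_const 16
      have b := ((hasDerivAt_pow 3 r).const_mul 7).div_const 24
      have c := (hasDerivAt_pow 5 r).div_const 6
      refine ((a.add b).sub c).congr_deriv ?_
      norm_num
    refine ((h1.div_const 16).add (h3.mul h4)).congr_deriv ?_
    set S := √(1 - r ^ 2) with hS
    field_simp
    have e : S ^ 4 = (1 - r ^ 2) ^ 2 := by rw [← hsq]; ring
    rw [hsq, e]
    ring
  · exact (by fun_prop : Continuous fun r : ℝ => r ^ 2 * √(1 - r ^ 2) ^ 3).intervalIntegrable _ _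

/-- The radial profile of the number of lattice points on the slices. -/
noncomputable def prof (ε s : ℝ) : ℝ := s⁻¹ * (√(1 - s ^ 2) + ε * s) ^ 3

lemma prof_nonneg {ε s : ℝ} (hε : 0 ≤ ε) (hs : 0 < s) : 0 ≤ prof ε s := by
  unfold prof; positivity

lemma prof_cont (ε : ℝ) : ContinuousOn (prof ε) (Set.Ioi 0) := by
  unfold prof
  refine ContinuousOn.mul (continuousOn_inv₀.mono fun x hx => ne_of_gt hx) ?_
  fun_prop

lemma sqrt_le_one' (s : ℝ) : √(1 - s ^ 2) ≤ 1 := by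
  rw [Real.sqrt_le_left zero_le_one]; nlinarith [sq_nonneg s]

lemma prof_le {ε s : ℝ} (hε : 0 ≤ ε) (hε1 : ε ≤ 1) (hs : 0 < s) (hs1 : s ≤ 1) :
    prof ε s ≤ 8 / s := by
  unfold prof
  rw [inv_mul_eq_div]
  have h1 := sqrt_le_one' s
  have h2 : √(1 - s ^ 2) + ε * s ≤ 2 := by nlinarith
  have h3 : (√(1 - s ^ 2) + ε * s) ^ 3 ≤ 2 ^ 3 := by gcongr
  gcongr
  linarith

/-- For `ε = 0` and `κ = 0` the integral is exactly `2π² · π/32`. -/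
lemma integral_shell_prof (ε : ℝ) (hε : 0 ≤ ε) (hε1 : ε ≤ 1) (κ : ℝ) :
    ∫ u, shell (prof ε) κ u ≤ 2 * Real.pi ^ 2 * (Real.pi / 32 + 7 * ε / 3) := by
  classical
  have h1 := integral_radial (fun r => if κ ≤ r ∧ r ≤ 1 then prof ε r else 0)
  have h2 : ∫ u, shell (prof ε) κ u =
      ∫ y : Fin 4 → ℝ, (fun r => if κ ≤ r ∧ r ≤ 1 then prof ε r else 0) (en y) := rfl
  rw [h2, h1]
  have hi : ∫ r in (0 : ℝ)..1, (r ^ 2 * √(1 - r ^ 2) ^ 3 + 7 * ε * r ^ 2) =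
      Real.pi / 32 + 7 * ε / 3 := by
    rw [intervalIntegral.integral_add, integral_wallis, intervalIntegral.integral_const_mul]
    · simp; ring
    · exact (by fun_prop : Continuous fun r : ℝ => r ^ 2 * √(1 - r ^ 2) ^ 3).intervalIntegrable _ _
    · exact (by fun_prop : Continuous fun r : ℝ => 7 * ε * r ^ 2).intervalIntegrable _ _
  rw [← hi, intervalIntegral.integral_of_le zero_le_one]
  gcongr
  rw [← integral_indicator measurableSet_Ioi, ← integral_indicator measurableSet_Ioc]
  refine integral_mono_of_nonneg (Eventually.of_forall fun r => ?_) ?_ (Eventually.of_forall fun r => ?_)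
  · refine Set.indicator_nonneg (fun r hr => ?_) _
    have hr : (0 : ℝ) < r := hr
    refine mul_nonneg (by positivity) ?_
    split_ifs
    · exact prof_nonneg hε hr
    · exact le_rfl
  · rw [integrable_indicator_iff measurableSet_Ioc]
    exact ((by fun_prop : Continuous fun r : ℝ => r ^ 2 * √(1 - r ^ 2) ^ 3 + 7 * ε * r ^ 2).integrableOn_Icc).mono_set
      Set.Ioc_subset_Icc_self
  · by_cases hr : 0 < r
    · rw [Set.indicator_of_mem (show r ∈ Set.Ioi 0 from hr)]
      by_cases hr1 : r ≤ 1
      · rw [Set.indicator_of_mem (show r ∈ Set.Ioc 0 1 from ⟨hr, hr1⟩)]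
        have hs := Real.sqrt_nonneg (1 - r ^ 2)
        split_ifs with h
        · have e1 : r ^ 3 * prof ε r = r ^ 2 * (√(1 - r ^ 2) + ε * r) ^ 3 := by
            unfold prof; field_simp
          rw [e1]
          have hs1 := sqrt_le_one' r
          set S := √(1 - r ^ 2)
          have h3 : (S + ε * r) ^ 3 ≤ S ^ 3 + 7 * ε := by
            have a1 : 0 ≤ ε * r := by positivity
            have a2 : ε * r ≤ ε := by nlinarith
            have a3 : (ε * r) ^ 2 ≤ ε := by nlinarith
            have a4 : (ε * r) ^ 3 ≤ ε := by nlinarith [mul_le_mul a3 a2 a1 hε]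
            have a5 : S ^ 2 * (ε * r) ≤ ε := by nlinarith [mul_le_mul_of_nonneg_right (show S ^ 2 ≤ 1 by nlinarith) a1]
            have a6 : S * (ε * r) ^ 2 ≤ ε := by nlinarith [mul_le_mul_of_nonneg_right hs1 (sq_nonneg (ε * r))]
            nlinarith
          nlinarith [mul_le_mul_of_nonneg_left h3 (sq_nonneg r)]
        · rw [mul_zero]; positivity
      · rw [Set.indicator_of_notMem (fun h => hr1 h.2), if_neg (fun h => hr1 h.2), mul_zero]
    · rw [Set.indicator_of_notMem (show r ∉ Set.Ioi 0 from hr),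
        Set.indicator_of_notMem (fun h => hr h.1)]

end Siegel

/-! ### The second moment method -/

namespace Siegel

section
open Classical
/-- Cauchy–Schwarz for the fibres of `g`. -/
lemma card_sq_le {α β : Type*} (s : Finset α) (g : α → β) :
    s.card ^ 2 ≤ (s.image g).card * ((s ×ˢ s).filter fun p => g p.1 = g p.2).card := by
  have h1 := Finset.card_eq_sum_card_image g s
  have h2 : ((s ×ˢ s).filter fun p => g p.1 = g p.2).card =
      ∑ c ∈ s.image g, (s.filter fun x => g x = c).card ^ 2 := by
    rw [Finset.card_eq_sum_card_fiberwise (f := fun p : α × α => g p.1) (t := s.image g)]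
    · refine Finset.sum_congr rfl fun c _ => ?_
      rw [sq, ← Finset.card_product]
      congr 1
      ext ⟨x, y⟩
      simp only [Finset.mem_filter, Finset.mem_product]
      constructor
      · rintro ⟨⟨⟨hx, hy⟩, h⟩, h'⟩
        exact ⟨⟨hx, h'⟩, hy, h ▸ h'⟩
      · rintro ⟨⟨hx, h⟩, hy, h'⟩
        exact ⟨⟨⟨hx, hy⟩, h.trans h'.symm⟩, h⟩
    · intro p hp
      have hp' := Finset.mem_filter.1 (Finset.mem_coe.1 hp)
      exact Finset.mem_coe.2 (Finset.mem_image_of_mem _ (Finset.mem_product.1 hp'.1).1)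
  rw [h1, h2]
  exact sq_sum_le_card_mul_sum_sq

/-- Second moment bound: the weight of the image of `Q` is large if the number of coincidences
is small. Only coincidences within the fibres of `g` are counted, of which each level set of `Q` meets at
most `n0`. -/
lemma second_moment {α β γ : Type*} (X : Finset α) (Q : α → β) (g : α → γ) (τ : β → ℝ) (n0 : ℕ)
    (hn0 : ∀ m, ((X.filter fun x => Q x = m).image g).card ≤ n0) :
    (∑ x ∈ X, τ (Q x)) ^ 2 ≤ (∑ m ∈ X.image Q, τ m ^ 2) *
      (n0 * ((X ×ˢ X).filter fun p => Q p.1 = Q p.2 ∧ g p.1 = g p.2).card) := by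
  have h1 : ∑ x ∈ X, τ (Q x) = ∑ m ∈ X.image Q, τ m * ((X.filter fun x => Q x = m).card : ℝ) := by
    rw [← Finset.sum_fiberwise_of_maps_to (s := X) (t := X.image Q) (g := Q)
      (fun x hx => Finset.mem_image_of_mem _ hx)]
    refine Finset.sum_congr rfl fun m _ => ?_
    rw [Finset.sum_congr rfl (fun x hx => by rw [(Finset.mem_filter.1 hx).2]), Finset.sum_const,
      nsmul_eq_mul, mul_comm]
  rw [h1]
  refine (Finset.sum_mul_sq_le_sq_mul_sq _ _ _).trans ?_
  refine mul_le_mul_of_nonneg_left ?_ (Finset.sum_nonneg fun _ _ => sq_nonneg _)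
  have h2 : ((X ×ˢ X).filter fun p => Q p.1 = Q p.2 ∧ g p.1 = g p.2).card =
      ∑ m ∈ X.image Q, (((X.filter fun x => Q x = m) ×ˢ (X.filter fun x => Q x = m)).filter
        fun p => g p.1 = g p.2).card := by
    rw [Finset.card_eq_sum_card_fiberwise (f := fun p : α × α => Q p.1) (t := X.image Q)]
    · refine Finset.sum_congr rfl fun c _ => ?_
      congr 1
      ext ⟨x, y⟩
      simp only [Finset.mem_filter, Finset.mem_product]
      constructor
      · rintro ⟨⟨⟨hx, hy⟩, h, h'⟩, h''⟩
        exact ⟨⟨⟨hx, h''⟩, hy, h ▸ h''⟩, h'⟩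
      · rintro ⟨⟨⟨hx, h⟩, hy, h'⟩, h''⟩
        exact ⟨⟨⟨hx, hy⟩, h.trans h'.symm, h''⟩, h⟩
    · intro p hp
      have hp' := Finset.mem_filter.1 (Finset.mem_coe.1 hp)
      exact Finset.mem_coe.2 (Finset.mem_image_of_mem _ (Finset.mem_product.1 hp'.1).1)
  rw [h2]
  push_cast
  rw [Finset.mul_sum]
  refine Finset.sum_le_sum fun m _ => ?_
  have h3 := card_sq_le (X.filter fun x => Q x = m) g
  have h4 := h3.trans (Nat.mul_le_mul_right _ (hn0 m))
  exact_mod_cast h4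
end

section
variable {K : Type*} [Field K] [NumberField K] [IsTotallyReal K]
namespace Form
variable (f : Form (𝓞 K))

lemma Q_sub (x y) : f.Q (x - y) = f.Q x - 2 * f.B x y + f.Q y := by
  have h := f.Q_add (x - y) y
  rw [sub_add_cancel, f.B_sub, f.B_self] at h
  linear_combination -h

open Classical in
/-- Few residue classes modulo `q ^ (j + 1)`, where `q = 4 * p`, meet a given level set of `Q` in the coset
`e + q 𝓞⁴`, because the level set is transverse to the direction `e`. -/
lemma class_bound (p j : ℕ) (hp : 0 < p) (e : Fin 4 → 𝓞 K) (u : 𝓞 K)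
    (he : f.Q e = 1 + ((2 * (4 * p) : ℕ) : 𝓞 K) * u) (m : 𝓞 K) (s : Finset (Fin 4 → 𝓞 K))
    (hs : ∀ x ∈ s, (∃ z, x = e + ((4 * p : ℕ) : 𝓞 K) • z) ∧ f.Q x = m) :
    (s.image (Submodule.Quotient.mk (p := dil K (4 * p * (4 * p) ^ j)))).card ≤
      ((4 * p) ^ j) ^ (3 * Fintype.card (K →+* ℝ)) := by
  set n := Fintype.card (K →+* ℝ) with hn
  set q := 4 * p with hq
  have hq0 : 0 < q := by omega
  set M := q ^ j with hM
  have hM0 : 0 < M := pow_pos hq0 _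
  set S := s.image (Submodule.Quotient.mk (p := dil K (q * M))) with hS
  have hch : ∀ c : S, ∃ z : Fin 4 → 𝓞 K, e + (q : 𝓞 K) • z ∈ s ∧
      (Submodule.Quotient.mk (e + (q : 𝓞 K) • z) : _ ⧸ dil K (q * M)) = c.1 := by
    rintro ⟨c, hc⟩
    obtain ⟨x, hx, rfl⟩ := Finset.mem_image.1 hc
    obtain ⟨⟨z, rfl⟩, _⟩ := hs x hx
    exact ⟨z, hx, rfl⟩
  choose Zc hZs hZc using hch
  let I : Ideal (𝓞 K) := Ideal.span {(M : 𝓞 K)}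
  have hIcard : Nat.card (𝓞 K ⧸ I) = M ^ n := by
    have := absNorm_natCast (K := K) M
    exact this
  have := finite_dil (K := K) M hM0
  let Φ : S × (𝓞 K ⧸ I) → (Fin 4 → 𝓞 K) ⧸ dil K M := fun c =>
    Submodule.Quotient.mk (Zc c.1 + Quotient.out c.2 • e)
  have hΦ : Function.Injective Φ := by
    rintro ⟨c, σ⟩ ⟨c', σ'⟩ h
    have h1 := (Submodule.Quotient.eq _).1 h
    obtain ⟨y, hy⟩ := mem_dil.1 h1
    dsimp only at hy
    have hs1 := (hs _ (hZs c)).2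
    have hs2 := (hs _ (hZs c')).2
    have hc1 := hZc c
    have hc2 := hZc c'
    generalize Zc c = z at *
    generalize Zc c' = z' at *
    have hσ : (Submodule.Quotient.mk (Quotient.out σ) : 𝓞 K ⧸ I) = σ := Quotient.out_eq σ
    have hσ' : (Submodule.Quotient.mk (Quotient.out σ') : 𝓞 K ⧸ I) = σ' := Quotient.out_eq σ'
    have hout : σ = σ' → Quotient.out σ = Quotient.out σ' := fun h => by rw [h]
    generalize Quotient.out σ = r at *
    generalize Quotient.out σ' = r' at *
    have hz : z' = z + (r - r') • e - (M : 𝓞 K) • y := by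
      rw [hy, sub_smul]; abel
    set d := r - r' with hd
    have hx : e + (q : 𝓞 K) • z' =
        (e + (q : 𝓞 K) • z) + ((q : 𝓞 K) * d) • e - ((q : 𝓞 K) * M) • y := by
      rw [hz, smul_sub, smul_add, smul_smul, smul_smul]; abel
    have hpq : (q : 𝓞 K) = 4 * p := by rw [hq]; push_cast; ring
    have hp0 : (p : 𝓞 K) ≠ 0 := by exact_mod_cast hp.ne'
    have hBxe : f.B (e + (q : 𝓞 K) • z) e = 1 + ((2 * p : ℕ) : 𝓞 K) * (4 * u + 2 * f.B z e) := by
      rw [f.B_add, f.B_smul, f.B_self, he, hpq]; push_cast; rw [hpq]; ring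
    have heq : d * (1 + ((2 * p : ℕ) : 𝓞 K) * (4 * u + 2 * f.B z e + d * f.Q e)) =
        M * (f.B (e + (q : 𝓞 K) • z + ((q : 𝓞 K) * d) • e) y - 2 * p * M * f.Q y) := by
      rw [hx, f.Q_sub, f.Q_add, hs1, f.Q_smul, f.B_comm _ (((q : 𝓞 K) * d) • e), f.B_smul,
        f.B_comm e, hBxe, f.B_comm _ (((q : 𝓞 K) * M) • y), f.B_smul, f.B_comm y, f.Q_smul] at hs2
      generalize f.B (e + (q : 𝓞 K) • z + ((q : 𝓞 K) * d) • e) y = b1 at hs2 ⊢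
      refine mul_left_cancel₀ (mul_ne_zero (by norm_num : (8 : 𝓞 K) ≠ 0) hp0) ?_
      push_cast at hs2 ⊢
      rw [hpq] at hs2
      linear_combination hs2
    obtain ⟨c0, m0, hc0⟩ := exists_inv_mod (K := K) (2 * p) (2 * j)
      (4 * u + 2 * f.B z e + d * f.Q e)
    have hpow : (((2 * p) ^ (2 * j) : ℕ) : 𝓞 K) = M * p ^ j := by
      have : (2 * p) ^ (2 * j) = M * p ^ j := by
        rw [hM, hq, pow_mul, ← mul_pow]; congr 1; ring
      rw [this]; push_cast; ring
    rw [hpow] at hc0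
    have hdI : d ∈ I := by
      refine Ideal.mem_span_singleton'.2 ⟨c0 * (f.B (e + (q : 𝓞 K) • z + ((q : 𝓞 K) * d) • e) y -
        2 * p * M * f.Q y) - d * p ^ j * m0, ?_⟩
      linear_combination d * hc0 - c0 * heq
    have hσσ : σ = σ' := by
      rw [← hσ, ← hσ', ← sub_eq_zero, ← Submodule.Quotient.mk_sub]
      exact (Submodule.Quotient.mk_eq_zero _).2 hdI
    have hd0 : d = 0 := by rw [hd, hout hσσ, sub_self]
    rw [hd0, mul_zero, zero_smul, add_zero] at hx
    refine Prod.ext (Subtype.ext ?_) hσσ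
    dsimp only
    rw [← hc1, ← hc2]
    refine (Submodule.Quotient.eq _).2 (mem_dil.2 ⟨y, ?_⟩)
    rw [hx]; push_cast; abel
  have hle := Nat.card_le_card_of_injective Φ hΦ
  rw [Nat.card_prod, card_dil M hM0, hIcard, Nat.card_eq_fintype_card, Fintype.card_coe, ← hn] at hle
  refine Nat.le_of_mul_le_mul_right (c := M ^ n) ?_ (pow_pos hM0 _)
  refine hle.trans (le_of_eq ?_)
  rw [← pow_add]; congr 1; ring

end Form
end
end Siegel

/-! ### Counting pairs with equal values -/

namespace Siegel

section
variable {K : Type*} [Field K] [NumberField K] [IsTotallyReal K]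
namespace Form

variable (K) in
/-- The bound `slice` with the sizes `nv v w` normalised by the radius `t`. -/
lemma slice_count (q : ℕ) (hq : 0 < q) : ∃ C : ℝ, 0 < C ∧ ∀ (f : Form (𝓞 K)),
    (∀ v : K →+* ℝ, 0 < σO v f.al) → ∀ (w x0 : Fin 4 → 𝓞 K), w ≠ 0 → ∀ (N : ℕ), 0 < N →
    ∀ (t : ℝ), 0 < t → (∀ v : K →+* ℝ, f.nv v w ≤ t) → ∀ (s : Finset (Fin 4 → 𝓞 K)),
    (∀ z ∈ s, 2 * f.B (x0 + (q : 𝓞 K) • z) w + (N : 𝓞 K) * f.Q w = 0 ∧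
      ∀ v : K →+* ℝ, σO v (f.Q (x0 + (q : 𝓞 K) • z)) ≤ (N / 2 * t) ^ 2) →
    (s.card : ℝ) * ((q : ℝ) ^ (3 * Fintype.card (K →+* ℝ)) * D K ^ 3) ≤
      (4 * Real.pi / 3 * (N / 2) ^ 3 * t ^ 2) ^ Fintype.card (K →+* ℝ) *
      ((Ideal.absNorm (cont w) : ℝ) * ∏ v : K →+* ℝ, prof (2 * C / N) (f.nv v w / t)) := by
  obtain ⟨C, hC0, hC⟩ := slice K q hq
  refine ⟨C, hC0, fun f hal w x0 hw N hN t ht hwt s hs => ?_⟩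
  have hN' : (0 : ℝ) < N := by exact_mod_cast hN
  refine (hC f hal w x0 hw N _ s hs).trans (le_of_eq ?_)
  rw [f.absNorm_Q hal, ← Finset.prod_pow, mul_comm (∏ v, f.nv v w ^ 2), mul_assoc,
    ← Finset.prod_mul_distrib, mul_left_comm, ← Finset.card_univ, ← Finset.prod_const,
    ← Finset.prod_mul_distrib]
  congr 1
  refine Finset.prod_congr rfl fun v _ => ?_
  have hnv := f.nv_pos hal v hw
  rw [← f.nv_sq hal v]
  have h1 := hwt v
  generalize f.nv v w = r at *
  have h2 : (N / 2 * t) ^ 2 / r ^ 2 - (N : ℝ) ^ 2 / 4 =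
      (N / 2 / (r / t)) ^ 2 * (1 - (r / t) ^ 2) := by
    field_simp
    ring
  rw [h2, Real.sqrt_mul (sq_nonneg _), Real.sqrt_sq (by positivity), prof]
  field_simp

open Classical in
/-- The number of pairs in `e + q 𝓞⁴` within height `V` which are congruent modulo `N` and
represent the same value. -/
lemma pairs_bound (f : Form (𝓞 K)) (hal : ∀ v : K →+* ℝ, 0 < σO v f.al)
    (p : ℕ) (hp : 0 < p) (C : ℝ) (hC0 : 0 < C)
    (hC : ∀ (w x0 : Fin 4 → 𝓞 K), w ≠ 0 → ∀ (N : ℕ), 0 < N →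
    ∀ (t : ℝ), 0 < t → (∀ v : K →+* ℝ, f.nv v w ≤ t) → ∀ (s : Finset (Fin 4 → 𝓞 K)),
    (∀ z ∈ s, 2 * f.B (x0 + ((4 * p : ℕ) : 𝓞 K) • z) w + (N : 𝓞 K) * f.Q w = 0 ∧
      ∀ v : K →+* ℝ, σO v (f.Q (x0 + ((4 * p : ℕ) : 𝓞 K) • z)) ≤ (N / 2 * t) ^ 2) →
    (s.card : ℝ) * (((4 * p : ℕ) : ℝ) ^ (3 * Fintype.card (K →+* ℝ)) * D K ^ 3) ≤
      (4 * Real.pi / 3 * (N / 2) ^ 3 * t ^ 2) ^ Fintype.card (K →+* ℝ) *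
      ((Ideal.absNorm (cont w) : ℝ) * ∏ v : K →+* ℝ, prof (2 * C / N) (f.nv v w / t)))
    (e : Fin 4 → 𝓞 K) (u : 𝓞 K) (he : f.Q e = 1 + ((4 * p : ℕ) : 𝓞 K) * u)
    (Z : ℝ) (hZ : ∀ s : Finset (Ideal (𝓞 K)), (∀ I ∈ s, (Ideal.absNorm I).Coprime (4 * p)) →
      ∑ I ∈ s, ((Ideal.absNorm I : ℝ) ^ 3)⁻¹ ≤ Z)
    (N : ℕ) (hN : 0 < N) (hqN : 2 * (4 * p) ∣ N) (hCN : 2 * C / N ≤ 1) (δ : ℝ) (hδ : 0 < δ) :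
    ∀ᶠ V : ℝ in atTop, ∀ X : Finset (Fin 4 → 𝓞 K),
      (∀ x ∈ X, (∃ z, x = e + ((4 * p : ℕ) : 𝓞 K) • z) ∧ ∀ v, f.nv v x ≤ V) →
      (((X ×ˢ X).filter fun c => f.Q c.1 = f.Q c.2 ∧
        (Submodule.Quotient.mk c.1 : _ ⧸ dil K N) = Submodule.Quotient.mk c.2).card : ℝ) ≤
      X.card + (4 * Real.pi / 3 * (N / 2) ^ 3 * (2 * V / N) ^ 2) ^ Fintype.card (K →+* ℝ) /
        (((4 * p : ℕ) : ℝ) ^ (3 * Fintype.card (K →+* ℝ)) * D K ^ 3) *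
        ((Z / (((4 * p : ℕ) : ℝ) ^ Fintype.card (K →+* ℝ) * D K ^ 4) *
          (2 * Real.pi ^ 2 * (Real.pi / 32 + 7 * (2 * C / N) / 3)) ^ Fintype.card (K →+* ℝ) + δ) *
          (2 * V / N) ^ (Fintype.card (K →+* ℝ) * 4)) := by
  set n := Fintype.card (K →+* ℝ) with hn
  set q := 4 * p with hq
  have hq0 : 0 < q := by omega
  have hN' : (0 : ℝ) < N := by exact_mod_cast hN
  have hN0 : (N : 𝓞 K) ≠ 0 := by exact_mod_cast hN.ne'
  have hq0' : (q : 𝓞 K) ≠ 0 := by exact_mod_cast hq0.ne'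
  have hε : 0 ≤ 2 * C / N := by positivity
  have hms := f.moment_sum hal q (by omega) e u he Z hZ (prof (2 * C / N))
    (fun s hs => prof_nonneg hε hs) (prof_cont _) 8 (by norm_num)
    (fun s hs hs1 => prof_le hε hCN hs hs1) _
    (fun κ _ _ => integral_shell_prof _ hε hCN κ) δ hδ
  have htt : Tendsto (fun V : ℝ => 2 * V / N) atTop atTop :=
    (tendsto_id.const_mul_atTop (by norm_num : (0 : ℝ) < 2)).atTop_div_const hN'
  filter_upwards [htt.eventually hms, eventually_gt_atTop 0] with V hV hV0 X hX
  set t := 2 * V / N with ht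
  have ht0 : 0 < t := by positivity
  have hVt : V = N / 2 * t := by rw [ht]; field_simp
  set Pr := (X ×ˢ X).filter fun c => f.Q c.1 = f.Q c.2 ∧
        (Submodule.Quotient.mk c.1 : _ ⧸ dil K N) = Submodule.Quotient.mk c.2 with hPr
  have hPrm : ∀ c ∈ Pr, c.1 ∈ X ∧ c.2 ∈ X ∧ f.Q c.1 = f.Q c.2 ∧
      ∃ w, c.2 = c.1 + (N : 𝓞 K) • w := by
    intro c hc
    obtain ⟨h1, h2, h3⟩ := Finset.mem_filter.1 hc
    obtain ⟨h4, h5⟩ := Finset.mem_product.1 h1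
    obtain ⟨y, hy⟩ := mem_dil.1 ((Submodule.Quotient.eq _).1 h3.symm)
    exact ⟨h4, h5, h2, y, by rw [hy]; abel⟩
  rw [← Finset.card_filter_add_card_filter_not (s := Pr) (fun c => c.1 = c.2)]
  push_cast
  -- the diagonal pairs, and then the others, sorted by the difference `w = (x' - x) / N`
  refine add_le_add ?_ ?_
  · have : (Pr.filter fun c => c.1 = c.2).card ≤ X.card := by
      refine Finset.card_le_card_of_injOn (fun c => c.1) ?_ ?_
      · intro c hc
        exact (hPrm c (Finset.mem_filter.1 (Finset.mem_coe.1 hc)).1).1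
      · intro c hc d hd h
        have hc' := (Finset.mem_filter.1 (Finset.mem_coe.1 hc)).2
        have hd' := (Finset.mem_filter.1 (Finset.mem_coe.1 hd)).2
        exact Prod.ext h (by rw [← hc', ← hd']; exact h)
    exact_mod_cast this
  set R := Pr.filter fun c => ¬ c.1 = c.2 with hR
  choose! wf hwf using fun c hc => (hPrm c hc).2.2.2
  choose! zf hzf using fun x hx => (hX x hx).1
  have hRP : ∀ c ∈ R, c ∈ Pr := fun c hc => (Finset.mem_filter.1 hc).1
  have hw0 : ∀ c ∈ R, wf c ≠ 0 := by
    intro c hc h0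
    have h1 := hwf c (hRP c hc)
    rw [h0, smul_zero, add_zero] at h1
    exact (Finset.mem_filter.1 hc).2 h1.symm
  have hlin : ∀ c ∈ R, 2 * f.B c.1 (wf c) + (N : 𝓞 K) * f.Q (wf c) = 0 := by
    intro c hc
    have h1 := (hPrm c (hRP c hc)).2.2.1
    rw [hwf c (hRP c hc), f.Q_add, f.B_comm c.1, f.B_smul, f.B_comm _ c.1, f.Q_smul] at h1
    refine mul_left_cancel₀ hN0 ?_
    linear_combination -h1
  have hnvw : ∀ c ∈ R, ∀ v, f.nv v (wf c) ≤ t := by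
    intro c hc v
    have h0 := hPrm c (hRP c hc)
    have h1 : (N : 𝓞 K) • wf c = c.2 - c.1 := by
      have := hwf c (hRP c hc)
      rw [eq_sub_iff_add_eq, add_comm]; exact this.symm
    have h2 : f.nv v ((N : 𝓞 K) • wf c) ≤ 2 * V := by
      rw [h1]
      have h3 := (hX _ h0.1).2 v
      have h4 := (hX _ h0.2.1).2 v
      have h5 : f.P (c.2 - c.1) v = f.P c.2 v + (-1 : ℝ) • f.P c.1 v := by
        rw [map_sub, Pi.sub_apply, neg_one_smul, sub_eq_add_neg]
      have h6 : f.nv v (c.2 - c.1) ≤ f.nv v c.2 + f.nv v c.1 := by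
        rw [nv, h5]
        refine (en_add_le _ _).trans ?_
        rw [en_smul]; simp [nv]
      linarith
    have h3 : f.nv v ((N : 𝓞 K) • wf c) = N * f.nv v (wf c) := by
      rw [f.nv_eq hal, f.nv_eq hal, f.Q_smul, map_mul, map_pow, map_natCast,
        Real.sqrt_mul (sq_nonneg _), Real.sqrt_sq hN'.le]
    rw [h3] at h2
    rw [ht, le_div_iff₀ hN']; linarith
  have hcond : ∀ c ∈ R, ∃ b0 ∈ cont (wf c), f.B e (wf c) = q * b0 := by
    intro c hc
    obtain ⟨k, hk⟩ := hqN
    have h1 := hlin c hc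
    have h2 := hzf c.1 (hPrm c (hRP c hc)).1
    rw [h2, f.B_add, f.B_smul, hk] at h1
    refine ⟨-(f.B (zf c.1) (wf c)) - k * f.Q (wf c), ?_, ?_⟩
    · refine sub_mem (neg_mem ?_) (Ideal.mul_mem_left _ _ ?_)
      · rw [← f.range_Blin]; exact ⟨_, rfl⟩
      · rw [← f.range_Blin, ← f.B_self]; exact ⟨_, rfl⟩
    · refine mul_left_cancel₀ (two_ne_zero : (2 : 𝓞 K) ≠ 0) ?_
      push_cast at h1 ⊢
      linear_combination h1
  have hV2 := hV (R.image wf) (by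
    intro w hw
    obtain ⟨c, hc, rfl⟩ := Finset.mem_image.1 hw
    exact ⟨hw0 c hc, hnvw c hc, hcond c hc⟩)
  rw [Finset.card_eq_sum_card_image wf R]
  push_cast
  have hDq : 0 < ((q : ℕ) : ℝ) ^ (3 * n) * D K ^ 3 :=
    mul_pos (pow_pos (by exact_mod_cast hq0) _) (pow_pos (D_pos K) _)
  rw [div_mul_eq_mul_div, le_div_iff₀ hDq, Finset.sum_mul]
  refine le_trans (Finset.sum_le_sum (g := fun w => (4 * Real.pi / 3 * (N / 2) ^ 3 * t ^ 2) ^ n *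
      ((Ideal.absNorm (cont w) : ℝ) * ∏ v : K →+* ℝ, prof (2 * C / N) (f.nv v w / t)))
      fun w hw => ?_) ?_
  · obtain ⟨c0, hc0, hc0w⟩ := Finset.mem_image.1 hw
    have hcard : (R.filter fun c => wf c = w).card =
        ((R.filter fun c => wf c = w).image fun c => zf c.1).card := by
      refine (Finset.card_image_of_injOn ?_).symm
      intro c hc d hd h
      have hc' := Finset.mem_filter.1 (Finset.mem_coe.1 hc)
      have hd' := Finset.mem_filter.1 (Finset.mem_coe.1 hd)
      have h1 : c.1 = d.1 := by
        rw [hzf c.1 (hPrm c (hRP c hc'.1)).1, hzf d.1 (hPrm d (hRP d hd'.1)).1]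
        dsimp only at h; rw [h]
      refine Prod.ext h1 ?_
      rw [hwf c (hRP c hc'.1), hwf d (hRP d hd'.1), h1, hc'.2, hd'.2]
    rw [hcard]
    refine hC w e ?_ N hN t ht0 ?_ _ ?_
    · rw [← hc0w]; exact hw0 c0 hc0
    · rw [← hc0w]; exact hnvw c0 hc0
    · intro z hz
      obtain ⟨c, hc, rfl⟩ := Finset.mem_image.1 hz
      have hc' := Finset.mem_filter.1 hc
      have hcX := (hPrm c (hRP c hc'.1)).1
      have h2 := hzf c.1 hcX
      rw [← h2]
      refine ⟨by rw [← hc'.2]; exact hlin c hc'.1, fun v => ?_⟩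
      rw [← f.nv_sq hal, ← hVt]
      exact pow_le_pow_left₀ (Real.sqrt_nonneg _) ((hX _ hcX).2 v) 2
  · rw [← Finset.mul_sum]
    exact mul_le_mul_of_nonneg_left hV2 (by positivity)

end Form
end
end Siegel

/-! ### First moments -/

namespace Siegel

/-- A sum over the source of an injective map as a finite sum over its target. -/
lemma tsum_reindex {α β : Type*} (X : Finset β) (g : α → β) (hg : Function.Injective g)
    (F : β → ℝ) (hX : ∀ x ∈ X, ∃ y, g y = x) (h0 : ∀ y, g y ∉ X → F (g y) = 0) :
    ∑' y, F (g y) = ∑ x ∈ X, F x := by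
  classical
  rw [tsum_eq_sum (s := X.preimage g hg.injOn)
    (fun y hy => h0 y fun h => hy (Finset.mem_preimage.2 h))]
  rw [Finset.sum_preimage' g X hg.injOn F, Finset.filter_true_of_mem]
  exact fun x hx => hX x hx

section
variable {K : Type*} [Field K] [NumberField K] [IsTotallyReal K]

namespace Form
variable (f : Form (𝓞 K))

/-- Sums of a radial weight over the points of `e + q 𝓞⁴` of height at most `V`. -/
lemma coset_sum (hal : ∀ v : K →+* ℝ, 0 < σO v f.al) (φ : ℝ → ℝ) (hφ : Continuous φ)
    (hφ1 : ∀ s, 0 ≤ s → s ≤ 1 → |φ s| ≤ 1) (e : Fin 4 → 𝓞 K) (q : ℕ) (hq : 0 < q)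
    (X : ℝ → Finset (Fin 4 → 𝓞 K))
    (hX : ∀ V x, x ∈ X V ↔ (∃ z, x = e + (q : 𝓞 K) • z) ∧ ∀ v, f.nv v x ≤ V) :
    Tendsto (fun V : ℝ => (∑ x ∈ X V, ∏ v : K →+* ℝ, φ (f.nv v x / V)) /
      V ^ (Fintype.card (K →+* ℝ) * 4)) atTop
      (𝓝 ((∫ u : Fin 4 → ℝ, if en u ≤ 1 then φ (en u) else 0) ^ Fintype.card (K →+* ℝ) /
        (D K ^ 4 * (q : ℝ) ^ (Fintype.card (K →+* ℝ) * 4)))) := by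
  classical
  set G : (Fin 4 → ℝ) → ℝ := fun u => if en u ≤ 1 then φ (en u) else 0 with hG
  have hGm : Measurable G :=
    Measurable.ite (measurableSet_le continuous_en.measurable measurable_const)
      (hφ.comp continuous_en).measurable measurable_const
  have hGc : ∀ᵐ u, ContinuousAt G u := by
    have h2 : ∀ᵐ u : Fin 4 → ℝ, en u ≠ 1 := by
      rw [ae_iff]; simpa using volume_en_eq 1 one_ne_zero
    filter_upwards [h2] with u hu
    rcases lt_or_gt_of_ne hu with h | h
    · refine (hφ.comp continuous_en).continuousAt.congr ?_
      filter_upwards [(isOpen_lt continuous_en continuous_const).mem_nhds h] with x hx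
      rw [hG]; dsimp only; rw [if_pos (le_of_lt hx)]; rfl
    · refine (continuousAt_const (y := (0 : ℝ))).congr ?_
      filter_upwards [(isOpen_lt continuous_const continuous_en).mem_nhds h] with x hx
      rw [hG]; dsimp only; rw [if_neg (not_le.2 hx)]
  have h := riemann_prod (K := K) (κ := Fin 4) (fun v => (f.at_ v).ψ)
      (fun v => by rw [det_ψ _ (hal v), abs_one]) G 1 2 (by norm_num) ?_ ?_ hGm hGc e q hq
  · rw [Fintype.card_fin] at h
    refine h.congr' ?_
    filter_upwards [eventually_gt_atTop 0] with V hV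
    congr 1
    have hterm : ∀ x : Fin 4 → 𝓞 K, ∏ v : K →+* ℝ, G (V⁻¹ • f.P x v) =
        if (∀ v, f.nv v x ≤ V) then ∏ v : K →+* ℝ, φ (f.nv v x / V) else 0 := by
      intro x
      have hen : ∀ v, en (V⁻¹ • f.P x v) = f.nv v x / V := fun v => by
        rw [en_smul, abs_of_pos (by positivity), inv_mul_eq_div]; rfl
      split_ifs with hx
      · refine Finset.prod_congr rfl fun v _ => ?_
        rw [hG]; dsimp only
        rw [hen, if_pos ((div_le_one hV).2 (hx v))]
      · push Not at hx
        obtain ⟨v, hv⟩ := hx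
        refine Finset.prod_eq_zero (Finset.mem_univ v) ?_
        rw [hG]; dsimp only
        rw [hen, if_neg (by rw [div_le_one hV]; exact not_le.2 hv)]
    change ∑' y : Fin 4 → 𝓞 K, ∏ v : K →+* ℝ, G (V⁻¹ • f.P (e + q • y) v) = _
    have hinj : Function.Injective fun y : Fin 4 → 𝓞 K => e + q • y := fun y y' h => by
      have := add_left_cancel h
      ext i
      have hi := congrFun this i
      simp only [Pi.smul_apply, nsmul_eq_mul] at hi
      rw [mul_left_cancel₀ (by exact_mod_cast hq.ne') hi]
    have hXy : ∀ y, e + q • y ∈ X V ↔ ∀ v, f.nv v (e + q • y) ≤ V := fun y => by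
      rw [hX]
      exact ⟨fun h => h.2, fun h => ⟨⟨y, by rw [Nat.cast_smul_eq_nsmul]⟩, h⟩⟩
    rw [tsum_reindex (X V) (fun y => e + q • y) hinj
      (fun x => ∏ v : K →+* ℝ, G (V⁻¹ • f.P x v))]
    · refine Finset.sum_congr rfl fun x hx => ?_
      rw [hterm, if_pos ((hX V x).1 hx).2]
    · intro x hx
      obtain ⟨z, hz⟩ := ((hX V x).1 hx).1
      exact ⟨z, by rw [hz, Nat.cast_smul_eq_nsmul]⟩
    · intro y hy
      rw [hterm, if_neg]
      exact fun h => hy ((hXy y).2 h)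
  · intro u
    rw [hG]; dsimp only
    split_ifs with hu
    · exact hφ1 _ (en_nonneg u) hu
    · simp
  · intro u hu
    rw [hG]; dsimp only
    rw [if_neg]
    have := norm_le_en u
    linarith

end Form

/-- The second moment of the unit ball of `ℝ⁴`. -/
lemma integral_ball_sq :
    ∫ u : Fin 4 → ℝ, (if en u ≤ 1 then en u ^ 2 else 0) = Real.pi ^ 2 / 3 := by
  rw [integral_radial (fun s => if s ≤ 1 then s ^ 2 else 0)]
  have h1 : ∀ r : ℝ, r ^ 3 * (if r ≤ 1 then r ^ 2 else 0) =
      Set.indicator (Set.Iic 1) (fun r => r ^ 5) r := by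
    intro r
    by_cases h : r ≤ 1
    · rw [if_pos h, Set.indicator_of_mem (Set.mem_Iic.2 h)]; ring
    · rw [if_neg h, Set.indicator_of_notMem (by simpa using h), mul_zero]
  simp_rw [h1]
  rw [setIntegral_indicator measurableSet_Iic, Set.Ioi_inter_Iic,
    ← intervalIntegral.integral_of_le zero_le_one, integral_pow]
  norm_num
  ring

open Classical in
/-- Sums of squared norms over the totally nonnegative `m ≡ 1` modulo `q`. -/
lemma target_sum (q : ℕ) (hq : 0 < q) (T : ℝ → Finset (𝓞 K))
    (hT : ∀ V m, m ∈ T V ↔ (∃ z, m = 1 + (q : 𝓞 K) * z) ∧ ∀ v, 0 ≤ σO v m ∧ σO v m ≤ V) :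
    Tendsto (fun V : ℝ => (∑ m ∈ T V, (Ideal.absNorm (Ideal.span {m}) : ℝ) ^ 2) /
      V ^ (Fintype.card (K →+* ℝ) * 3)) atTop
      (𝓝 ((1 / 3 : ℝ) ^ Fintype.card (K →+* ℝ) /
        (D K * (q : ℝ) ^ Fintype.card (K →+* ℝ)))) := by
  set G : (Fin 1 → ℝ) → ℝ := fun u => if 0 ≤ u 0 ∧ u 0 ≤ 1 then u 0 ^ 2 else 0 with hG
  have hset : MeasurableSet {u : Fin 1 → ℝ | 0 ≤ u 0 ∧ u 0 ≤ 1} :=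
    (measurableSet_le measurable_const (measurable_pi_apply 0)).inter
      (measurableSet_le (measurable_pi_apply 0) measurable_const)
  have hGm : Measurable G :=
    Measurable.ite hset ((measurable_pi_apply 0).pow_const 2) measurable_const
  have hnull : ∀ c : ℝ, ∀ᵐ u : Fin 1 → ℝ, u 0 ≠ c := by
    intro c
    rw [ae_iff]
    have := (volume_preserving_funUnique (Fin 1) ℝ).measure_preimage
      (measurableSet_singleton c).nullMeasurableSet
    rw [Real.volume_singleton] at this
    rw [← this]
    congr 1
    ext u; simp
  have hGc : ∀ᵐ u, ContinuousAt G u := by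
    filter_upwards [hnull 0, hnull 1] with u h0 h1
    have hc : Continuous fun u : Fin 1 → ℝ => u 0 := continuous_apply 0
    rcases lt_or_gt_of_ne h0 with h | h
    · refine (continuousAt_const (y := (0 : ℝ))).congr ?_
      filter_upwards [(isOpen_lt hc continuous_const).mem_nhds h] with x hx
      rw [hG]; dsimp only; rw [if_neg]
      exact fun h' => h'.1.not_gt hx
    · rcases lt_or_gt_of_ne h1 with h' | h'
      · refine (hc.pow 2).continuousAt.congr ?_
        filter_upwards [(isOpen_lt hc continuous_const).mem_nhds h',
          (isOpen_lt continuous_const hc).mem_nhds h] with x hx hx'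
        rw [hG]; dsimp only; rw [if_pos ⟨le_of_lt hx', le_of_lt hx⟩]; rfl
      · refine (continuousAt_const (y := (0 : ℝ))).congr ?_
        filter_upwards [(isOpen_lt continuous_const hc).mem_nhds h'] with x hx
        rw [hG]; dsimp only; rw [if_neg]
        exact fun h' => h'.2.not_gt hx
  have hint : ∫ u, G u = 1 / 3 := by
    have h1 := (volume_preserving_funUnique (Fin 1) ℝ).integral_comp'
      (fun x : ℝ => if 0 ≤ x ∧ x ≤ 1 then x ^ 2 else 0)
    have h2 : ∫ u, G u = ∫ x : ℝ, if 0 ≤ x ∧ x ≤ 1 then x ^ 2 else 0 := by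
      rw [← h1]; rfl
    rw [h2]
    have h3 : ∀ x : ℝ, (if 0 ≤ x ∧ x ≤ 1 then x ^ 2 else 0) =
        Set.indicator (Set.Icc 0 1) (fun x => x ^ 2) x := fun x => by
      rw [Set.indicator_apply]; rfl
    simp_rw [h3]
    rw [integral_indicator measurableSet_Icc, integral_Icc_eq_integral_Ioc,
      ← intervalIntegral.integral_of_le zero_le_one, integral_pow]
    norm_num
  have h := riemann_prod (K := K) (κ := Fin 1) (fun v => LinearMap.id)
      (fun v => by simp) G 1 2 (by norm_num) ?_ ?_ hGm hGc (fun _ => 1) q hq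
  · rw [Fintype.card_fin, hint, pow_one, mul_one] at h
    refine h.congr' ?_
    filter_upwards [eventually_gt_atTop 0] with V hV
    have hterm : ∀ x : 𝓞 K, ∏ v : K →+* ℝ, G (V⁻¹ • fun _ => σO v x) =
        (if (∀ v, 0 ≤ σO v x ∧ σO v x ≤ V) then
          (Ideal.absNorm (Ideal.span {x}) : ℝ) ^ 2 else 0) / V ^ (Fintype.card (K →+* ℝ) * 2) := by
      intro x
      have hiff : ∀ v, (0 ≤ V⁻¹ * σO v x ∧ V⁻¹ * σO v x ≤ 1) ↔ (0 ≤ σO v x ∧ σO v x ≤ V) := by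
        intro v
        rw [inv_mul_eq_div, div_le_one hV, le_div_iff₀ hV, zero_mul]
      split_ifs with hx
      · rw [absNorm_span, pow_mul', ← Finset.prod_pow, ← Finset.card_univ, ← Finset.prod_const,
          ← Finset.prod_div_distrib]
        refine Finset.prod_congr rfl fun v _ => ?_
        rw [hG]; dsimp only [Pi.smul_apply, smul_eq_mul]
        rw [if_pos ((hiff v).2 (hx v)), sq_abs]
        field_simp
      · push Not at hx
        obtain ⟨v, hv⟩ := hx
        rw [zero_div]
        refine Finset.prod_eq_zero (Finset.mem_univ v) ?_
        rw [hG]; dsimp only [Pi.smul_apply, smul_eq_mul]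
        rw [if_neg]
        intro h
        have := (hiff v).1 h
        exact this.2.not_gt (hv this.1)
    change (∑' y : Fin 1 → 𝓞 K, ∏ v : K →+* ℝ, G (V⁻¹ • fun j => σO v (1 + q • y j))) / _ = _
    have hj : ∀ (y : Fin 1 → 𝓞 K) (v : K →+* ℝ), (fun j : Fin 1 => σO v (1 + q • y j)) =
        fun _ => σO v (1 + q • y 0) := fun y v => by
      funext j; rw [Subsingleton.elim j 0]
    simp_rw [hj, hterm]
    rw [tsum_div_const, div_div, ← pow_add, ← mul_add_one]
    congr 1
    have hinj : Function.Injective fun y : Fin 1 → 𝓞 K => 1 + q • y 0 := fun y y' h => by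
      have hi := add_left_cancel h
      ext i
      rw [Subsingleton.elim i 0]
      simp only [nsmul_eq_mul] at hi
      rw [mul_left_cancel₀ (by exact_mod_cast hq.ne') hi]
    have hTy : ∀ y : 𝓞 K, 1 + q • y ∈ T V ↔
        ∀ v, 0 ≤ σO v (1 + q • y) ∧ σO v (1 + q • y) ≤ V := fun y => by
      rw [hT]
      exact ⟨fun h => h.2, fun h => ⟨⟨y, by rw [nsmul_eq_mul]⟩, h⟩⟩
    rw [tsum_reindex (T V) (fun y : Fin 1 → 𝓞 K => 1 + q • y 0) hinj
      (fun x => if (∀ v, 0 ≤ σO v x ∧ σO v x ≤ V) then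
          (Ideal.absNorm (Ideal.span {x}) : ℝ) ^ 2 else 0)]
    · refine Finset.sum_congr rfl fun x hx => ?_
      rw [if_pos ((hT V x).1 hx).2]
    · intro x hx
      obtain ⟨z, hz⟩ := ((hT V x).1 hx).1
      exact ⟨fun _ => z, by rw [hz, nsmul_eq_mul]⟩
    · intro y hy
      rw [if_neg]
      exact fun h => hy ((hTy (y 0)).2 h)
  · intro u
    rw [hG]; dsimp only
    split_ifs with hu
    · rw [abs_of_nonneg (sq_nonneg _)]; exact pow_le_one₀ hu.1 hu.2
    · simp
  · intro u hu
    rw [hG]; dsimp only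
    rw [if_neg]
    rintro ⟨h1, h2⟩
    have : ‖u‖ ≤ 1 := (pi_norm_le_iff_of_nonneg zero_le_one).2 fun i => by
      rw [Subsingleton.elim i 0, Real.norm_eq_abs, abs_le]; constructor <;> linarith
    linarith

end
end Siegel

/-! ### Common values of two forms -/

namespace Siegel

section
variable (K : Type*) [Field K] [NumberField K] [IsTotallyReal K]

/-- The sum of four squares as a form. -/
def Form.std (R : Type*) [CommRing R] : Form R := ⟨0, 0, 1, 1, by ring⟩

set_option maxHeartbeats 400000 in
open Classical in
/-- A form `Q` with one value `≡ 1` modulo `2 (4 p)` represents more than half of the totally nonnegative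
`m ≡ 1` modulo `2 (4 p)`, when `m` is counted with weight `N(m)²`. The total weight up to height `V²`
is asymptotic to the expression multiplied by `3 / 5`. -/
lemma cover : ∃ p : ℕ, 0 < p ∧ ∀ (f : Form (𝓞 K)), (∀ v : K →+* ℝ, 0 < σO v f.al) →
    ∀ (e : Fin 4 → 𝓞 K) (u : 𝓞 K), f.Q e = 1 + ((2 * (4 * p) : ℕ) : 𝓞 K) * u →
    ∀ T : ℝ → Finset (𝓞 K),
    (∀ V m, m ∈ T V ↔ (∃ z, m = 1 + ((2 * (4 * p) : ℕ) : 𝓞 K) * z) ∧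
      ∀ v, 0 ≤ σO v m ∧ σO v m ≤ V) →
    ∀ᶠ V : ℝ in atTop,
      3 / 5 * ((1 / 3 : ℝ) ^ Fintype.card (K →+* ℝ) /
        (D K * ((2 * (4 * p) : ℕ) : ℝ) ^ Fintype.card (K →+* ℝ))) *
        (V ^ 2) ^ (Fintype.card (K →+* ℝ) * 3) ≤
      ∑ m ∈ (T (V ^ 2)).filter (fun m => ∃ x, f.Q x = m),
        (Ideal.absNorm (Ideal.span {m}) : ℝ) ^ 2 := by
  obtain ⟨P, hP⟩ := zeta_coprime K
  refine ⟨P.factorial, P.factorial_pos, fun f hal e u he T hT => ?_⟩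
  generalize hp : P.factorial = p at *
  have hp0 : 0 < p := hp ▸ P.factorial_pos
  set n := Fintype.card (K →+* ℝ) with hn
  obtain ⟨C, hC0, hC⟩ := Form.slice_count K (4 * p) (by omega)
  have hZ := hP (4 * p) (dvd_mul_left _ _)
  have hD := D_pos K
  have hq0 : 0 < 4 * p := by omega
  set q := 4 * p with hq
  have hqR : (0 : ℝ) < q := by exact_mod_cast hq0
  have hpi := Real.pi_pos
  set Θ : ℝ := (2 * Real.pi ^ 4 / 3) ^ n / ((q : ℝ) ^ (7 * n) * D K ^ 7) with hΘ
  have hΘ0 : 0 < Θ := by positivity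
  -- the modulus is taken large enough to make the boundary term of each slice negligible
  have hNj : Tendsto (fun j : ℕ => 2 * C / ((q * q ^ (j + 1) : ℕ) : ℝ)) atTop (𝓝 0) := by
    have h1 : Tendsto (fun j : ℕ => ((q * q ^ (j + 1) : ℕ) : ℝ)) atTop atTop := by
      refine tendsto_natCast_atTop_atTop.comp ?_
      refine tendsto_atTop_mono (f := fun j => j) (fun j => ?_) tendsto_id
      have h2 := Nat.lt_pow_self (n := j + 1) (show 1 < q by omega)
      have h3 := Nat.le_mul_of_pos_left (q ^ (j + 1)) hq0
      omega
    exact h1.const_div_atTop _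
  let Jf : ℝ → ℝ := fun ε => (32 * Real.pi / 3) ^ n / ((q : ℝ) ^ (6 * n) * D K ^ 3) *
    (4 / 3 / ((q : ℝ) ^ n * D K ^ 4) * (2 * Real.pi ^ 2 * (Real.pi / 32 + 7 * ε / 3)) ^ n)
  have hJ0 : Jf 0 = 4 / 3 * Θ := by
    simp only [Jf, hΘ]
    have e1 : (2 * Real.pi ^ 4 / 3) ^ n =
        (32 * Real.pi / 3) ^ n * (2 * Real.pi ^ 2 * (Real.pi / 32 + 7 * 0 / 3)) ^ n := by
      rw [← mul_pow]; congr 1; ring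
    have e2 : (q : ℝ) ^ (7 * n) = (q : ℝ) ^ (6 * n) * (q : ℝ) ^ n := by rw [← pow_add]; congr 1; ring
    rw [e1, e2]
    field_simp
  have hJc : Continuous Jf := by fun_prop
  have hJlim := (hJc.tendsto 0).comp hNj
  -- the off-diagonal pairs contribute `17 / 12 + 1 / 24` and the diagonal ones `1 / 24`, at most `3 / 2` in
  -- total; then Cauchy–Schwarz gives the proportion `(19 / 20)² / (3 / 2) > 3 / 5`
  have hlt : Jf 0 < 17 / 12 * Θ := by rw [hJ0]; linarith
  obtain ⟨j0, hj1, hj2⟩ := ((hNj.eventually (gt_mem_nhds one_pos)).and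
    (hJlim.eventually (gt_mem_nhds hlt))).exists
  set j := j0 + 1 with hj
  set N := q * q ^ j with hN
  have hN0 : 0 < N := Nat.mul_pos hq0 (pow_pos hq0 _)
  have hqN : 2 * q ∣ N := by
    rw [hN, mul_comm 2]
    refine Nat.mul_dvd_mul_left _ ?_
    rw [hj, pow_succ, hq]
    exact Dvd.dvd.mul_left ⟨2 * p, by ring⟩ _
  set n0 := (q ^ j) ^ (3 * n) with hn0
  have hn00 : 0 < n0 := pow_pos (pow_pos hq0 _) _
  set c1 : ℝ := (32 * Real.pi / 3) ^ n / ((q : ℝ) ^ (6 * n) * D K ^ 3) with hc1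
  have hc10 : 0 < c1 := by positivity
  have hpb := f.pairs_bound hal p hp0 C hC0 (hC f hal) e (2 * u)
    (by rw [he, hq]; push_cast; ring) (4 / 3) hZ N hN0 hqN hj1.le (Θ / 24 / c1) (by positivity)
  have hfin := fun V => f.finite_ball hal V
  obtain ⟨X, hX⟩ : ∃ X : ℝ → Finset (Fin 4 → 𝓞 K),
      ∀ V x, x ∈ X V ↔ (∃ z, x = e + (q : 𝓞 K) • z) ∧ ∀ v, f.nv v x ≤ V := by
    refine ⟨fun V => (hfin V).toFinset.filter fun x => ∃ z, x = e + (q : 𝓞 K) • z, fun V x => ?_⟩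
    simp only [Finset.mem_filter, Set.Finite.mem_toFinset, Set.mem_ofPred_eq]
    exact and_comm
  have hcard := f.coset_sum hal (fun _ => 1) continuous_const (by simp) e q hq0 X hX
  have hF1 := f.coset_sum hal (fun s => s ^ 2) (by fun_prop)
    (fun s h0 h1 => by rw [abs_of_nonneg (sq_nonneg _)]; exact pow_le_one₀ h0 h1) e q hq0 X hX
  rw [integral_ball_sq, ← hn] at hF1
  set a1 : ℝ := (Real.pi ^ 2 / 3) ^ n / (D K ^ 4 * (q : ℝ) ^ (n * 4)) with ha1
  have ha10 : 0 < a1 := by positivity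
  have hn1 : 0 < n := card_emb_pos K
  have hcard2 : Tendsto (fun V : ℝ => n0 * ((∑ x ∈ X V, ∏ v : K →+* ℝ, (1 : ℝ)) / V ^ (n * 4) *
      (V ^ (n * 2))⁻¹)) atTop (𝓝 0) := by
    have h1 : Tendsto (fun V : ℝ => (V ^ (n * 2))⁻¹) atTop (𝓝 0) :=
      (tendsto_pow_atTop (by omega)).inv_tendsto_atTop
    have h2 := (hcard.mul h1).const_mul (n0 : ℝ)
    rwa [mul_zero, mul_zero] at h2
  filter_upwards [hpb, hcard2.eventually (gt_mem_nhds (show (0 : ℝ) < Θ / 24 by positivity)),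
    hF1.eventually (lt_mem_nhds (show 19 / 20 * a1 < a1 by linarith)),
    eventually_gt_atTop 0] with V hV1 hV2 hV3 hV0
  have hV1' := hV1 (X V) fun x hx => (hX V x).1 hx
  simp only [Finset.prod_const_one, Finset.sum_const, nsmul_eq_mul, mul_one] at hV2
  set τ : 𝓞 K → ℝ := fun m => (Ideal.absNorm (Ideal.span {m}) : ℝ) with hτ
  have hsm := second_moment (X V) f.Q
    (Submodule.Quotient.mk (p := dil K N)) τ n0 (fun m => f.class_bound p j hp0 e u he m _
      (fun x hx => ⟨((hX V x).1 (Finset.mem_filter.1 hx).1).1, (Finset.mem_filter.1 hx).2⟩))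
  set E := ((X V ×ˢ X V).filter fun c => f.Q c.1 = f.Q c.2 ∧
        (Submodule.Quotient.mk c.1 : _ ⧸ dil K N) = Submodule.Quotient.mk c.2).card with hE
  have hV6 : 0 < V ^ (n * 6) := by positivity
  have hEb : (n0 : ℝ) * E ≤ 3 / 2 * Θ * V ^ (n * 6) := by
    have h1 := mul_le_mul_of_nonneg_left hV1' (Nat.cast_nonneg n0)
    refine h1.trans ?_
    rw [mul_add]
    have h2 : (n0 : ℝ) * (X V).card ≤ Θ / 24 * V ^ (n * 6) := by
      have e1 : V ^ (n * 6) = V ^ (n * 4) * V ^ (n * 2) := by rw [← pow_add]; congr 1; ring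
      rw [e1]
      have h3 := mul_le_mul_of_nonneg_right hV2.le (show 0 ≤ V ^ (n * 4) * V ^ (n * 2) by positivity)
      refine le_trans (le_of_eq ?_) h3
      have h4 : V ^ (n * 4) ≠ 0 := by positivity
      have h5 : V ^ (n * 2) ≠ 0 := by positivity
      generalize V ^ (n * 4) = x at *
      generalize V ^ (n * 2) = y at *
      generalize (n0 : ℝ) = z at *
      generalize ((X V).card : ℝ) = w at *
      clear * - h4 h5
      field_simp
    have h3 : (n0 : ℝ) * ((4 * Real.pi / 3 * (N / 2) ^ 3 * (2 * V / N) ^ 2) ^ n /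
        ((q : ℝ) ^ (3 * n) * D K ^ 3) *
        ((4 / 3 / ((q : ℝ) ^ n * D K ^ 4) *
          (2 * Real.pi ^ 2 * (Real.pi / 32 + 7 * (2 * C / N) / 3)) ^ n + Θ / 24 / c1) *
          (2 * V / N) ^ (n * 4))) = (Jf (2 * C / N) + Θ / 24) * V ^ (n * 6) := by
      have e1 : Jf (2 * C / N) + Θ / 24 = c1 * (4 / 3 / ((q : ℝ) ^ n * D K ^ 4) *
          (2 * Real.pi ^ 2 * (Real.pi / 32 + 7 * (2 * C / N) / 3)) ^ n + Θ / 24 / c1) := by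
        rw [mul_add, mul_div_cancel₀ _ hc10.ne']
      rw [e1]
      generalize (4 / 3 / ((q : ℝ) ^ n * D K ^ 4) *
          (2 * Real.pi ^ 2 * (Real.pi / 32 + 7 * (2 * C / N) / 3)) ^ n + Θ / 24 / c1) = A
      have e2 : (n0 : ℝ) * ((4 * Real.pi / 3 * (N / 2) ^ 3 * (2 * V / N) ^ 2) ^ n *
          (2 * V / N) ^ (n * 4)) = (32 * Real.pi / 3) ^ n * V ^ (n * 6) / (q : ℝ) ^ (3 * n) := by
        rw [hn0, eq_div_iff (by positivity)]
        push_cast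
        rw [mul_comm n 4, mul_comm n 6, pow_mul, pow_mul _ 4 n, pow_mul _ 6 n, pow_mul _ 3 n,
          ← mul_pow, ← mul_pow, ← mul_pow, ← mul_pow]
        congr 1
        have : (N : ℝ) = q * q ^ j := by rw [hN]; push_cast; ring
        rw [this]
        field_simp
        ring
      have e3 : (q : ℝ) ^ (6 * n) = (q : ℝ) ^ (3 * n) * (q : ℝ) ^ (3 * n) := by
        rw [← pow_add]; congr 1; ring
      rw [hc1, e3]
      calc _ = ((n0 : ℝ) * ((4 * Real.pi / 3 * (N / 2) ^ 3 * (2 * V / N) ^ 2) ^ n *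
          (2 * V / N) ^ (n * 4))) * A / ((q : ℝ) ^ (3 * n) * D K ^ 3) := by ring
        _ = _ := by rw [e2]; field_simp
    rw [h3]
    have h4 : Jf (2 * C / N) ≤ 17 / 12 * Θ := hj2.le
    have h5 := mul_le_mul_of_nonneg_right h4 hV6.le
    nlinarith [h5, h2]
  have hF1b : 19 / 20 * a1 * V ^ (n * 6) ≤ ∑ x ∈ X V, τ (f.Q x) := by
    have h1 := hV3.le
    rw [le_div_iff₀ (by positivity)] at h1
    have e1 : V ^ (n * 6) = V ^ (n * 4) * V ^ (n * 2) := by rw [← pow_add]; congr 1; ring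
    have h2 := mul_le_mul_of_nonneg_right h1 (show 0 ≤ V ^ (n * 2) by positivity)
    rw [e1, ← mul_assoc]
    refine h2.trans (le_of_eq ?_)
    rw [Finset.sum_mul]
    refine Finset.sum_congr rfl fun x _ => ?_
    rw [hτ]; dsimp only
    rw [f.absNorm_Q hal, ← Finset.prod_pow, mul_comm n 2, pow_mul, hn, ← Finset.card_univ,
      ← Finset.prod_const, ← Finset.prod_mul_distrib]
    refine Finset.prod_congr rfl fun v _ => ?_
    field_simp
  have hcov : ∑ m ∈ (X V).image f.Q, τ m ^ 2 ≤
      ∑ m ∈ (T (V ^ 2)).filter (fun m => ∃ x, f.Q x = m), τ m ^ 2 := by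
    refine Finset.sum_le_sum_of_subset_of_nonneg ?_ fun _ _ _ => sq_nonneg _
    intro m hm
    obtain ⟨x, hx, rfl⟩ := Finset.mem_image.1 hm
    obtain ⟨⟨z, hz⟩, hx2⟩ := (hX V x).1 hx
    refine Finset.mem_filter.2 ⟨(hT _ _).2 ⟨⟨u + f.B e z + 2 * p * f.Q z, ?_⟩, fun v => ?_⟩, x, rfl⟩
    · rw [hz, f.Q_add, f.B_comm e, f.B_smul, f.Q_smul, he, f.B_comm z, hq]; push_cast; ring
    · rw [← f.nv_sq hal]
      exact ⟨sq_nonneg _, pow_le_pow_left₀ (Real.sqrt_nonneg _) (hx2 v) 2⟩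
  refine le_trans ?_ hcov
  set Sg := ∑ m ∈ (X V).image f.Q, τ m ^ 2 with hSg
  have hSg0 : 0 ≤ Sg := Finset.sum_nonneg fun _ _ => sq_nonneg _
  set a3 : ℝ := (1 / 3 : ℝ) ^ n / (D K * ((2 * q : ℕ) : ℝ) ^ n) with ha3
  have ha : a1 ^ 2 = Θ * a3 := by
    have e1 : ((Real.pi ^ 2 / 3) ^ n) ^ 2 * 2 ^ n = (2 * Real.pi ^ 4 / 3) ^ n * (1 / 3) ^ n := by
      rw [← pow_mul, mul_comm n 2, pow_mul, ← mul_pow, ← mul_pow]; congr 1; ring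
    rw [ha1, hΘ, ha3, div_pow, div_mul_div_comm, ← e1]
    push_cast
    rw [mul_pow 2 (q : ℝ) n, div_eq_div_iff (by positivity) (by positivity)]
    ring
  have hV12 : (V ^ 2) ^ (n * 3) = V ^ (n * 6) := by rw [← pow_mul]; congr 1; ring
  rw [hV12]
  have h1 := pow_le_pow_left₀ (by positivity) hF1b 2
  have h2 := h1.trans hsm
  have h3 := h2.trans (mul_le_mul_of_nonneg_left hEb hSg0)
  have h4 : (361 / 400 * a3 * V ^ (n * 6)) * (Θ * V ^ (n * 6)) ≤
      (3 / 2 * Sg) * (Θ * V ^ (n * 6)) := by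
    refine le_trans (le_of_eq ?_) (h3.trans (le_of_eq ?_))
    · rw [mul_pow, mul_pow, ha]; ring
    · ring
  have h5 := le_of_mul_le_mul_right h4 (by positivity)
  have ha30 : 0 < a3 := by positivity
  have h6 : 0 < a3 * V ^ (n * 6) := by positivity
  nlinarith [h5, h6]

/-- Two forms with unit-like values at suitable vectors share a nonzero value. -/
lemma common_value : ∃ p : ℕ, 0 < p ∧ ∀ (f1 f2 : Form (𝓞 K)),
    (∀ v : K →+* ℝ, 0 < σO v f1.al) → (∀ v : K →+* ℝ, 0 < σO v f2.al) →
    ∀ (e1 e2 : Fin 4 → 𝓞 K) (u1 u2 : 𝓞 K), f1.Q e1 = 1 + ((2 * (4 * p) : ℕ) : 𝓞 K) * u1 →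
    f2.Q e2 = 1 + ((2 * (4 * p) : ℕ) : 𝓞 K) * u2 →
    ∃ x1 x2, f1.Q x1 = f2.Q x2 ∧ f1.Q x1 ≠ 0 := by
  classical
  obtain ⟨p, hp, h⟩ := cover K
  refine ⟨p, hp, fun f1 f2 hal1 hal2 e1 e2 u1 u2 he1 he2 => ?_⟩
  have hfin : ∀ V : ℝ, {m : 𝓞 K | ∀ v, 0 ≤ σO v m ∧ σO v m ≤ V}.Finite := by
    intro V
    have hstd : ∀ v : K →+* ℝ, 0 < σO v (Form.std (𝓞 K)).al := fun v => by simp [Form.std]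
    refine Set.Finite.of_finite_image (f := fun m i => if i = (0 : Fin 4) then m else 0)
      (((Form.std (𝓞 K)).finite_ball hstd V).subset ?_) ?_
    · rintro _ ⟨m, hm, rfl⟩ v
      have h0 : (Form.std (𝓞 K)).Q (fun i => if i = (0 : Fin 4) then m else 0) = m ^ 2 := by
        simp [Form.std, Form.Q]
      rw [Form.nv_eq _ hstd, h0, map_pow, Real.sqrt_sq (hm v).1]
      exact (hm v).2
    · intro m _ m' _ hmm
      simpa using congrFun hmm 0
  set n := Fintype.card (K →+* ℝ) with hn
  set q := 2 * (4 * p) with hq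
  have hq0 : 0 < q := by omega
  obtain ⟨T, hT⟩ : ∃ T : ℝ → Finset (𝓞 K),
      ∀ V m, m ∈ T V ↔ (∃ z, m = 1 + (q : 𝓞 K) * z) ∧ ∀ v, 0 ≤ σO v m ∧ σO v m ≤ V := by
    refine ⟨fun V => (hfin V).toFinset.filter fun m => ∃ z, m = 1 + (q : 𝓞 K) * z, fun V m => ?_⟩
    simp only [Finset.mem_filter, Set.Finite.mem_toFinset, Set.mem_ofPred_eq]
    exact and_comm
  have ht := target_sum (K := K) q hq0 T hT
  set a3 : ℝ := (1 / 3 : ℝ) ^ n / (D K * (q : ℝ) ^ n) with ha3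
  have hD := D_pos K
  have hqR : (0 : ℝ) < q := by exact_mod_cast hq0
  have ha30 : 0 < a3 := by positivity
  have hsq : Tendsto (fun V : ℝ => V ^ 2) atTop atTop := tendsto_pow_atTop (by norm_num)
  obtain ⟨V, h1, h2, h3, hV0⟩ := ((h f1 hal1 e1 u1 he1 T hT).and
    ((h f2 hal2 e2 u2 he2 T hT).and ((hsq.eventually
      (ht.eventually (gt_mem_nhds (show a3 < 21 / 20 * a3 by linarith)))).and
      (eventually_gt_atTop 0)))).exists
  rw [div_lt_iff₀ (by positivity)] at h3
  by_contra hno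
  have hno' : ∀ x1 x2, f1.Q x1 = f2.Q x2 → f1.Q x1 = 0 := by
    intro x1 x2 hx
    by_contra h0
    exact hno ⟨x1, x2, hx, h0⟩
  set τ : 𝓞 K → ℝ := fun m => (Ideal.absNorm (Ideal.span {m}) : ℝ) ^ 2 with hτ
  have hsum : ∑ m ∈ (T (V ^ 2)).filter (fun m => ∃ x, f1.Q x = m), τ m +
      ∑ m ∈ (T (V ^ 2)).filter (fun m => ∃ x, f2.Q x = m), τ m ≤ ∑ m ∈ T (V ^ 2), τ m := by
    rw [Finset.sum_filter, Finset.sum_filter, ← Finset.sum_add_distrib]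
    refine Finset.sum_le_sum fun m _ => ?_
    have hτ0 : 0 ≤ τ m := sq_nonneg _
    by_cases hm1 : ∃ x, f1.Q x = m
    · by_cases hm2 : ∃ x, f2.Q x = m
      · obtain ⟨x1, hx1⟩ := hm1
        obtain ⟨x2, hx2⟩ := hm2
        have hm0 : m = 0 := hx1 ▸ hno' x1 x2 (hx1.trans hx2.symm)
        have : τ m = 0 := by rw [hτ, hm0]; simp
        simp [this]
      · rw [if_pos hm1, if_neg hm2, add_zero]
    · rw [if_neg hm1, zero_add]
      split_ifs
      · exact le_rfl
      · exact hτ0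
  have hpos : 0 < a3 * (V ^ 2) ^ (n * 3) := by positivity
  have h4 := (add_le_add h1 h2).trans (hsum.trans h3.le)
  nlinarith [h4, hpos]

end
end Siegel

/-! ### Sums of squares in finite rings -/

namespace Siegel

open Polynomial in
/-- Squaring is onto modulo nilpotents when `2` is nilpotent, because it is the Frobenius of a finite
reduced ring. -/
lemma frob_lift {R : Type*} [CommRing R] [Finite R] (h2 : IsNilpotent (2 : R)) (c : R) :
    ∃ b : R, IsNilpotent (b ^ 2 - c) := by
  let S := R ⧸ nilradical R
  have : IsReduced S := (Ideal.isRadical_iff_quotient_reduced _).1 (Ideal.radical_isRadical _)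
  have hS2 : (2 : S) = 0 := by
    have : (Ideal.Quotient.mk (nilradical R)) 2 = 0 :=
      Ideal.Quotient.eq_zero_iff_mem.2 h2
    rwa [map_ofNat] at this
  have hinj : Function.Injective (fun x : S => x ^ 2) := by
    intro x y hxy
    have h0 : (x - y) ^ 2 = 0 := by
      have hxy' : x ^ 2 = y ^ 2 := hxy
      have : (x - y) ^ 2 = (x ^ 2 - y ^ 2) + 2 * (y ^ 2 - x * y) := by ring
      rw [this, hS2, hxy']; ring
    exact sub_eq_zero.1 (pow_eq_zero_iff (two_ne_zero) |>.1 h0)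
  have hfin : Finite S := Quotient.finite _
  obtain ⟨b, hb⟩ := (Finite.injective_iff_surjective.1 hinj) (Ideal.Quotient.mk _ c)
  obtain ⟨b, rfl⟩ := Ideal.Quotient.mk_surjective b
  refine ⟨b, ?_⟩
  rw [← mem_nilradical, ← Ideal.Quotient.eq_zero_iff_mem]
  simpa [sub_eq_zero] using hb

open Polynomial in
/-- Newton lifting for a monic quadratic polynomial at `0`. -/
lemma quad_lift {R : Type*} [CommRing R] (r s x : R) (h : IsNilpotent (x ^ 2 + r * x + s))
    (h' : IsUnit (2 * x + r)) : ∃ y, y ^ 2 + r * y + s = 0 := by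
  obtain ⟨y, hy, -⟩ := existsUnique_nilpotent_sub_and_aeval_eq_zero
    (P := (X ^ 2 + C r * X + C s : R[X])) (x := x) (by simpa using h)
    (by simpa [derivative_X_pow, one_add_one_eq_two] using h')
  exact ⟨y, by simpa using hy.2⟩

/-- If `2` is nilpotent, every unit is a value of the norm form of the cube roots of unity: take `b` with
`b² ≡ c` modulo nilpotents and solve `a² - a b + (b² - c) = 0` for `a` near `0` by Newton lifting. -/
lemma norm_form_of_two_nilpotent {R : Type*} [CommRing R] [Finite R] (h2 : IsNilpotent (2 : R))
    {c : R} (hc : IsUnit c) : ∃ a b : R, c = a ^ 2 - a * b + b ^ 2 := by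
  obtain ⟨b, hb⟩ := frob_lift h2 c
  have hbu : IsUnit b := by
    have : IsUnit (b ^ 2) := by
      have := hb.isUnit_add_left_of_commute hc (Commute.all _ _)
      simpa using this
    exact (isUnit_pow_iff two_ne_zero).1 this
  obtain ⟨a, ha⟩ := quad_lift (-b) (b ^ 2 - c) 0 (by simpa using hb) (by simpa using hbu)
  exact ⟨a, b, by linear_combination -ha⟩

/-- In a finite field of odd characteristic `-1` is a sum of two squares, the first of them nonzero. -/
lemma neg_one_field (F : Type*) [Field F] [Finite F] (h2 : (2 : F) ≠ 0) :
    ∃ a b : F, a ≠ 0 ∧ a ^ 2 + b ^ 2 + 1 = 0 := by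
  have := Fintype.ofFinite F
  have hodd : Fintype.card F % 2 = 1 := by
    refine FiniteField.odd_card_of_char_ne_two fun h => h2 ?_
    have := ringChar.Nat.cast_ringChar (R := F)
    rw [h] at this
    exact_mod_cast this
  obtain ⟨a, b, hab⟩ := FiniteField.exists_root_sum_quadratic (R := F)
    (f := Polynomial.X ^ 2) (g := Polynomial.X ^ 2 + Polynomial.C 1)
    (by simp) (by rw [Polynomial.degree_X_pow_add_C (by norm_num)]; rfl) hodd
  simp only [Polynomial.eval_pow, Polynomial.eval_X, Polynomial.eval_add, Polynomial.eval_C] at hab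
  by_cases ha : a = 0
  · refine ⟨b, a, ?_, by linear_combination hab⟩
    rintro rfl
    simp [ha] at hab
  · exact ⟨a, b, ha, by linear_combination hab⟩

/-- A finite reduced ring is a product of finite fields. -/
lemma neg_one_reduced (S : Type*) [CommRing S] [Finite S] [IsReduced S] (h2 : IsUnit (2 : S)) :
    ∃ a b : S, IsUnit a ∧ a ^ 2 + b ^ 2 + 1 = 0 := by
  let e := IsArtinianRing.equivPi S
  have key : ∀ I : MaximalSpectrum S, ∃ a b : S ⧸ I.asIdeal, IsUnit a ∧ a ^ 2 + b ^ 2 + 1 = 0 := by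
    intro I
    have := I.isMaximal
    let F := Ideal.Quotient.field I.asIdeal
    have hf : Finite (S ⧸ I.asIdeal) := Quotient.finite _
    obtain ⟨a, b, ha, hab⟩ := neg_one_field (S ⧸ I.asIdeal) (by
      have := (h2.map (Ideal.Quotient.mk I.asIdeal)).ne_zero
      rwa [map_ofNat] at this)
    exact ⟨a, b, isUnit_iff_ne_zero.2 ha, hab⟩
  choose a b ha hab using key
  refine ⟨e.symm a, e.symm b, (Pi.isUnit_iff.2 ha).map e.symm, ?_⟩
  apply e.injective
  have : a ^ 2 + b ^ 2 + 1 = 0 := by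
    funext I
    exact hab I
  simpa using this

/-- The solution in the reduced quotient lifts by Newton approximation in `a`, where the derivative `2 a`
is a unit. -/
lemma neg_one_of_two_unit (R : Type*) [CommRing R] [Finite R] (h2 : IsUnit (2 : R)) :
    ∃ a b : R, a ^ 2 + b ^ 2 + 1 = 0 := by
  let S := R ⧸ nilradical R
  have : IsReduced S := (Ideal.isRadical_iff_quotient_reduced _).1 (Ideal.radical_isRadical _)
  have hfin : Finite S := Quotient.finite _
  obtain ⟨a, b, ha, hab⟩ := neg_one_reduced S (by
    have := h2.map (Ideal.Quotient.mk (nilradical R))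
    rwa [map_ofNat] at this)
  obtain ⟨a, rfl⟩ := Ideal.Quotient.mk_surjective a
  obtain ⟨b, rfl⟩ := Ideal.Quotient.mk_surjective b
  have hau : IsUnit a := (IsNilpotent.isUnit_quotient_mk_iff
    (Ideal.FG.isNilpotent_iff_le_nilradical (IsNoetherian.noetherian _) |>.2 le_rfl)).1 ha
  obtain ⟨y, hy⟩ := quad_lift 0 (1 + b ^ 2) a (by
    rw [← mem_nilradical, ← Ideal.Quotient.eq_zero_iff_mem]
    simp only [map_add, map_mul, map_pow, map_zero, map_one]
    linear_combination hab) (by simpa using h2.mul hau)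
  exact ⟨y, b, by linear_combination hy⟩

/-- Write `c = ((c + 1) / 2)² - ((c - 1) / 2)²` and `-1 = a² + b²`. -/
lemma three_squares_of_two_unit (R : Type*) [CommRing R] [Finite R] (h2 : IsUnit (2 : R)) (c : R) :
    ∃ x y z : R, c = x ^ 2 + y ^ 2 + z ^ 2 := by
  obtain ⟨a, b, hab⟩ := neg_one_of_two_unit R h2
  obtain ⟨t, ht⟩ := h2.exists_right_inv
  refine ⟨(c + 1) * t, a * ((c - 1) * t), b * ((c - 1) * t), ?_⟩
  linear_combination (-((c-1)*t)^2) * hab + (-c * (2 * t + 1)) * ht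
end Siegel

/-! ### Totally positive integers coprime to 2 -/

namespace Siegel

/-- `x` is a sum of four squares. -/
def S4 {R : Type*} [CommRing R] (x : R) : Prop :=
  ∃ a b c d : R, x = a ^ 2 + b ^ 2 + c ^ 2 + d ^ 2

/-- Euler's four-square identity. -/
lemma S4.mul {R : Type*} [CommRing R] {x y : R} (hx : S4 x) (hy : S4 y) : S4 (x * y) := by
  obtain ⟨a, b, c, d, rfl⟩ := hx
  obtain ⟨x, y, z, w, rfl⟩ := hy
  exact ⟨_, _, _, _, (euler_four_squares a b c d x y z w).symm⟩

lemma S4.sq {R : Type*} [CommRing R] (x : R) : S4 (x ^ 2) := ⟨x, 0, 0, 0, by ring⟩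

/-- Over a field, `y = x (x y) / x²`. -/
lemma S4.of_mul {F : Type*} [Field F] {x y : F} (hx : S4 x) (h0 : x ≠ 0) (hxy : S4 (x * y)) :
    S4 y := by
  have h := (hx.mul hxy).mul (S4.sq x⁻¹)
  have : x * (x * y) * x⁻¹ ^ 2 = y := by field_simp
  rwa [this] at h

lemma S4.map {R S : Type*} [CommRing R] [CommRing S] (f : R →+* S) {x : R} (hx : S4 x) :
    S4 (f x) := by
  obtain ⟨a, b, c, d, rfl⟩ := hx
  exact ⟨f a, f b, f c, f d, by simp⟩

section
variable (K : Type*) [Field K] [NumberField K] [IsTotallyReal K]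

/-- A totally positive integer `al` that is `1` modulo a suitable multiple of `8` is a sum of four squares
in `K`. Choose `a`, `b` with `al ∣ a² + b² + 1` and compare the attached form `Q`, for which `al * Q` is
a sum of four squares, with the standard form: they share a nonzero value. The vector
`(al, 0, -a, -b)` has `Q`-value `al`, so `common_value` applies. -/
lemma core1 : ∃ p : ℕ, 0 < p ∧ ∀ al u : 𝓞 K, (∀ v, 0 < σO v al) →
    al = 1 + ((2 * (4 * p) : ℕ) : 𝓞 K) * u → S4 (al : K) := by
  obtain ⟨p, hp, H⟩ := common_value K
  refine ⟨p, hp, fun al u hal hu => ?_⟩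
  have hal0 : al ≠ 0 := by
    rintro rfl
    obtain ⟨v⟩ := (inferInstance : Nonempty (K →+* ℝ))
    simpa using hal v
  have hfin : Finite (𝓞 K ⧸ Ideal.span {al}) :=
    Ideal.finiteQuotientOfFreeOfNeBot _ (by simpa [Ideal.span_singleton_eq_bot] using hal0)
  have h2 : IsUnit (2 : 𝓞 K ⧸ Ideal.span {al}) := by
    refine IsUnit.of_mul_eq_one (Ideal.Quotient.mk _ (-(((4 * p : ℕ) : 𝓞 K) * u))) ?_
    have : (2 : 𝓞 K ⧸ Ideal.span {al}) = Ideal.Quotient.mk _ 2 := (map_ofNat _ 2).symm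
    rw [this, ← map_mul, ← map_one (Ideal.Quotient.mk _), Ideal.Quotient.eq,
      Ideal.mem_span_singleton]
    exact ⟨-1, by rw [hu]; push_cast; ring⟩
  obtain ⟨a, b, hab⟩ := neg_one_of_two_unit _ h2
  obtain ⟨a, rfl⟩ := Ideal.Quotient.mk_surjective a
  obtain ⟨b, rfl⟩ := Ideal.Quotient.mk_surjective b
  have hd : al ∣ a ^ 2 + b ^ 2 + 1 := by
    rw [← Ideal.mem_span_singleton, ← Ideal.Quotient.eq_zero_iff_mem]
    simpa using hab
  obtain ⟨h, hh⟩ := hd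
  let f2 : Form (𝓞 K) := ⟨a, b, h, al, by rw [← hh]; ring⟩
  have hstd : ∀ v : K →+* ℝ, 0 < σO v (Form.std (𝓞 K)).al := fun v => by simp [Form.std]
  obtain ⟨x1, x2, hx, hx0⟩ := H (Form.std (𝓞 K)) f2 hstd hal ![1, 0, 0, 0] ![al, 0, -a, -b] 0 u
    (by simp [Form.std, Form.Q]) (by
      rw [← hu]
      simp [f2, Form.Q]
      linear_combination (-al) * hh)
  have h1 : S4 ((Form.std (𝓞 K)).Q x1) :=
    ⟨x1 0, x1 1, x1 2, x1 3, by simp [Form.std, Form.Q]; ring⟩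
  have h3 : S4 (al * (Form.std (𝓞 K)).Q x1) := by
    rw [hx]
    exact ⟨f2.X x2 0, f2.X x2 1, f2.X x2 2, f2.X x2 3,
      by rw [← Fin.sum_univ_four (fun i => f2.X x2 i ^ 2), ← f2.al_Q]⟩
  have h1' := h1.map (algebraMap (𝓞 K) K)
  have h3' := h3.map (algebraMap (𝓞 K) K)
  rw [map_mul, mul_comm] at h3'
  exact h1'.of_mul (by simpa using hx0) h3'

variable {K}

lemma two_not_unit : ¬ IsUnit (2 : 𝓞 K) := by
  intro h
  have h1 := absNorm_natCast (K := K) 2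
  rw [Nat.cast_ofNat, Ideal.span_singleton_eq_top.2 h] at h1
  have h2 := card_emb_pos K
  rw [Ideal.absNorm_top] at h1
  have := Nat.one_lt_two_pow (n := Fintype.card (K →+* ℝ)) h2.ne'
  omega

/-- Chinese remainder theorem for representations by a sum of four squares. -/
lemma crt4 {R : Type*} [CommRing R] {m1 m2 c : R} (h : IsCoprime m1 m2) {X Y : Fin 4 → R}
    (hX : m1 ∣ ∑ i, X i ^ 2 - c) (hY : m2 ∣ ∑ i, Y i ^ 2 - c) :
    ∃ x : Fin 4 → R, m1 * m2 ∣ ∑ i, x i ^ 2 - c := by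
  obtain ⟨u, v, huv⟩ := h
  refine ⟨fun i => v * m2 * X i + u * m1 * Y i, IsCoprime.mul_dvd ⟨u, v, huv⟩ ?_ ?_⟩
  · obtain ⟨k, hk⟩ := hX
    refine ⟨k + ∑ i, (u * (Y i - X i)) * (2 * X i + u * m1 * (Y i - X i)), ?_⟩
    have hv : v * m2 = 1 - u * m1 := by linear_combination huv
    rw [mul_add, ← hk, hv, Finset.mul_sum, sub_add_eq_add_sub, ← Finset.sum_add_distrib]
    congr 1
    exact Finset.sum_congr rfl fun i _ => by ring
  · obtain ⟨k, hk⟩ := hY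
    refine ⟨k + ∑ i, (v * (X i - Y i)) * (2 * Y i + v * m2 * (X i - Y i)), ?_⟩
    have hv : u * m1 = 1 - v * m2 := by linear_combination huv
    rw [mul_add, ← hk, hv, Finset.mul_sum, sub_add_eq_add_sub, ← Finset.sum_add_distrib]
    congr 1
    exact Finset.sum_congr rfl fun i _ => by ring

lemma mk_two {R : Type*} [CommRing R] (I : Ideal R) : (2 : R ⧸ I) = Ideal.Quotient.mk I 2 :=
  (map_ofNat _ 2).symm

/-- Four times an integer coprime to `2` is congruent to a sum of four squares modulo every nonzero
rational integer. -/
lemma four_mul_congr (al : 𝓞 K) (h2 : IsCoprime al 2) (M : ℕ) (hM : M ≠ 0) :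
    ∃ x : Fin 4 → 𝓞 K, (M : 𝓞 K) ∣ ∑ i, x i ^ 2 - 4 * al := by
  obtain ⟨s, m, hm, rfl⟩ := Nat.exists_eq_two_pow_mul_odd hM
  have hcop : IsCoprime ((2 ^ s : ℕ) : 𝓞 K) ((m : ℕ) : 𝓞 K) :=
    ((Nat.Coprime.pow_left s (Nat.coprime_two_left.2 hm))).cast
  rw [Nat.cast_mul]
  have hfin : ∀ n : ℕ, n ≠ 0 → Finite (𝓞 K ⧸ Ideal.span {(n : 𝓞 K)}) := fun n hn =>
    Ideal.finiteQuotientOfFreeOfNeBot _ (by simpa [Ideal.span_singleton_eq_bot] using hn)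
  have A : ∃ X : Fin 4 → 𝓞 K, ((2 ^ s : ℕ) : 𝓞 K) ∣ ∑ i, X i ^ 2 - 4 * al := by
    have := hfin (2 ^ s) (by positivity)
    let I : Ideal (𝓞 K) := Ideal.span {((2 ^ s : ℕ) : 𝓞 K)}
    have hn : IsNilpotent (2 : 𝓞 K ⧸ I) := by
      refine ⟨s, ?_⟩
      rw [mk_two, ← map_pow, Ideal.Quotient.eq_zero_iff_mem, Ideal.mem_span_singleton]
      simp
    have hu : IsUnit (Ideal.Quotient.mk I al) := by
      obtain ⟨u, v, huv⟩ := (h2.pow_right (n := s))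
      refine IsUnit.of_mul_eq_one (Ideal.Quotient.mk I u) ?_
      rw [← map_mul, ← map_one (Ideal.Quotient.mk I), Ideal.Quotient.eq,
        Ideal.mem_span_singleton]
      exact ⟨-v, by push_cast; linear_combination huv⟩
    -- `4 (a² - a b + b²) = (2 a - b)² + b² + b² + b²`
    obtain ⟨a, b, hab⟩ := norm_form_of_two_nilpotent hn hu
    obtain ⟨a, rfl⟩ := Ideal.Quotient.mk_surjective a
    obtain ⟨b, rfl⟩ := Ideal.Quotient.mk_surjective b
    rw [← map_pow, ← map_pow, ← map_mul, ← map_sub, ← map_add, Ideal.Quotient.eq,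
      Ideal.mem_span_singleton] at hab
    refine ⟨![2 * a - b, b, b, b], ?_⟩
    refine (hab.mul_left (-4)).trans (dvd_of_eq ?_)
    simp [Fin.sum_univ_four]
    ring
  have B : ∃ X : Fin 4 → 𝓞 K, (m : 𝓞 K) ∣ ∑ i, X i ^ 2 - 4 * al := by
    have := hfin m (by rintro rfl; simp at hm)
    let I : Ideal (𝓞 K) := Ideal.span {(m : 𝓞 K)}
    have hu : IsUnit (2 : 𝓞 K ⧸ I) := by
      obtain ⟨t, rfl⟩ := hm
      refine IsUnit.of_mul_eq_one (Ideal.Quotient.mk I (-t)) ?_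
      rw [mk_two, ← map_mul, ← map_one (Ideal.Quotient.mk I), Ideal.Quotient.eq,
        Ideal.mem_span_singleton]
      exact ⟨-1, by push_cast; ring⟩
    obtain ⟨x, y, z, h⟩ := three_squares_of_two_unit _ hu (Ideal.Quotient.mk I (4 * al))
    obtain ⟨x, rfl⟩ := Ideal.Quotient.mk_surjective x
    obtain ⟨y, rfl⟩ := Ideal.Quotient.mk_surjective y
    obtain ⟨z, rfl⟩ := Ideal.Quotient.mk_surjective z
    rw [← map_pow, ← map_pow, ← map_pow, ← map_add, ← map_add, eq_comm, Ideal.Quotient.eq,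
      Ideal.mem_span_singleton] at h
    refine ⟨![x, y, z, 0], ?_⟩
    simpa [Fin.sum_univ_four] using h
  obtain ⟨X, hX⟩ := A
  obtain ⟨Y, hY⟩ := B
  exact crt4 hcop hX hY

/-- A totally positive integer coprime to `2` is a sum of four squares in `K`: by `four_mul_congr` some
multiple `4 * al * al2` with `al2 ≡ 1` modulo `2 (4 p)` is a sum of four squares, and so is `al2`. -/
lemma core2 (al : 𝓞 K) (hal : ∀ v, 0 < σO v al) (h2 : IsCoprime al 2) : S4 (al : K) := by
  obtain ⟨p, hp, H⟩ := core1 K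
  have hal0 : al ≠ 0 := by
    rintro rfl
    obtain ⟨v⟩ := (inferInstance : Nonempty (K →+* ℝ))
    simpa using hal v
  have hN := Ideal.absNorm_mem (Ideal.span {al})
  have hN0 : Ideal.absNorm (Ideal.span {al}) ≠ 0 := by
    rw [Ne, Ideal.absNorm_eq_zero_iff]
    simpa using hal0
  set N := Ideal.absNorm (Ideal.span {al})
  obtain ⟨n', hn'⟩ := Ideal.mem_span_singleton.1 hN
  obtain ⟨x, t, ht⟩ := four_mul_congr al h2 (4 * (2 * (4 * p)) * N) (by positivity)
  set w : 𝓞 K := n' * t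
  have hx : ∑ i, x i ^ 2 = 4 * (al * (1 + ((2 * (4 * p) : ℕ) : 𝓞 K) * w)) := by
    rw [Nat.cast_mul, hn'] at ht
    push_cast at ht ⊢
    linear_combination ht
  set al2 : 𝓞 K := 1 + ((2 * (4 * p) : ℕ) : 𝓞 K) * w with hal2
  have hal20 : al2 ≠ 0 := by
    intro h0
    refine two_not_unit (K := K) (IsUnit.of_mul_eq_one (-(((4 * p : ℕ) : 𝓞 K) * w)) ?_)
    rw [hal2] at h0
    push_cast at h0 ⊢
    linear_combination -h0
  have hpos : ∀ v, 0 < σO v al2 := by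
    intro v
    have h1 : 0 ≤ σO v (4 * (al * al2)) := by
      rw [← hx, map_sum]
      exact Finset.sum_nonneg fun i _ => by rw [map_pow]; positivity
    rw [map_mul, map_mul, map_ofNat] at h1
    have h3 : 0 ≤ σO v al2 := by
      have := hal v
      by_contra hneg
      push Not at hneg
      nlinarith
    exact lt_of_le_of_ne h3 fun h => hal20 (σO_injective v (by rw [← h, map_zero]))
  have hs := (H al2 w hpos hal2).mul (S4.sq (2 : K))
  refine hs.of_mul (by simpa using hal20) ?_
  have h4 : S4 (∑ i, x i ^ 2) := ⟨x 0, x 1, x 2, x 3, by simp [Fin.sum_univ_four]⟩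
  have h5 := h4.map (algebraMap (𝓞 K) K)
  rw [hx] at h5
  simp only [map_mul, map_ofNat] at h5
  have : (al2 : K) * 2 ^ 2 * al = 4 * (al * al2) := by ring
  rwa [this]
end
end Siegel

/-! ### Primes above 2 -/

namespace Siegel
section
variable {O : Type*} [CommRing O] [IsDedekindDomain O]

lemma isCoprime_of_not_le {P R : Ideal O} (hP : P.IsMaximal) (h : ¬ R ≤ P) : IsCoprime P R := by
  rw [Ideal.isCoprime_iff_sup_eq]
  exact hP.1.2 _ (left_lt_sup.2 h)

/-- If `I2 = P ^ e * R` and `s` has exact order `m` at `P` and is `1` modulo `R`, then away from `P` it is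
coprime to `I2`. -/
lemma dyadic_finish {P R I2 : Ideal O} (hP : P.IsMaximal) {e m : ℕ}
    (h2 : I2 = P ^ e * R) {s : O} (hs : s ∈ P ^ m)
    (hs' : s ∉ P ^ (m + 1)) (hR : s - 1 ∈ R) :
    ∃ A : Ideal O, Ideal.span {s} = P ^ m * A ∧ IsCoprime A I2 := by
  obtain ⟨A, hA⟩ := Ideal.dvd_iff_le.2 ((Ideal.span_singleton_le_iff_mem _).2 hs)
  have hsA : s ∈ A := by
    have : s ∈ P ^ m * A := hA ▸ Ideal.mem_span_singleton_self s
    exact (Ideal.mul_le_right : P ^ m * A ≤ A) this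
  refine ⟨A, hA, ?_⟩
  rw [h2]
  refine IsCoprime.mul_right (IsCoprime.pow_right (IsCoprime.symm ?_)) ?_
  · refine isCoprime_of_not_le hP ?_
    intro hAP
    apply hs'
    rw [← Ideal.span_singleton_le_iff_mem, hA, pow_succ]
    exact Ideal.mul_mono_right hAP
  · rw [Ideal.isCoprime_iff_exists]
    exact ⟨s, hsA, 1 - s, by rw [← neg_sub]; exact R.neg_mem hR, by ring⟩

/-- For a prime `P` above `2` there is `s` of odd order at `P`, prime to the other primes above `2`, such
that `4 s` is a sum of four squares. If the order `e` of `2` at `P` is odd, `s = a² + 2`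
with `a` in `P ^ e` has order `e`; if it is even, `s = a² - a b + b² + 2` is arranged to have order
`e + 1`. -/
lemma dyadic (h20 : (2 : O) ≠ 0) (P : Ideal O) (hPm : P.IsMaximal) (hP : P ≠ ⊥)
    (hfin : Finite (O ⧸ P ^ 2)) (hP2 : (2 : O) ∈ P) :
    ∃ (s : O) (m : ℕ) (A : Ideal O), s ≠ 0 ∧ S4 (4 * s) ∧ Odd m ∧
      Ideal.span {s} = P ^ m * A ∧ IsCoprime A (Ideal.span {2}) := by
  have hirr : Irreducible P := (Ideal.prime_of_isPrime hP hPm.isPrime).irreducible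
  have hspan2 : (Ideal.span {2} : Ideal O) ≠ 0 := by simpa using h20
  obtain ⟨e, R, hPR, h2⟩ := WfDvdMonoid.max_power_factor hspan2 hirr
  have he : e ≠ 0 := by
    rintro rfl
    apply hPR
    rw [pow_zero, one_mul] at h2
    rw [← h2, Ideal.dvd_span_singleton]
    exact hP2
  have h2R : (2 : O) ∈ R := (h2.trans_le Ideal.mul_le_right) (Ideal.mem_span_singleton_self 2)
  have h2e : (2 : O) ∈ P ^ e := (h2.trans_le Ideal.mul_le_left) (Ideal.mem_span_singleton_self 2)
  have h2e' : (2 : O) ∉ P ^ (e + 1) := by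
    intro h
    rw [← Ideal.dvd_span_singleton, h2, pow_succ] at h
    exact hPR ((mul_dvd_mul_iff_left (pow_ne_zero _ hirr.ne_zero)).1 h)
  have hcop : IsCoprime P R :=
    isCoprime_of_not_le hPm (fun h => hPR (Ideal.dvd_iff_le.2 h))
  have hmono : ∀ {i j : ℕ}, j ≤ i → P ^ i ≤ P ^ j := fun h => Ideal.pow_le_pow_right h
  rcases Nat.even_or_odd e with ⟨g, hg⟩ | hodd
  · -- choose `w` of exact order `e + 1` and solve `s ≡ w` modulo `P ^ (e + 2)` with `a`, `b` of order at
    -- least `g`, so that `(w - 2) / π²` is a unit to be represented by the norm form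
    obtain ⟨π, hπ, hπ'⟩ := Ideal.exists_mem_pow_notMem_pow_succ P hP hPm.ne_top g
    obtain ⟨w, hw, hw'⟩ := Ideal.exists_mem_pow_notMem_pow_succ P hP hPm.ne_top (e + 1)
    have hπe : π ^ 2 ∈ P ^ e := by
      have := Ideal.pow_mem_pow hπ 2
      rwa [← pow_mul, show g * 2 = e by omega] at this
    obtain ⟨D, hD⟩ := Ideal.dvd_span_singleton.2 hπ
    have hDP : IsCoprime P D := by
      refine isCoprime_of_not_le hPm fun h => hπ' ?_
      rw [← Ideal.span_singleton_le_iff_mem, hD, pow_succ]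
      exact Ideal.mul_mono_right h
    have hsup : Ideal.span {π ^ 2} ⊔ P ^ (e + 2) = P ^ e := by
      have h1 : Ideal.span {π ^ 2} = P ^ e * D ^ 2 := by
        rw [← Ideal.span_singleton_pow, hD, mul_pow, ← pow_mul, show g * 2 = e by omega]
      have h3 : D ^ 2 ⊔ P ^ 2 = ⊤ := Ideal.isCoprime_iff_sup_eq.1 (hDP.symm.pow)
      rw [h1, pow_add, ← Ideal.mul_sup, h3, Ideal.mul_top]
    have hmem : -2 + w ∈ Ideal.span {π ^ 2} ⊔ P ^ (e + 2) := by
      rw [hsup]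
      exact Ideal.add_mem _ (neg_mem h2e) (hmono (by omega) hw)
    obtain ⟨_, hc, r, hr, hcr⟩ := Submodule.mem_sup.1 hmem
    obtain ⟨c, rfl⟩ := Ideal.mem_span_singleton'.1 hc
    have hcP : c ∉ P := by
      intro hcP
      apply h2e'
      have h1 : c * π ^ 2 ∈ P ^ (e + 1) := by
        rw [pow_succ, mul_comm c]
        exact Ideal.mul_mem_mul hπe hcP
      have : (2 : O) = w - c * π ^ 2 - r := by linear_combination hcr
      rw [this]
      exact sub_mem (sub_mem hw h1) (hmono (by omega) hr)
    have hcu : IsUnit (Ideal.Quotient.mk (P ^ 2) c) := by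
      obtain ⟨u, p, hp, hup⟩ := hPm.exists_inv hcP
      refine IsUnit.of_mul_eq_one (Ideal.Quotient.mk _ (u * (2 - c * u))) ?_
      rw [← map_mul, ← map_one (Ideal.Quotient.mk _), Ideal.Quotient.eq]
      have : c * (u * (2 - c * u)) - 1 = -(p ^ 2) := by
        have : p = 1 - u * c := by linear_combination hup
        rw [this]; ring
      rw [this]
      exact neg_mem (Ideal.pow_mem_pow hp 2)
    have h2n : IsNilpotent (2 : O ⧸ P ^ 2) := by
      refine ⟨2, ?_⟩
      rw [mk_two, ← map_pow, Ideal.Quotient.eq_zero_iff_mem]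
      exact Ideal.pow_mem_pow hP2 2
    obtain ⟨a', b', hab⟩ := norm_form_of_two_nilpotent h2n hcu
    obtain ⟨a', rfl⟩ := Ideal.Quotient.mk_surjective a'
    obtain ⟨b', rfl⟩ := Ideal.Quotient.mk_surjective b'
    rw [← map_pow, ← map_pow, ← map_mul, ← map_sub, ← map_add, Ideal.Quotient.eq] at hab
    obtain ⟨i, hi, t, ht, hit⟩ := Ideal.isCoprime_iff_exists.1 (hcop.pow_left (m := e + 2))
    have hi' : i = 1 - t := by linear_combination hit
    have ht' : t = 1 - i := by linear_combination hit
    set a := t * (π * a') + i with ha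
    set b := t * (π * b') with hb
    set s := a ^ 2 - a * b + b ^ 2 + 2 with hs
    -- modulo `P ^ (e + 2)` the element `s` equals `w`
    have hsw : s - w ∈ P ^ (e + 2) := by
      have h1 : π ^ 2 * (c - (a' ^ 2 - a' * b' + b' ^ 2)) ∈ P ^ (e + 2) := by
        rw [pow_add]
        exact Ideal.mul_mem_mul hπe hab
      have h3 : ∃ z, s - w = i * z - π ^ 2 * (c - (a' ^ 2 - a' * b' + b' ^ 2)) - r := by
        refine ⟨(1 - π * a') * (2 * π * a' + i * (1 - π * a')) -
          ((1 - π * a') * (π * b') - π * b' * (π * a') - i * (1 - π * a') * (π * b')) +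
          (π * b') ^ 2 * (i - 2), ?_⟩
        rw [hs, ha, hb, ht']
        linear_combination hcr
      obtain ⟨z, hz⟩ := h3
      rw [hz]
      exact sub_mem (sub_mem (Ideal.mul_mem_right _ _ hi) h1) hr
    have hsR : s - 1 ∈ R := by
      have h3 : ∃ z, s - 1 = t * z + 2 := by
        refine ⟨(π * a' - 1) * (a + 1) - a * (π * b') + b * (π * b'), ?_⟩
        rw [hs]
        have ha1 : a = 1 + t * (π * a' - 1) := by rw [ha, hi']; ring
        rw [hb, ha1]; ring
      obtain ⟨z, hz⟩ := h3
      rw [hz]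
      exact add_mem (Ideal.mul_mem_right _ _ ht) h2R
    have hsm : s ∈ P ^ (e + 1) := by
      have := add_mem (hmono (by omega) hsw) hw
      simpa using this
    have hsm' : s ∉ P ^ (e + 1 + 1) := by
      intro h
      have := sub_mem h hsw
      exact hw' (by simpa using this)
    obtain ⟨A, hA, hA2⟩ := dyadic_finish hPm h2 hsm hsm' hsR
    refine ⟨s, e + 1, A, fun h => hsm' (h ▸ Ideal.zero_mem _),
      ⟨2 * a - b, b + 2, b, b - 2, by rw [hs]; ring⟩, ?_, hA, hA2⟩
    exact Even.add_one ⟨g, hg⟩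
  · obtain ⟨a, ha, r, hr, har⟩ := Ideal.isCoprime_iff_exists.1 (hcop.pow_left (m := e))
    have hsm : a ^ 2 + 2 ∈ P ^ e :=
      Ideal.add_mem _ (by rw [pow_two]; exact Ideal.mul_mem_left _ _ ha) h2e
    have hsm' : a ^ 2 + 2 ∉ P ^ (e + 1) := by
      intro h
      apply h2e'
      have : a ^ 2 ∈ P ^ (e + 1) :=
        hmono (i := e * 2) (by omega) (by rw [pow_mul]; exact Ideal.pow_mem_pow ha 2)
      simpa using Ideal.sub_mem _ h this
    obtain ⟨A, hA, hA2⟩ := dyadic_finish hPm h2 hsm hsm' (by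
      have : a ^ 2 + 2 - 1 = 2 - r * (a + 1) := by linear_combination (a + 1) * har
      rw [this]
      exact R.sub_mem h2R (R.mul_mem_right _ hr))
    exact ⟨a ^ 2 + 2, e, A, fun h => hsm' (by rw [h]; exact Ideal.zero_mem _), ⟨2 * a, 2, 2, 0, by ring⟩,
      hodd, hA, hA2⟩
end
end Siegel

/-! ### Siegel's theorem -/

namespace Siegel
section
variable {O : Type*} [CommRing O] [IsDedekindDomain O]

/-- Every nonzero ideal `I` acquires even order at all primes above `2` after multiplication by a suitable
`s` that is, up to a square, a sum of four squares: `I · (s) = A · B²` with `A` coprime to `2` and `B`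
composed of primes above `2`. -/
lemma even_at_two (h20 : (2 : O) ≠ 0) (hfin : ∀ J : Ideal O, J ≠ ⊥ → Finite (O ⧸ J))
    (hmax : ∀ P : Ideal O, Prime P → P.IsMaximal) (I : Ideal O) :
    I ≠ 0 → ∃ s t : O, s ≠ 0 ∧ t ≠ 0 ∧ S4 (t ^ 2 * s) ∧ ∃ (A B : Ideal O) (k : ℕ),
      IsCoprime A (Ideal.span {2}) ∧ B ∣ Ideal.span {2} ^ k ∧ I * Ideal.span {s} = A * B ^ 2 := by
  induction I using UniqueFactorizationMonoid.induction_on_prime with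
  | h₁ => exact fun h => absurd rfl h
  | h₂ x hx =>
    intro _
    refine ⟨1, 1, one_ne_zero, one_ne_zero, ⟨1, 0, 0, 0, by ring⟩, 1, 1, 0, isCoprime_one_left,
      by simp, ?_⟩
    rw [isUnit_iff_eq_one.1 hx, Ideal.span_singleton_one, one_pow, one_mul, one_mul,
      Ideal.one_eq_top]
  | h₃ I P hI hP ih =>
    intro _
    obtain ⟨s, t, hs, ht, hst, A, B, k, hA, hB, hI⟩ := ih hI
    by_cases hP2 : (2 : O) ∈ P
    · have hP0 : P ≠ ⊥ := hP.ne_zero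
      obtain ⟨s', m, A', hs', hs4, ⟨j, hj⟩, hsA, hA'⟩ := dyadic h20 P (hmax P hP) hP0
        (hfin _ (pow_ne_zero 2 hP.ne_zero)) hP2
      refine ⟨s * s', 2 * t, mul_ne_zero hs hs', mul_ne_zero h20 ht, ?_, A * A',
        P ^ (j + 1) * B, (j + 1) + k, hA.mul_left hA', ?_, ?_⟩
      · have := hst.mul hs4
        rwa [show (2 * t) ^ 2 * (s * s') = t ^ 2 * s * (4 * s') by ring]
      · rw [pow_add _ (j + 1) k]
        have hd : P ∣ Ideal.span {2} := Ideal.dvd_span_singleton.2 hP2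
        exact mul_dvd_mul (pow_dvd_pow_of_dvd hd _) hB
      · rw [← Ideal.span_singleton_mul_span_singleton, hsA,
          show P * I * (Ideal.span {s} * (P ^ m * A')) = (I * Ideal.span {s}) * (A' * P ^ (m + 1))
            by ring, hI, hj]
        ring
    · refine ⟨s, t, hs, ht, hst, P * A, B, k, IsCoprime.mul_left ?_ hA, hB, ?_⟩
      · exact isCoprime_of_not_le (hmax P hP) fun h =>
          hP2 (h (Ideal.mem_span_singleton_self 2))
      · rw [mul_assoc, hI, mul_assoc]

/-- Every nonzero element is, up to sums of four squares and squares, coprime to `2`. -/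
lemma coprime_to_two (h20 : (2 : O) ≠ 0) (hfin : ∀ J : Ideal O, J ≠ ⊥ → Finite (O ⧸ J))
    (hmax : ∀ P : Ideal O, Prime P → P.IsMaximal) (al : O) (hal : al ≠ 0) :
    ∃ s t g γ : O, s ≠ 0 ∧ t ≠ 0 ∧ S4 (t ^ 2 * s) ∧ IsCoprime γ 2 ∧
      ∃ k : ℕ, al * s * g ^ 2 = (2 ^ k) ^ 2 * γ := by
  obtain ⟨s, t, hs, ht, hst, A, B, k, hA, ⟨J, hJ⟩, hI⟩ :=
    even_at_two h20 hfin hmax (Ideal.span {al}) (by simpa using hal)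
  have h2k : (Ideal.span {2} : Ideal O) ^ k ≠ 0 := pow_ne_zero _ (by simpa using h20)
  have hJ0 : J ≠ 0 := by
    rintro rfl
    exact h2k (by rw [hJ, mul_zero])
  obtain ⟨g, hg⟩ := IsDedekindDomain.exists_sup_span_eq (I := J * Ideal.span {2}) (J := J)
    Ideal.mul_le_left (mul_ne_zero hJ0 (by simpa using h20))
  obtain ⟨L, hL⟩ : J ∣ Ideal.span {g} := Ideal.dvd_iff_le.2 (by rw [← hg]; exact le_sup_right)
  have hL2 : IsCoprime L (Ideal.span {2}) := by
    rw [Ideal.isCoprime_iff_sup_eq, sup_comm]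
    rw [hL, ← Ideal.mul_sup] at hg
    refine mul_left_cancel₀ hJ0 ?_
    rw [hg, Ideal.mul_top]
  have hid : Ideal.span {al * s * g ^ 2} = Ideal.span {(2 ^ k) ^ 2} * (A * L ^ 2) := by
    rw [← Ideal.span_singleton_mul_span_singleton, ← Ideal.span_singleton_mul_span_singleton, hI,
      ← Ideal.span_singleton_pow, ← Ideal.span_singleton_pow, ← Ideal.span_singleton_pow, hL, hJ]
    ring
  obtain ⟨γ, hγ⟩ : (2 ^ k) ^ 2 ∣ al * s * g ^ 2 := by
    rw [← Ideal.mem_span_singleton, ← Ideal.dvd_span_singleton, hid]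
    exact dvd_mul_right _ _
  refine ⟨s, t, g, γ, hs, ht, hst, ?_, k, hγ⟩
  rw [hγ, ← Ideal.span_singleton_mul_span_singleton] at hid
  have hid' := mul_left_cancel₀ (by simpa using fun h => absurd h h20) hid
  rw [← Ideal.isCoprime_span_singleton_iff, hid']
  exact hA.mul_left hL2.pow_left
end

section
variable {K : Type*} [Field K] [NumberField K] [IsTotallyReal K]

lemma S4.nonneg {R : Type*} [CommRing R] (f : R →+* ℝ) {x : R} (h : S4 x) : 0 ≤ f x := by
  obtain ⟨a, b, c, d, rfl⟩ := h
  simp only [map_add, map_pow]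
  positivity

/-- Siegel's theorem for integers. By `coprime_to_two`, `al` times a nonzero sum of four squares is a square
times a totally positive integer coprime to `2`, to which `core2` applies. -/
lemma four_squares_int (al : 𝓞 K) (hal : ∀ v, 0 < σO v al) : S4 (al : K) := by
  have hal0 : al ≠ 0 := by
    rintro rfl
    obtain ⟨v⟩ := (inferInstance : Nonempty (K →+* ℝ))
    simpa using hal v
  obtain ⟨s, t, g, γ, hs, ht, hst, hγ, k, hk⟩ := coprime_to_two (O := 𝓞 K) two_ne_zero
    (fun J hJ => Ideal.finiteQuotientOfFreeOfNeBot J hJ)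
    (fun P hP => (Ideal.isPrime_of_prime hP).isMaximal hP.ne_zero) al hal0
  have hγ0 : γ ≠ 0 := by
    rintro rfl
    exact two_not_unit (K := K) (isCoprime_zero_left.1 hγ)
  have hk' : t ^ 2 * s * al * g ^ 2 = (2 ^ k * t) ^ 2 * γ := by linear_combination t ^ 2 * hk
  have hne : (2 ^ k * t) ≠ 0 := mul_ne_zero (pow_ne_zero _ two_ne_zero) ht
  have hγpos : ∀ v, 0 < σO v γ := by
    intro v
    have h1 : 0 ≤ σO v ((2 ^ k * t) ^ 2 * γ) := by
      rw [← hk', map_mul, map_mul, map_pow]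
      have := hst.nonneg (σO v)
      have := hal v
      positivity
    have h2 : 0 < σO v (2 ^ k * t) ^ 2 := by
      have : σO v (2 ^ k * t) ≠ 0 := by
        rw [Ne, map_eq_zero_iff _ (σO_injective v)]
        exact hne
      positivity
    rw [map_mul, map_pow] at h1
    refine lt_of_le_of_ne (nonneg_of_mul_nonneg_right h1 h2) fun h => hγ0 ?_
    exact σO_injective v (by rw [← h, map_zero])
  have h4 := (core2 γ hγpos hγ).mul (S4.sq ((2 ^ k * t : 𝓞 K) : K))
  have h5 := (hst.map (algebraMap (𝓞 K) K)).mul (S4.sq (g : K))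
  have hk2 := congrArg (algebraMap (𝓞 K) K) hk'
  have e1 : algebraMap (𝓞 K) K (t ^ 2 * s) * (g : K) ^ 2 * al =
      γ * ((2 ^ k * t : 𝓞 K) : K) ^ 2 := by
    simp only [map_mul, map_pow] at hk2 ⊢
    linear_combination hk2
  refine h5.of_mul ?_ (e1 ▸ h4)
  intro h0
  rw [h0, zero_mul] at e1
  refine mul_ne_zero ?_ (pow_ne_zero 2 ?_) e1.symm
  · exact RingOfIntegers.coe_ne_zero_iff.2 hγ0
  · exact RingOfIntegers.coe_ne_zero_iff.2 hne

/-- Siegel's theorem: a totally positive element of a totally real number field is a sum of four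
squares. -/
theorem four_squares (al : K) (hal : ∀ v : K →+* ℝ, 0 < v al) : S4 al := by
  obtain ⟨x, y, hy, rfl⟩ := IsFractionRing.div_surjective (A := 𝓞 K) al
  have hy0 : (y : K) ≠ 0 := RingOfIntegers.coe_ne_zero_iff.2 (nonZeroDivisors.ne_zero hy)
  have h := four_squares_int (x * y) fun v => by
    have h1 := hal v
    have h2 : σO v y ≠ 0 := by
      have := (map_ne_zero v).2 hy0
      exact this
    have h3 : σO v (x * y) = v (algebraMap (𝓞 K) K x / algebraMap (𝓞 K) K y) * σO v y ^ 2 := by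
      rw [map_div₀, map_mul]
      change σO v x * σO v y = σO v x / σO v y * σO v y ^ 2
      field_simp
    rw [h3]
    positivity
  refine (S4.sq (y : K)).of_mul (pow_ne_zero 2 hy0) ?_
  have : (y : K) ^ 2 * (algebraMap (𝓞 K) K x / algebraMap (𝓞 K) K y) = ((x * y : 𝓞 K) : K) := by
    change _ = algebraMap (𝓞 K) K (x * y)
    rw [map_mul]
    field_simp
  rwa [this]
end
end Siegel

/-! ### From fields to the algebra generated by one element -/

namespace Siegel

open Polynomial in
/-- A field generated by an element all of whose conjugates are positive reals is totally real, and
the generator is a sum of four squares. -/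
lemma four_squares_adjoinRoot (p : ℚ[X]) (hp : Irreducible p)
    (hr : ∀ z : ℂ, aeval z p = 0 → ∃ x : ℝ, 0 < x ∧ z = x) :
    S4 (AdjoinRoot.root p) := by
  have : Fact (Irreducible p) := ⟨hp⟩
  have : CharZero (AdjoinRoot p) := charZero_of_injective_algebraMap (algebraMap ℚ _).injective
  have : FiniteDimensional ℚ (AdjoinRoot p) := (AdjoinRoot.powerBasis hp.ne_zero).finite
  have : NumberField (AdjoinRoot p) := {}
  have hroot : ∀ φ : AdjoinRoot p →+* ℂ, ∃ x : ℝ, 0 < x ∧ φ (AdjoinRoot.root p) = x := by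
    intro φ
    apply hr
    have h := AdjoinRoot.eval₂_root p
    have h2 := congrArg φ h
    rw [hom_eval₂, map_zero] at h2
    rw [aeval_def, Subsingleton.elim (algebraMap ℚ ℂ) (φ.comp (AdjoinRoot.of p))]
    exact h2
  have : IsTotallyReal (AdjoinRoot p) := by
    refine ⟨fun v => ?_⟩
    rw [InfinitePlace.isReal_iff]
    rw [ComplexEmbedding.isReal_iff]
    set φ := v.embedding
    obtain ⟨x, -, hx⟩ := hroot φ
    refine AdjoinRoot.ringHom_ext (Subsingleton.elim _ _) ?_
    rw [ComplexEmbedding.conjugate_coe_eq, hx, Complex.conj_ofReal]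
  refine four_squares _ fun v => ?_
  obtain ⟨x, hx, h⟩ := hroot (Complex.ofRealHom.comp v)
  have : v (AdjoinRoot.root p) = x := Complex.ofReal_injective h
  rwa [this]

open Polynomial in
/-- Induction on the irreducible factors, glueing by the Chinese remainder theorem. -/
lemma four_squares_mod (f : ℚ[X]) : Squarefree f →
    (∀ z : ℂ, aeval z f = 0 → ∃ x : ℝ, 0 < x ∧ z = x) →
    ∃ Y : Fin 4 → ℚ[X], f ∣ ∑ i, Y i ^ 2 - X := by
  induction f using UniqueFactorizationMonoid.induction_on_prime with
  | h₁ => exact fun h => absurd h not_squarefree_zero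
  | h₂ x hx => exact fun _ _ => ⟨0, hx.dvd⟩
  | h₃ a p ha hp ih =>
    intro hsq hr
    obtain ⟨hrel, -, hsa⟩ := squarefree_mul_iff.1 hsq
    obtain ⟨Y, hY⟩ := ih hsa fun z hz => hr z (by rw [map_mul, hz, mul_zero])
    obtain ⟨x, y, z, w, h⟩ := four_squares_adjoinRoot p hp.irreducible
      fun z hz => hr z (by rw [map_mul, hz, zero_mul])
    obtain ⟨x, rfl⟩ := AdjoinRoot.mk_surjective x
    obtain ⟨y, rfl⟩ := AdjoinRoot.mk_surjective y
    obtain ⟨z, rfl⟩ := AdjoinRoot.mk_surjective z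
    obtain ⟨w, rfl⟩ := AdjoinRoot.mk_surjective w
    rw [← AdjoinRoot.mk_X, ← map_pow, ← map_pow, ← map_pow, ← map_pow, ← map_add, ← map_add,
      ← map_add, eq_comm, AdjoinRoot.mk_eq_mk] at h
    exact crt4 hrel.isCoprime (X := ![x, y, z, w]) (by simpa [Fin.sum_univ_four] using h) hY

/-- Left multiplication by the quaternion `Y`, scaled by `r`: its columns are orthogonal of length
`r² ∑ (Y i)²`. -/
lemma quaternion_matrix {R : Type*} [CommRing R] (Y : Fin 4 → R) (x r : R) :
    ∃ U : Matrix (Fin 4) (Fin 4) R, U.transpose * Matrix.diagonal (fun _ => x) * U =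
      Matrix.diagonal (fun _ => (∑ i, Y i ^ 2) * r * (r * x)) := by
  refine ⟨r • !![Y 0, -Y 1, -Y 2, -Y 3; Y 1, Y 0, -Y 3, Y 2; Y 2, Y 3, Y 0, -Y 1;
    Y 3, -Y 2, Y 1, Y 0], ?_⟩
  ext i j
  rw [Matrix.mul_apply]
  simp only [Matrix.mul_diagonal, Fin.sum_univ_four]
  fin_cases i <;> fin_cases j <;> simp <;> ring
end Siegel

/-! ### Positive involutions -/

namespace Siegel

open scoped ComplexOrder in
/-- A rational positive definite form stays positive definite over `ℂ`. -/
lemma posDef_map {n : Type*} [Fintype n] [DecidableEq n] (G : Matrix n n ℚ)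
    (hs : ∀ i j, G i j = G j i) (hpos : ∀ x : n → ℚ, x ≠ 0 → 0 < ∑ i, ∑ j, x i * G i j * x j) :
    (G.map (algebraMap ℚ ℂ)).PosDef := by
  have hreal : ∀ x : n → ℝ, 0 ≤ ∑ i, ∑ j, x i * (G i j : ℝ) * x j := by
    refine isClosed_property (DenseRange.piMap (fun _ : n => Rat.denseRange_cast (𝕜 := ℝ)))
      (isClosed_le continuous_const (by fun_prop)) fun x => ?_
    have h : 0 ≤ ∑ i, ∑ j, x i * G i j * x j := by
      by_cases hx : x = 0
      · simp [hx]
      · exact (hpos x hx).le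
    have : ∑ i, ∑ j, (Pi.map (fun _ : n => (Rat.cast : ℚ → ℝ)) x) i * (G i j : ℝ) *
        (Pi.map (fun _ : n => (Rat.cast : ℚ → ℝ)) x) j =
        ((∑ i, ∑ j, x i * G i j * x j : ℚ) : ℝ) := by
      push_cast
      rfl
    rw [this]
    exact_mod_cast h
  have hherm : (G.map (algebraMap ℚ ℂ)).IsHermitian := by
    ext i j
    simp [Matrix.conjTranspose_apply, hs i j]
  have hpsd : (G.map (algebraMap ℚ ℂ)).PosSemidef := by
    refine Matrix.PosSemidef.of_dotProduct_mulVec_nonneg hherm fun w => ?_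
    rw [Complex.le_def]
    refine ⟨?_, ?_⟩
    · have h1 := add_nonneg (hreal fun i => (w i).re) (hreal fun i => (w i).im)
      refine h1.trans_eq ?_
      simp only [dotProduct, Matrix.mulVec, Matrix.map_apply, Finset.mul_sum,
        Complex.re_sum, ← Finset.sum_add_distrib]
      refine Finset.sum_congr rfl fun i _ => Finset.sum_congr rfl fun j _ => ?_
      simp
      ring
    · exact (hherm.im_star_dotProduct_mulVec_self w).symm
  rw [hpsd.posDef_iff_isUnit]
  have hG : IsUnit G := by
    rw [Matrix.isUnit_iff_isUnit_det, isUnit_iff_ne_zero]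
    intro h0
    obtain ⟨v, hv, hv0⟩ := Matrix.exists_mulVec_eq_zero_iff.2 h0
    have := hpos v hv
    refine this.ne' ?_
    have h1 : ∀ i, ∑ j, v i * G i j * v j = 0 := fun i => by
      have := congrFun hv0 i
      simp only [Matrix.mulVec, dotProduct, Pi.zero_apply] at this
      simp only [mul_assoc, ← Finset.mul_sum, this, mul_zero]
    simp [h1]
  exact hG.map ((algebraMap ℚ ℂ).mapMatrix)

open scoped ComplexOrder in
open Polynomial in
/-- A complex eigenvalue of `M`, where `G` and `G * M` are rational positive definite matrices, is
real and positive. -/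
lemma eigenvalue_pos {n : Type*} [Fintype n] [DecidableEq n] (G M : Matrix n n ℚ)
    (hG : (G.map (algebraMap ℚ ℂ)).PosDef) (hGM : ((G * M).map (algebraMap ℚ ℂ)).PosDef)
    (z : ℂ) (hz : aeval z M.charpoly = 0) : ∃ x : ℝ, 0 < x ∧ z = x := by
  have h1 : ((Matrix.scalar n) z - M.map (algebraMap ℚ ℂ)).det = 0 := by
    rw [← Matrix.eval_charpoly, Matrix.charpoly_map, eval_map, ← aeval_def, hz]
  obtain ⟨w, hw, hw0⟩ := Matrix.exists_mulVec_eq_zero_iff.2 h1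
  have h2 : (M.map (algebraMap ℚ ℂ)).mulVec w = z • w := by
    rw [Matrix.sub_mulVec, sub_eq_zero] at hw0
    rw [← hw0]
    ext i
    simp [Matrix.mulVec_diagonal]
  have h3 := hG.dotProduct_mulVec_pos hw
  have h4 := hGM.dotProduct_mulVec_pos hw
  rw [Matrix.map_mul, ← Matrix.mulVec_mulVec, h2, Matrix.mulVec_smul, dotProduct_smul,
    smul_eq_mul] at h4
  have h5 : 0 < z := (pos_iff_pos_of_mul_pos h4).2 h3
  rw [Complex.pos_iff] at h5
  exact ⟨z.re, h5.1, Complex.ext rfl (by simp [← h5.2])⟩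

open Polynomial

section
variable {E : Type*} [Ring E] [Algebra ℚ E] [FiniteDimensional ℚ E] {dag : E → E}
  {q : E}

/-- The involution fixes the algebra `ℚ[q]` pointwise. -/
lemma dag_aeval (hdag : IsInvolutionQ E dag) (hq : dag q = q) (f : ℚ[X]) : dag (aeval q f) = aeval q f := by
  obtain ⟨h1, h2, -, h4⟩ := hdag
  have hpow : ∀ n : ℕ, dag (q ^ n) = q ^ n := by
    intro n
    induction n with
    | zero => simpa using h4 1
    | succ n ih => rw [pow_succ, h2, ih, hq, ← pow_succ', pow_succ]
  induction f using Polynomial.induction_on' with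
  | add f g hf hg => rw [map_add, h1, hf, hg]
  | monomial n a => rw [aeval_monomial, h2, h4, hpow, Algebra.commutes]

/-- If `g² k` is the minimal polynomial, then `x = (g k)(q)` is fixed by the involution and satisfies
`x² = 0`, so it vanishes by positivity. -/
lemma minpoly_squarefree (hdag : IsInvolutionQ E dag) (hpos : ∀ x : E, x ≠ 0 → 0 < algTraceQ E (dag x * x))
    (hq : dag q = q) : Squarefree (minpoly ℚ q) := by
  rintro g ⟨k, hk⟩
  have hμ0 : minpoly ℚ q ≠ 0 := minpoly.ne_zero (Algebra.IsIntegral.isIntegral q)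
  have h0 : aeval q (g * k) = 0 := by
    by_contra hne
    have := hpos _ hne
    rw [dag_aeval hdag hq, ← map_mul, show g * k * (g * k) = g * g * k * k by ring, ← hk, map_mul,
      minpoly.aeval, zero_mul] at this
    simp [algTraceQ] at this
  obtain ⟨l, hl⟩ := minpoly.dvd ℚ q h0
  have hgk : g * k ≠ 0 := fun h => hμ0 (by rw [hk, mul_assoc, h, mul_zero])
  refine IsUnit.of_mul_eq_one l ?_
  refine mul_left_cancel₀ hgk ?_
  calc g * k * (g * l) = (g * g * k) * l := by ring
    _ = g * k * 1 := by rw [← hk, ← hl, mul_one]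

open scoped ComplexOrder in
/-- The complex conjugates of `q` are positive reals: left multiplication by `q` is a quotient of two
positive definite forms, the symmetrised forms of `tr (x† y)` and of `tr (x† q y)`. -/
lemma roots_pos (hdag : IsInvolutionQ E dag) (hdagpos : ∀ x : E, x ≠ 0 → 0 < algTraceQ E (dag x * x))
    (hq : dag q = q) (hqpos : ∀ a : E, a ≠ 0 → 0 < algTraceQ E (dag a * q * a))
    (z : ℂ) (hz : aeval z (minpoly ℚ q) = 0) : ∃ x : ℝ, 0 < x ∧ z = x := by
  obtain ⟨h1, h2, h3, h4⟩ := hdag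
  let D : E →ₗ[ℚ] E :=
    { toFun := dag
      map_add' := h1
      map_smul' := fun r x => by
        rw [Algebra.smul_def, h2, h4, ← Algebra.commutes, RingHom.id_apply, Algebra.smul_def] }
  have hD : ∀ x, D x = dag x := fun _ => rfl
  let tr : E →ₗ[ℚ] ℚ := (LinearMap.trace ℚ E) ∘ₗ (LinearMap.mul ℚ E)
  have htr : ∀ x, tr x = algTraceQ E x := fun _ => rfl
  let b := Module.finBasis ℚ E
  -- the trace form is symmetrised, so that no symmetry of the trace itself is needed
  let G : Matrix (Fin (Module.finrank ℚ E)) (Fin (Module.finrank ℚ E)) ℚ :=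
    Matrix.of fun i j => tr (D (b i) * b j) + tr (D (b j) * b i)
  let H : Matrix (Fin (Module.finrank ℚ E)) (Fin (Module.finrank ℚ E)) ℚ :=
    Matrix.of fun i j => tr (D (b i) * (q * b j)) + tr (D (b j) * (q * b i))
  let M := Algebra.leftMulMatrix b q
  have hGM : G * M = H := by
    ext i j
    have hqb : q * b j = ∑ k, M k j • b k := by
      exact (b.sum_repr (q * b j)).symm.trans (Finset.sum_congr rfl fun k _ =>
        congrArg (· • b k) (Algebra.leftMulMatrix_eq_repr_mul b q k j).symm)
    have hDq : D (b j) * (q * b i) = D (q * b j) * b i := by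
      rw [hD, hD, h2, hq, mul_assoc]
    simp only [H, Matrix.of_apply]
    rw [hDq, hqb, Matrix.mul_apply]
    simp only [G, Matrix.of_apply, map_sum, map_smul, Finset.mul_sum, Finset.sum_mul,
      mul_smul_comm, smul_mul_assoc, ← Finset.sum_add_distrib, smul_eq_mul]
    exact Finset.sum_congr rfl fun k _ => by ring
  have hexp : ∀ (c : E) (x : Fin (Module.finrank ℚ E) → ℚ),
      ∑ i, ∑ j, x i * (tr (D (b i) * (c * b j)) + tr (D (b j) * (c * b i))) * x j =
      2 * tr (D (∑ i, x i • b i) * (c * ∑ i, x i • b i)) := by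
    intro c x
    have e1 : tr (D (∑ i, x i • b i) * (c * ∑ i, x i • b i)) =
        ∑ i, ∑ j, x i * tr (D (b i) * (c * b j)) * x j := by
      simp only [map_sum, map_smul, Finset.mul_sum, Finset.sum_mul,
        mul_smul_comm, smul_mul_assoc, smul_eq_mul]
      rw [Finset.sum_comm]
      exact Finset.sum_congr rfl fun i _ => Finset.sum_congr rfl fun j _ => by ring
    have e2 : ∑ i, ∑ j, x i * tr (D (b j) * (c * b i)) * x j =
        ∑ i, ∑ j, x i * tr (D (b i) * (c * b j)) * x j := by
      rw [Finset.sum_comm]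
      exact Finset.sum_congr rfl fun i _ => Finset.sum_congr rfl fun j _ => by ring
    simp only [mul_add, add_mul, Finset.sum_add_distrib]
    rw [e2, e1, two_mul]
  have hne : ∀ x : Fin (Module.finrank ℚ E) → ℚ, x ≠ 0 → ∑ i, x i • b i ≠ 0 := by
    intro x hx h0
    exact hx (funext (Fintype.linearIndependent_iff.1 b.linearIndependent x h0))
  have hGpos : (G.map (algebraMap ℚ ℂ)).PosDef := by
    refine posDef_map G (fun i j => add_comm _ _) fun x hx => ?_
    have := hexp 1 x
    simp only [one_mul] at this
    simp only [G, Matrix.of_apply]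
    rw [this, hD, htr]
    have := hdagpos _ (hne x hx)
    positivity
  have hHpos : (H.map (algebraMap ℚ ℂ)).PosDef := by
    refine posDef_map H (fun i j => add_comm _ _) fun x hx => ?_
    simp only [H, Matrix.of_apply]
    rw [hexp q x, ← mul_assoc, hD, htr]
    have := hqpos _ (hne x hx)
    positivity
  refine eigenvalue_pos G M hGpos (hGM ▸ hHpos) z ?_
  have hcp : aeval q M.charpoly = 0 := by
    apply Algebra.leftMulMatrix_injective b
    rw [map_zero, ← aeval_algHom_apply]
    exact Matrix.aeval_self_charpoly M
  obtain ⟨k, hk⟩ := minpoly.dvd ℚ q hcp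
  rw [hk, map_mul, hz, zero_mul]
end
end Siegel

open Polynomial in
/-- **A symmetric positive element `q` of a semisimple `ℚ`-algebra with positive
involution satisfies `u† · diag(q,q,q,q) · u = 1` for some `4 × 4` matrix `u`**, where
`†` acts on matrices as the conjugate transpose. -/
theorem fourth_power_of_positive_element_is_identity
    (E : Type*) [Ring E] [Algebra ℚ E] [FiniteDimensional ℚ E] [IsSemisimpleRing E]
    (dag : E → E) (hdag : IsInvolutionQ E dag)
    (hdagpos : ∀ x : E, x ≠ 0 → 0 < algTraceQ E (dag x * x))
    (q : E) (hqsymm : dag q = q)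
    (hqpos : ∀ a : E, a ≠ 0 → 0 < algTraceQ E (dag a * q * a)) :
    ∃ u : Matrix (Fin 4) (Fin 4) E,
      (Matrix.of fun i j => dag (u j i)) * Matrix.diagonal (fun _ => q) * u = 1 := by
  have hroots := Siegel.roots_pos hdag hdagpos hqsymm hqpos
  obtain ⟨Y, k, hY⟩ := Siegel.four_squares_mod (minpoly ℚ q)
    (Siegel.minpoly_squarefree hdag hdagpos hqsymm) hroots
  have hS : aeval q (∑ i, Y i ^ 2) = q := by
    have := congrArg (aeval q) hY
    rw [map_sub, map_mul, minpoly.aeval, zero_mul, aeval_X, sub_eq_zero] at this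
    exact this
  have hcop : IsCoprime X (minpoly ℚ q) := by
    rw [irreducible_X.coprime_iff_not_dvd, X_dvd_iff]
    intro h0
    obtain ⟨x, hx, hx0⟩ := hroots 0 (by rw [← coeff_zero_eq_aeval_zero', h0, map_zero])
    exact hx.ne (by exact_mod_cast hx0)
  obtain ⟨r, s, hrs⟩ := hcop
  have hr : aeval q r * q = 1 := by
    have := congrArg (aeval q) hrs
    simpa using this
  obtain ⟨U, hU⟩ := Siegel.quaternion_matrix Y X r
  refine ⟨U.map (aeval q), ?_⟩
  have h1 : (Matrix.of fun i j => dag ((U.map (aeval q)) j i)) = U.transpose.map (aeval q) := by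
    ext i j
    exact Siegel.dag_aeval hdag hqsymm _
  have h2 : Matrix.diagonal (fun _ : Fin 4 => q) =
      (Matrix.diagonal (fun _ : Fin 4 => (X : ℚ[X]))).map (aeval q) := by
    rw [Matrix.diagonal_map (map_zero _)]
    simp
  rw [h1, h2, ← Matrix.map_mul, ← Matrix.map_mul, hU, Matrix.diagonal_map (map_zero _)]
  have h3 : aeval q ((∑ i, Y i ^ 2) * r * (r * X)) = 1 := by
    rw [mul_comm _ r, map_mul, map_mul, map_mul, hS, aeval_X, hr, mul_one]
  rw [← Matrix.diagonal_one]
  congr 1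
  funext _
  exact h3
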